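/- arXiv:0804.0590 — 3 statements merged into one kernel-verified Lean document; each statement's English description precedes it below -/
import Mathlib

section
/- (Watanabe's Lemma, first part.) Let I be an arithmetically Gorenstein homogeneous ideal of height three in R that is not a complete intersection, and let f, g, h ∈ I be a regular sequence of homogeneous elements that can be extended to a minimal generating set of I (i.e., there is a subset S of R with f, g, h ∈ S, I = (S), and |S| = μ(I)). Then the residual ideal J = (f,g,h) : I is an almost complete intersection: there exists a homogeneous element u ∈ R such that J = (f, g, h, u). -/
/-
Common setup: `R = k[x₀,…,xₙ]` is the standard graded polynomial ring
`MvPolynomial (Fin (n+1)) k` over a field `k`.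
-/

open CategoryTheory MvPolynomial RingTheory

noncomputable section

variable {k : Type} [Field k] {n : ℕ}

/-- A homogeneous ideal: one generated by homogeneous elements. -/
def IsHomogeneousIdeal (I : Ideal (MvPolynomial (Fin (n+1)) k)) : Prop :=
  ∃ S : Set (MvPolynomial (Fin (n+1)) k),
    (∀ f ∈ S, ∃ d, MvPolynomial.IsHomogeneous f d) ∧ I = Ideal.span S

/-- The height of an ideal: the infimum of the heights of the primes containing it. -/
def idealHeight (I : Ideal (MvPolynomial (Fin (n+1)) k)) : ℕ∞ :=
  ⨅ (p : PrimeSpectrum (MvPolynomial (Fin (n+1)) k)) (_ : I ≤ p.asIdeal), Order.height p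

/-- A complete intersection ideal: one generated by a regular sequence of homogeneous
elements of positive degree. -/
def IsCI (I : Ideal (MvPolynomial (Fin (n+1)) k)) : Prop :=
  ∃ l : List (MvPolynomial (Fin (n+1)) k),
    (∀ f ∈ l, ∃ d, 0 < d ∧ MvPolynomial.IsHomogeneous f d) ∧
    RingTheory.Sequence.IsRegular (MvPolynomial (Fin (n+1)) k) l ∧
    I = Ideal.span {x | x ∈ l}

/-- Vanishing of `Ext^i_R(R/I, R)`. -/
def extVanishes (I : Ideal (MvPolynomial (Fin (n+1)) k)) (i : ℕ) : Prop :=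
  Subsingleton (((Ext (MvPolynomial (Fin (n+1)) k) (ModuleCat (MvPolynomial (Fin (n+1)) k)) i).obj
    (Opposite.op (ModuleCat.of _ (MvPolynomial (Fin (n+1)) k ⧸ I)))).obj
    (ModuleCat.of _ (MvPolynomial (Fin (n+1)) k)))

/-- `Ext^i_R(R/I, R)` is a cyclic `R`-module. -/
def extCyclic (I : Ideal (MvPolynomial (Fin (n+1)) k)) (i : ℕ) : Prop :=
  ∃ m : (((Ext (MvPolynomial (Fin (n+1)) k) (ModuleCat (MvPolynomial (Fin (n+1)) k)) i).obj
      (Opposite.op (ModuleCat.of _ (MvPolynomial (Fin (n+1)) k ⧸ I)))).obj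
      (ModuleCat.of _ (MvPolynomial (Fin (n+1)) k))),
    Submodule.span (MvPolynomial (Fin (n+1)) k) {m} = ⊤

/-- An arithmetically Gorenstein homogeneous ideal of height three: a proper homogeneous
ideal of height 3 with `Ext^i_R(R/I, R) = 0` for `i ≠ 3` and `Ext^3_R(R/I, R)` cyclic. -/
def IsArithGorHt3 (I : Ideal (MvPolynomial (Fin (n+1)) k)) : Prop :=
  I ≠ ⊤ ∧ IsHomogeneousIdeal I ∧ idealHeight I = 3 ∧
    (∀ i : ℕ, i ≠ 3 → extVanishes I i) ∧ extCyclic I 3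

/-- `μ(I)`: the least cardinality of a subset of `R` generating `I`. -/
def mu (I : Ideal (MvPolynomial (Fin (n+1)) k)) : ℕ :=
  sInf {m : ℕ | ∃ S : Finset (MvPolynomial (Fin (n+1)) k),
    S.card = m ∧ Ideal.span (S : Set (MvPolynomial (Fin (n+1)) k)) = I}

/-- `a_i(I)`: the least integer `d` such that `I` contains a regular sequence of `i`
homogeneous elements each of degree at most `d`. -/
def aDeg (i : ℕ) (I : Ideal (MvPolynomial (Fin (n+1)) k)) : ℕ :=
  sInf {d : ℕ | ∃ l : List (MvPolynomial (Fin (n+1)) k), l.length = i ∧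
    (∀ f ∈ l, f ∈ I) ∧ (∀ f ∈ l, ∃ e ≤ d, MvPolynomial.IsHomogeneous f e) ∧
    RingTheory.Sequence.IsRegular (MvPolynomial (Fin (n+1)) k) l}

/-- A minimal complete intersection inside a height-three homogeneous ideal `I`:
a regular sequence `f₁, f₂, f₃` of homogeneous elements of `I` with `deg fⱼ = a_j(I)`. -/
def IsMinCI (I : Ideal (MvPolynomial (Fin (n+1)) k)) (f₁ f₂ f₃ : MvPolynomial (Fin (n+1)) k) :
    Prop :=
  f₁ ∈ I ∧ f₂ ∈ I ∧ f₃ ∈ I ∧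
  MvPolynomial.IsHomogeneous f₁ (aDeg 1 I) ∧ MvPolynomial.IsHomogeneous f₂ (aDeg 2 I) ∧
  MvPolynomial.IsHomogeneous f₃ (aDeg 3 I) ∧
  RingTheory.Sequence.IsRegular (MvPolynomial (Fin (n+1)) k) [f₁, f₂, f₃]

section helpers

open CategoryTheory.Limits

section hom
variable {A : Type} [CommRing A]

lemma homology_gen (S : ShortComplex (ModuleCat.{0} A)) (m : S.homology)
    (hm : Submodule.span A {m} = ⊤) :
    ∃ z : S.X₂, S.g z = 0 ∧ (m = 0 → z = 0) ∧
      ∀ w : S.X₂, S.g w = 0 → ∃ (r : A) (x : S.X₁), w = r • z + S.f x := by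
  let e : S.homology ≃ₗ[A] (LinearMap.ker S.g.hom ⧸ LinearMap.range S.moduleCatToCycles) :=
    S.moduleCatHomologyIso.toLinearEquiv
  obtain ⟨z, hz0, hze⟩ : ∃ z : LinearMap.ker S.g.hom, (m = 0 → z = 0) ∧
      (LinearMap.range S.moduleCatToCycles).mkQ z = e m := by
    by_cases h : m = 0
    · exact ⟨0, fun _ => rfl, by rw [h, map_zero, map_zero]⟩
    · obtain ⟨z, hz⟩ := Submodule.mkQ_surjective (LinearMap.range S.moduleCatToCycles) (e m)
      exact ⟨z, fun h' => absurd h' h, hz⟩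
  refine ⟨z.1, z.2, fun h => by rw [hz0 h]; rfl, fun w hw => ?_⟩
  let w' : LinearMap.ker S.g.hom := ⟨w, hw⟩
  have h1 : e.symm ((LinearMap.range S.moduleCatToCycles).mkQ w') ∈ Submodule.span A {m} := by
    rw [hm]; trivial
  obtain ⟨r, hr⟩ := Submodule.mem_span_singleton.1 h1
  have h2 : (LinearMap.range S.moduleCatToCycles).mkQ w'
      = (LinearMap.range S.moduleCatToCycles).mkQ (r • z) := by
    rw [map_smul, hze]
    have := congrArg e hr
    rw [map_smul, LinearEquiv.apply_symm_apply] at this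
    exact this.symm
  have h3 := (Submodule.Quotient.eq _).1 h2
  obtain ⟨x, hx⟩ := h3
  refine ⟨r, x, ?_⟩
  have := congrArg Subtype.val hx
  change S.f x = w - r • z.1 at this
  rw [this]; abel

variable {M : ModuleCat.{0} A} (P : ProjectiveResolution M)

/-- `θ` is a cocycle generating `Ext^n(M, Y)`. -/
def GenAt (Y : ModuleCat.{0} A) (n : ℕ) (θ : P.complex.X n ⟶ Y) : Prop :=
  P.complex.d (n+1) n ≫ θ = 0 ∧
  ∀ φ : P.complex.X n ⟶ Y, P.complex.d (n+1) n ≫ φ = 0 →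
    ∃ (r : A) (ψ : P.complex.X (n-1) ⟶ Y), φ = r • θ + P.complex.d n (n-1) ≫ ψ

lemma gen_of_cyclic (Y : ModuleCat.{0} A) (n : ℕ)
    (m : (((Ext A (ModuleCat.{0} A) n).obj (Opposite.op M)).obj Y))
    (hm : Submodule.span A {m} = ⊤) : ∃ θ, GenAt P Y n θ ∧ (m = 0 → θ = 0) := by
  let e := (P.isoExt (R := A) n Y).toLinearEquiv
  have hm' : Submodule.span A {e m} = ⊤ := by
    have := congrArg (Submodule.map e.toLinearMap) hm
    rw [Submodule.map_span] at this
    simpa using this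
  obtain ⟨z, hz, hz0, hgen⟩ := homology_gen _ (e m) hm'
  have hnext : (ComplexShape.down ℕ).symm.next n = n + 1 :=
    ComplexShape.next_eq' _ (by simp [ComplexShape.symm])
  let z' : P.complex.X n ⟶ Y := z
  refine ⟨z', ⟨?_, fun φ hφ => ?_⟩, fun h => hz0 (by rw [h, map_zero]; rfl)⟩
  · rw [← hnext]; exact hz
  · obtain ⟨r, x, hx⟩ := hgen φ (by rw [← hnext] at hφ; exact hφ)
    let x' : P.complex.X ((ComplexShape.down ℕ).symm.prev n) ⟶ Y := x
    have h1 : φ = r • z' + P.complex.d n ((ComplexShape.down ℕ).symm.prev n) ≫ x' := hx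
    clear_value x'
    cases n with
    | zero =>
      refine ⟨r, 0, ?_⟩
      have h0 : P.complex.d 0 ((ComplexShape.down ℕ).symm.prev 0) = 0 := by
        apply P.complex.shape; simp
      rw [h1, h0]; simp
    | succ n =>
      have hprev : (ComplexShape.down ℕ).symm.prev (n+1) = n :=
        ComplexShape.prev_eq' _ (by simp [ComplexShape.symm])
      clear hx
      revert x' h1
      rw [hprev]
      intro x' h1
      exact ⟨r, x', h1⟩

lemma gen_of_subsingleton (Y : ModuleCat.{0} A) (n : ℕ)
    (hs : Subsingleton (((Ext A (ModuleCat.{0} A) n).obj (Opposite.op M)).obj Y)) :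
    GenAt P Y n 0 := by
  obtain ⟨θ, hθ, h0⟩ := gen_of_cyclic P Y n 0 (Subsingleton.elim _ _)
  rw [h0 rfl] at hθ
  exact hθ

lemma smul_null (x : A) (hx : ∀ m : M, x • m = 0) (n : ℕ) (Y : ModuleCat.{0} A)
    (θ : P.complex.X (n+1) ⟶ Y) (hθ : P.complex.d (n+2) (n+1) ≫ θ = 0) :
    ∃ φ : P.complex.X n ⟶ Y, x • θ = P.complex.d (n+1) n ≫ φ := by
  have hM : x • 𝟙 M = 0 := by ext m; exact hx m
  have hc : (x • 𝟙 P.complex) ≫ P.π = 0 := by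
    ext : 1
    simp only [HomologicalComplex.comp_f, HomologicalComplex.smul_f_apply,
      HomologicalComplex.id_f, Linear.smul_comp, Category.id_comp, HomologicalComplex.zero_f]
    have : x • 𝟙 (((ChainComplex.single₀ (ModuleCat.{0} A)).obj M).X 0) = 0 := hM
    rw [← Category.comp_id (P.π.f 0), ← Linear.comp_smul, this, comp_zero]
  have H := ProjectiveResolution.liftHomotopyZero (P := P) (Q := P) (x • 𝟙 P.complex) hc
  have := H.comm (n+1)
  rw [dNext_eq _ (show (ComplexShape.down ℕ).Rel (n+1) n by simp),
    prevD_eq _ (show (ComplexShape.down ℕ).Rel (n+2) (n+1) by simp)] at this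
  refine ⟨H.hom n (n+1) ≫ θ, ?_⟩
  have h2 := congrArg (· ≫ θ) this
  simpa [hθ] using h2

lemma gen_step (Y Y' : ModuleCat.{0} A) (x : A) (π : Y ⟶ Y') (w : (x • 𝟙 Y) ≫ π = 0)
    (hS : (ShortComplex.mk _ _ w).ShortExact) (n : ℕ)
    (h0 : GenAt P Y n 0) (θ : P.complex.X (n+1) ⟶ Y) (hθ : GenAt P Y (n+1) θ)
    (φ₀ : P.complex.X n ⟶ Y) (hφ₀ : x • θ = P.complex.d (n+1) n ≫ φ₀) :
    GenAt P Y' n (φ₀ ≫ π) := by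
  have h_mono : Mono (x • 𝟙 Y) := hS.mono_f
  have h_epi : Epi π := hS.epi_g
  have hmono : ∀ {Z : ModuleCat.{0} A} (a : Z ⟶ Y), x • a = 0 → a = 0 := by
    intro Z a ha
    rw [← cancel_mono (x • 𝟙 Y), zero_comp]
    simpa using ha
  have hxg : ∀ {Z : ModuleCat.{0} A} (a : Z ⟶ Y), (x • a) ≫ π = 0 := by
    intro Z a
    have h1 : x • a = a ≫ (x • 𝟙 Y) := by simp
    rw [h1, Category.assoc, w, comp_zero]
  constructor
  · rw [← Category.assoc, ← hφ₀, hxg]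
  · intro φ' hφ'
    let φ : P.complex.X n ⟶ Y := Projective.factorThru φ' π
    have hφ : φ ≫ π = φ' := Projective.factorThru_comp _ _
    let t : P.complex.X (n+1) ⟶ Y := hS.exact.lift (P.complex.d (n+1) n ≫ φ)
      (by change _ ≫ π = 0; rw [Category.assoc, hφ, hφ'])
    have ht : x • t = P.complex.d (n+1) n ≫ φ := by
      have h5 : t ≫ (x • 𝟙 Y) = _ := hS.exact.lift_f (P.complex.d (n+1) n ≫ φ)
        (by change _ ≫ π = 0; rw [Category.assoc, hφ, hφ'])
      rw [← h5]; simp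
    obtain ⟨r, ψ, hψ⟩ := hθ.2 t (by
      apply hmono
      rw [← Linear.comp_smul, ht, ← Category.assoc, P.complex.d_comp_d, zero_comp])
    change P.complex.X n ⟶ Y at ψ
    change t = r • θ + P.complex.d (n+1) n ≫ ψ at hψ
    obtain ⟨_, χ, hχ⟩ := h0.2 (φ - r • φ₀ - x • ψ) (by
      rw [Preadditive.comp_sub, Preadditive.comp_sub, ← ht, Linear.comp_smul, Linear.comp_smul,
        ← hφ₀, hψ]
      simp only [smul_add, smul_comm r x]
      abel)
    refine ⟨r, χ ≫ π, ?_⟩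
    have := congrArg (· ≫ π) hχ
    simp only [Preadditive.sub_comp, hφ, hxg, sub_zero, smul_zero,
      zero_add, Category.assoc, Linear.smul_comp] at this
    rw [← this]; abel

/-- The quotient of `Y` by `x Y`. -/
abbrev QQ (x : A) (Y : ModuleCat.{0} A) : ModuleCat.{0} A := ModuleCat.of A (QuotSMulTop x Y)

open Pointwise in
lemma QQ_exact (x : A) (Y : ModuleCat.{0} A) (hreg : IsSMulRegular Y x) :
    ∃ w, (ShortComplex.mk (x • 𝟙 Y)
      (ModuleCat.ofHom (x • (⊤ : Submodule A Y)).mkQ : Y ⟶ QQ x Y) w).ShortExact :=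
  ⟨(Y.smulShortComplex x).zero, hreg.smulShortComplex_shortExact⟩

lemma gen_step_zero (Y : ModuleCat.{0} A) (x : A) (hreg : IsSMulRegular Y x) (n : ℕ)
    (h0 : GenAt P Y n 0) (h1 : GenAt P Y (n+1) 0) :
    GenAt P (QQ x Y) n 0 := by
  obtain ⟨w, hS⟩ := QQ_exact x Y hreg
  have := gen_step P Y _ x _ w hS n h0 0 h1 0 (by simp)
  simpa using this

lemma gen_step_ex (Y : ModuleCat.{0} A) (x : A) (hx : ∀ m : M, x • m = 0)
    (hreg : IsSMulRegular Y x) (n : ℕ)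
    (h0 : GenAt P Y n 0) (h1 : ∃ θ, GenAt P Y (n+1) θ) :
    ∃ θ, GenAt P (QQ x Y) n θ := by
  obtain ⟨θ, hθ⟩ := h1
  obtain ⟨φ, hφ⟩ := smul_null P x hx n Y θ hθ.1
  obtain ⟨w, hS⟩ := QQ_exact x Y hreg
  exact ⟨_, gen_step P Y _ x _ w hS n h0 θ hθ φ hφ⟩

lemma gen_three (Y : ModuleCat.{0} A) (f g h : A) (hf : ∀ m : M, f • m = 0)
    (hg : ∀ m : M, g • m = 0) (hh : ∀ m : M, h • m = 0)
    (hreg : RingTheory.Sequence.IsWeaklyRegular Y [f, g, h])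
    (hv : ∀ i : ℕ, i ≠ 3 →
      Subsingleton (((Ext A (ModuleCat.{0} A) i).obj (Opposite.op M)).obj Y))
    (m : (((Ext A (ModuleCat.{0} A) 3).obj (Opposite.op M)).obj Y))
    (hm : Submodule.span A {m} = ⊤) :
    ∃ θ, GenAt P (QQ h (QQ g (QQ f Y))) 0 θ := by
  rw [RingTheory.Sequence.isWeaklyRegular_cons_iff, RingTheory.Sequence.isWeaklyRegular_cons_iff,
    RingTheory.Sequence.isWeaklyRegular_cons_iff] at hreg
  obtain ⟨r1, r2, r3, -⟩ := hreg
  have v (i : ℕ) (hi : i ≠ 3) := gen_of_subsingleton P Y i (hv i hi)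
  have c3 : ∃ θ, GenAt P Y 3 θ := (gen_of_cyclic P Y 3 m hm).imp fun _ h => h.1
  have v10 := gen_step_zero P Y f r1 0 (v 0 (by simp)) (v 1 (by simp))
  have v11 := gen_step_zero P Y f r1 1 (v 1 (by simp)) (v 2 (by simp))
  have c2 := gen_step_ex P Y f hf r1 2 (v 2 (by simp)) c3
  have v20 := gen_step_zero P (QQ f Y) g r2 0 v10 v11
  have c1 := gen_step_ex P (QQ f Y) g hg r2 1 v11 c2
  exact gen_step_ex P (QQ g (QQ f Y)) h hh r3 0 v20 c1

lemma hom_cyclic {Y : ModuleCat.{0} A} (hY : ∃ θ, GenAt P Y 0 θ) :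
    ∃ q : M ⟶ Y, ∀ p : M ⟶ Y, ∃ r : A, p = r • q := by
  obtain ⟨θ, hθ, hgen⟩ := hY
  let π : P.complex.X 0 ⟶ M := P.π.f 0
  have hπ0 : P.complex.d 1 0 ≫ π = 0 := P.complex_d_comp_π_f_zero
  have hepi : Epi π := inferInstanceAs (Epi (P.π.f 0))
  let q : M ⟶ Y := P.isColimitCokernelCofork.desc (CokernelCofork.ofπ θ hθ)
  have hq : π ≫ q = θ := P.isColimitCokernelCofork.fac (CokernelCofork.ofπ θ hθ) WalkingParallelPair.one
  refine ⟨q, fun p => ?_⟩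
  obtain ⟨r, ψ, hr⟩ := hgen (π ≫ p) (by rw [← Category.assoc, hπ0, zero_comp])
  refine ⟨r, ?_⟩
  rw [← cancel_epi π, hr, Linear.comp_smul, hq, P.complex.shape 0 (0-1) (by simp)]
  simp

open Pointwise in
lemma QQ_lift (x : A) (Y : ModuleCat.{0} A) (a : Ideal A) (c : A →ₗ[A] Y)
    (hc : Function.Surjective c) (hk : ∀ r, c r = 0 ↔ r ∈ a) :
    ∃ c' : A →ₗ[A] QQ x Y, Function.Surjective c' ∧ ∀ r, c' r = 0 ↔ r ∈ a ⊔ Ideal.span {x} := by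
  refine ⟨(x • (⊤ : Submodule A Y)).mkQ ∘ₗ c, (Submodule.mkQ_surjective _).comp hc, fun r => ?_⟩
  rw [LinearMap.comp_apply, Submodule.mkQ_apply, Submodule.Quotient.mk_eq_zero,
    Submodule.mem_smul_pointwise_iff_exists]
  constructor
  · rintro ⟨y, -, hy⟩
    obtain ⟨s, rfl⟩ := hc y
    have : r - x * s ∈ a := by
      rw [← hk, map_sub, ← smul_eq_mul, map_smul, hy, sub_self]
    have h2 : r = (r - x * s) + x * s := by ring
    rw [h2]
    exact add_mem (Ideal.mem_sup_left this)
      (Ideal.mem_sup_right (Ideal.mul_mem_right _ _ (Ideal.mem_span_singleton_self x)))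
  · intro hr
    obtain ⟨t, ht, y, hy, rfl⟩ := Submodule.mem_sup.1 hr
    obtain ⟨s, rfl⟩ := Ideal.mem_span_singleton.1 hy
    refine ⟨c s, trivial, ?_⟩
    rw [map_add, (hk t).2 ht, zero_add, ← smul_eq_mul, map_smul]

lemma colon_eq (I : Ideal A) (f g h : A) (hf : f ∈ I) (hg : g ∈ I) (hh : h ∈ I)
    (hreg : RingTheory.Sequence.IsWeaklyRegular A [f, g, h])
    (hv : ∀ i : ℕ, i ≠ 3 → Subsingleton (((Ext A (ModuleCat.{0} A) i).obj
      (Opposite.op (ModuleCat.of A (A ⧸ I)))).obj (ModuleCat.of A A)))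
    (m : (((Ext A (ModuleCat.{0} A) 3).obj
      (Opposite.op (ModuleCat.of A (A ⧸ I)))).obj (ModuleCat.of A A)))
    (hm : Submodule.span A {m} = ⊤) :
    ∃ u, (Ideal.span {f, g, h}).colon I = Ideal.span {f, g, h} ⊔ Ideal.span {u} := by
  have hkill : ∀ x ∈ I, ∀ m : ModuleCat.of A (A ⧸ I), x • m = 0 := by
    intro x hx m
    obtain ⟨y, rfl⟩ := Ideal.Quotient.mk_surjective m
    exact Ideal.Quotient.eq_zero_iff_mem.2 (Ideal.mul_mem_right y I hx)
  let P := ProjectiveResolution.of (ModuleCat.of A (A ⧸ I))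
  obtain ⟨q, hq⟩ := hom_cyclic P (gen_three P (ModuleCat.of A A) f g h (hkill f hf) (hkill g hg)
    (hkill h hh) hreg hv m hm)
  obtain ⟨c1, hc1, hk1⟩ := QQ_lift f (ModuleCat.of A A) ⊥ LinearMap.id Function.surjective_id
    (fun r => by simp)
  obtain ⟨c2, hc2, hk2⟩ := QQ_lift g _ _ c1 hc1 hk1
  obtain ⟨c, hc, hk⟩ := QQ_lift h _ _ c2 hc2 hk2
  have hspan : ⊥ ⊔ Ideal.span {f} ⊔ Ideal.span {g} ⊔ Ideal.span {h} = Ideal.span {f, g, h} := by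
    rw [bot_sup_eq, Ideal.span_insert, Ideal.span_insert, sup_assoc]
  rw [hspan] at hk
  obtain ⟨u, hu⟩ := hc (q.hom (Ideal.Quotient.mk I 1))
  have hqs : ∀ s : A, q.hom (Ideal.Quotient.mk I s) = c (s * u) := by
    intro s
    rw [← smul_eq_mul, map_smul, hu, ← map_smul]
    congr 1
    change _ = Ideal.Quotient.mk I (s * 1)
    rw [mul_one]
  refine ⟨u, le_antisymm ?_ (sup_le ?_ ?_)⟩
  · intro j hj
    rw [Submodule.mem_colon] at hj
    let p : (A ⧸ I) →ₗ[A] (QQ h (QQ g (QQ f (ModuleCat.of A A)))) :=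
      Submodule.liftQ I (c ∘ₗ LinearMap.mulLeft A j) (by
        intro s hs
        rw [LinearMap.mem_ker, LinearMap.comp_apply, hk]
        exact hj s hs)
    obtain ⟨r, hr⟩ := hq (ModuleCat.ofHom p)
    have h1 : p (Ideal.Quotient.mk I 1) = r • q.hom (Ideal.Quotient.mk I 1) := by
      have := congrArg (fun t => t.hom (Ideal.Quotient.mk I 1)) hr
      exact this
    have h2 : p (Ideal.Quotient.mk I 1) = c (j * 1) := rfl
    rw [h2, ← hu, ← map_smul, ← sub_eq_zero, ← map_sub, hk, mul_one] at h1
    have h3 : j = (j - r • u) + r * u := by rw [smul_eq_mul]; ring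
    rw [h3]
    exact add_mem (Ideal.mem_sup_left h1)
      (Ideal.mem_sup_right (Ideal.mul_mem_left _ _ (Ideal.mem_span_singleton_self u)))
  · intro r hr
    rw [Submodule.mem_colon]
    intro s _
    exact Ideal.mul_mem_right _ _ hr
  · rw [Ideal.span_singleton_le_iff_mem, Submodule.mem_colon]
    intro s hs
    rw [smul_eq_mul, mul_comm, ← hk, ← hqs, Ideal.Quotient.eq_zero_iff_mem.2 hs, map_zero]

end hom

section graded
variable {k : Type} [Field k] {n : ℕ}

/-- Closed under homogeneous components. -/
def CompClosed (I : Ideal (MvPolynomial (Fin (n+1)) k)) : Prop :=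
  ∀ p ∈ I, ∀ d, homogeneousComponent d p ∈ I

attribute [local instance] MvPolynomial.gradedAlgebra in
lemma compClosed_span (S : Set (MvPolynomial (Fin (n+1)) k))
    (hS : ∀ f ∈ S, ∃ d, MvPolynomial.IsHomogeneous f d) : CompClosed (Ideal.span S) := by
  intro p hp d
  exact homogeneousComponent_mem_of_mem (Ideal.homogeneous_span _ S
    (fun x hx => (hS x hx).imp fun d h => h)) hp d

lemma comp_mul_hom (p s : MvPolynomial (Fin (n+1)) k) (i d : ℕ) (hs : s.IsHomogeneous d) :
    homogeneousComponent (i + d) (p * s) = homogeneousComponent i p * s := by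
  conv_lhs => rw [← sum_homogeneousComponent p, Finset.sum_mul, map_sum]
  have : ∀ j, homogeneousComponent (i + d) (homogeneousComponent j p * s) =
      if j = i then homogeneousComponent i p * s else 0 := by
    intro j
    rw [homogeneousComponent_of_mem ((homogeneousComponent_isHomogeneous j p).mul hs)]
    by_cases h : j = i
    · simp [h]
    · rw [if_neg (by omega), if_neg h]
  simp only [this, Finset.sum_ite_eq', Finset.mem_range]
  split_ifs with h
  · rfl
  · rw [homogeneousComponent_eq_zero _ _ (by omega), zero_mul]

lemma compClosed_colon (a I : Ideal (MvPolynomial (Fin (n+1)) k)) (ha : CompClosed a)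
    (S : Set (MvPolynomial (Fin (n+1)) k))
    (hS : ∀ f ∈ S, ∃ d, MvPolynomial.IsHomogeneous f d) (hI : I = Ideal.span S) :
    CompClosed (a.colon I) := by
  intro p hp d
  rw [Submodule.mem_colon] at hp ⊢
  have : I ≤ Submodule.comap (LinearMap.mulLeft (MvPolynomial (Fin (n+1)) k) (homogeneousComponent d p)) a := by
    rw [hI]
    refine Submodule.span_le.2 ?_
    intro s hs
    obtain ⟨e, he⟩ := hS s hs
    change homogeneousComponent d p * s ∈ a
    rw [← comp_mul_hom p s d e he]
    exact ha _ (hp s (by rw [hI]; exact Ideal.subset_span hs)) _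
  exact fun s hs => this hs

lemma mem_of_unit_mul (a : Ideal (MvPolynomial (Fin (n+1)) k)) (ha : CompClosed a)
    (s u : MvPolynomial (Fin (n+1)) k) (hs : coeff 0 s ≠ 0) (h : s * u ∈ a) : u ∈ a := by
  have key : ∀ d, homogeneousComponent d u ∈ a := by
    intro d
    induction d using Nat.strong_induction_on with
    | _ d ih =>
      have h1 := ha _ h d
      rw [← sum_homogeneousComponent s, Finset.sum_mul, map_sum, Finset.sum_range_succ'] at h1
      have h2 : ∀ i, homogeneousComponent d (homogeneousComponent (i+1) s * u) ∈ a := by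
        intro i
        by_cases hid : i + 1 ≤ d
        · obtain ⟨e, rfl⟩ := Nat.exists_eq_add_of_le hid
          rw [mul_comm, add_comm (i + 1) e, comp_mul_hom _ _ _ _ (homogeneousComponent_isHomogeneous _ s)]
          exact Ideal.mul_mem_right _ _ (ih e (by omega))
        · rw [← sum_homogeneousComponent u, Finset.mul_sum, map_sum]
          refine sum_mem fun j _ => ?_
          rw [homogeneousComponent_of_mem ((homogeneousComponent_isHomogeneous _ s).mul
            (homogeneousComponent_isHomogeneous j u)), if_neg (by omega)]
          exact zero_mem _
      have h3 := (Submodule.add_mem_iff_right a (sum_mem fun i _ => h2 i)).1 h1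
      rw [homogeneousComponent_zero, homogeneousComponent_C_mul] at h3
      have h4 := a.mul_mem_left (C (coeff 0 s)⁻¹) h3
      rwa [← mul_assoc, ← C_mul, inv_mul_cancel₀ hs, C_1, one_mul] at h4
  rw [← sum_homogeneousComponent u]
  exact sum_mem fun i _ => key i

lemma hom_generator (a J : Ideal (MvPolynomial (Fin (n+1)) k)) (ha : CompClosed a)
    (hJ : CompClosed J) (u : MvPolynomial (Fin (n+1)) k) (hu : J = a ⊔ Ideal.span {u})
    (hsup : ∀ v : MvPolynomial (Fin (n+1)) k, (∃ e, v.IsHomogeneous e) →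
      CompClosed (a ⊔ Ideal.span {v})) :
    ∃ v : MvPolynomial (Fin (n+1)) k, (∃ e, v.IsHomogeneous e) ∧ J = a ⊔ Ideal.span {v} := by
  have huJ : u ∈ J := by rw [hu]; exact Ideal.mem_sup_right (Ideal.mem_span_singleton_self u)
  have haJ : a ≤ J := by rw [hu]; exact le_sup_left
  have hex : ∀ i, ∃ c, homogeneousComponent i u - c * u ∈ a := by
    intro i
    have := hJ u huJ i
    rw [hu] at this
    obtain ⟨t, ht, y, hy, he⟩ := Submodule.mem_sup.1 this
    obtain ⟨s, rfl⟩ := Ideal.mem_span_singleton.1 hy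
    refine ⟨s, ?_⟩
    rw [← he]
    convert ht using 1; ring
  choose c hc using hex
  by_cases h : ∃ i, coeff 0 (c i) ≠ 0
  · obtain ⟨i, hi⟩ := h
    have hv : ∃ e, (homogeneousComponent i u).IsHomogeneous e :=
      ⟨i, homogeneousComponent_isHomogeneous i u⟩
    refine ⟨homogeneousComponent i u, hv, le_antisymm ?_ ?_⟩
    · rw [hu]
      refine sup_le le_sup_left ?_
      rw [Ideal.span_singleton_le_iff_mem]
      apply mem_of_unit_mul _ (hsup _ hv) (c i) u hi
      have : c i * u = homogeneousComponent i u - (homogeneousComponent i u - c i * u) := by ring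
      rw [this]
      exact sub_mem (Ideal.mem_sup_right (Ideal.mem_span_singleton_self _))
        (Ideal.mem_sup_left (hc i))
    · refine sup_le haJ ?_
      rw [Ideal.span_singleton_le_iff_mem]
      exact hJ u huJ i
  · push Not at h
    refine ⟨0, ⟨0, isHomogeneous_zero _ _ _⟩, ?_⟩
    have hua : u ∈ a := by
      apply mem_of_unit_mul a ha (1 - ∑ i ∈ Finset.range (u.totalDegree + 1), c i) u
      · rw [coeff_sub, coeff_sum, Finset.sum_eq_zero (fun i _ => h i)]
        simp
      · have : (1 - ∑ i ∈ Finset.range (u.totalDegree + 1), c i) * u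
            = ∑ i ∈ Finset.range (u.totalDegree + 1), (homogeneousComponent i u - c i * u) := by
          rw [Finset.sum_sub_distrib, sum_homogeneousComponent, ← Finset.sum_mul]; ring
        rw [this]
        exact sum_mem fun i _ => hc i
    rw [hu, sup_eq_left.2 ((Ideal.span_singleton_le_iff_mem _).2 hua)]
    simp

end graded

end helpers

/-- Watanabe's Lemma, first part: linking a non-complete-intersection height-three
Gorenstein ideal by a regular sequence of homogeneous elements extendable to a minimal
generating set produces an almost complete intersection `(f, g, h, u)`. -/
theorem stmt_3 (I : Ideal (MvPolynomial (Fin (n+1)) k))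
    (hGor : IsArithGorHt3 I) (hnotCI : ¬ IsCI I)
    (f g h : MvPolynomial (Fin (n+1)) k)
    (hfI : f ∈ I) (hgI : g ∈ I) (hhI : h ∈ I)
    (hfhom : ∃ d, MvPolynomial.IsHomogeneous f d)
    (hghom : ∃ d, MvPolynomial.IsHomogeneous g d)
    (hhhom : ∃ d, MvPolynomial.IsHomogeneous h d)
    (hreg : RingTheory.Sequence.IsRegular (MvPolynomial (Fin (n+1)) k) [f, g, h])
    (hext : ∃ S : Finset (MvPolynomial (Fin (n+1)) k), f ∈ S ∧ g ∈ S ∧ h ∈ S ∧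
      Ideal.span (S : Set (MvPolynomial (Fin (n+1)) k)) = I ∧ S.card = mu I) :
    ∃ u : MvPolynomial (Fin (n+1)) k, (∃ e, MvPolynomial.IsHomogeneous u e) ∧
      (Ideal.span {f, g, h}).colon I = Ideal.span {f, g, h, u} := by
  obtain ⟨-, ⟨S, hS, hIS⟩, -, hv, m, hm⟩ := hGor
  obtain ⟨u, hu⟩ := colon_eq I f g h hfI hgI hhI hreg.toIsWeaklyRegular hv m hm
  have hhom : ∀ x ∈ ({f, g, h} : Set (MvPolynomial (Fin (n+1)) k)),
      ∃ d, MvPolynomial.IsHomogeneous x d := by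
    rintro x (rfl | rfl | rfl)
    · exact hfhom
    · exact hghom
    · exact hhhom
  have ha := compClosed_span _ hhom
  have hJ := compClosed_colon _ I ha S hS hIS
  obtain ⟨v, hv, hJv⟩ := hom_generator _ _ ha hJ u hu (fun v hv => by
    rw [← Ideal.span_union]
    refine compClosed_span _ ?_
    rintro x (hx | hx)
    · exact hhom x hx
    · rw [Set.mem_singleton_iff.1 hx]; exact hv)
  refine ⟨v, hv, ?_⟩
  rw [hJv, ← Ideal.span_union]
  congr 1
  ext x
  simp only [Set.mem_union, Set.mem_insert_iff, Set.mem_singleton_iff]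
  tauto

end
end

section
/- (Watanabe's Lemma, second part.) Let I be an arithmetically Gorenstein homogeneous ideal of height three in R that is not a complete intersection, let f, g, h ∈ I be a regular sequence of homogeneous elements that can be extended to a minimal generating set of I, and let u be a homogeneous element of R with (f,g,h) : I = (f,g,h,u). Assume furthermore that u, f, g is a regular sequence. Then the ideal I' = (u,f,g) : (f,g,h,u) is an arithmetically Gorenstein homogeneous ideal of height three in R whose minimal number of generators is two less than that of I, i.e., μ(I') = μ(I) − 2. -/
/-
Common setup: `R = k[x₀,…,xₙ]` is the standard graded polynomial ring
`MvPolynomial (Fin (n+1)) k` over a field `k`.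
-/

open CategoryTheory MvPolynomial RingTheory

noncomputable section

variable {k : Type} [Field k] {n : ℕ}

section Bridge
variable {A : Type} [CommRing A]

lemma bridge_char (X Y : ModuleCat.{0} A) (p : ℕ) (P : ProjectiveResolution X)
    (hs : Subsingleton (Abelian.Ext X Y (p+1))) :
    Subsingleton (((_root_.Ext A (ModuleCat.{0} A) (p+1)).obj (Opposite.op X)).obj Y) := by
  have e := P.isoExt (R := A) (p+1) Y
  apply ModuleCat.subsingleton_of_isZero
  refine Limits.IsZero.of_iso ?_ e
  rw [← HomologicalComplex.exactAt_iff_isZero_homology,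
    HomologicalComplex.exactAt_iff' _ p (p+1) (p+2) (by simp) (by simp),
    ShortComplex.moduleCat_exact_iff]
  intro x hx
  have hx' : P.complex.d (p+2) (p+1) ≫ x = 0 := hx
  exact (P.extMk_eq_zero_iff x (p+2) rfl hx' p rfl).1 (Subsingleton.elim _ _)

lemma bridge_char' (X Y : ModuleCat.{0} A) (p : ℕ) (P : ProjectiveResolution X)
    (hs : Subsingleton (((_root_.Ext A (ModuleCat.{0} A) (p+1)).obj (Opposite.op X)).obj Y)) :
    Subsingleton (Abelian.Ext X Y (p+1)) := by
  have e := P.isoExt (R := A) (p+1) Y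
  have h0 := (ModuleCat.isZero_of_subsingleton
    (((_root_.Ext A (ModuleCat.{0} A) (p+1)).obj (Opposite.op X)).obj Y)).of_iso e.symm
  rw [← HomologicalComplex.exactAt_iff_isZero_homology,
    HomologicalComplex.exactAt_iff' _ p (p+1) (p+2) (by simp) (by simp),
    ShortComplex.moduleCat_exact_iff] at h0
  refine ⟨fun a b => ?_⟩
  have key : ∀ a : Abelian.Ext X Y (p+1), a = 0 := by
    intro a
    obtain ⟨x, hx, rfl⟩ := P.extMk_surjective a (p+2) rfl
    rw [P.extMk_eq_zero_iff x (p+2) rfl hx p rfl]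
    exact h0 x hx
  rw [key a, key b]

lemma extMk_smul {X Y : ModuleCat.{0} A} (P : ProjectiveResolution X) {n : ℕ}
    (f : P.complex.X n ⟶ Y) (m : ℕ) (hm : n + 1 = m)
    (hf : P.complex.d m n ≫ f = 0) (r : A) :
    P.extMk (r • f) m hm (by simp [hf]) = r • P.extMk f m hm hf := by
  rw [Abelian.Ext.smul_eq_comp_mk₀, P.extMk_comp_mk₀]
  congr 1

lemma bridge_cyclic (X Y : ModuleCat.{0} A) (p : ℕ) (P : ProjectiveResolution X)
    (a : Abelian.Ext X Y (p+1)) (ha : ∀ b, ∃ r : A, b = r • a) :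
    ∃ m : (((_root_.Ext A (ModuleCat.{0} A) (p+1)).obj (Opposite.op X)).obj Y),
      Submodule.span A {m} = ⊤ := by
  have e := P.isoExt (R := A) (p+1) Y
  let K := P.complex.linearYonedaObj A Y
  let S := K.sc' p (p+1) (p+2)
  have e2 : K.homology (p+1) ≅ S.homology :=
    ShortComplex.homologyMapIso (K.isoSc' p (p+1) (p+2) (by simp) (by simp))
  have e3 := S.moduleCatHomologyIso
  let E := (e ≪≫ e2 ≪≫ e3).toLinearEquiv
  obtain ⟨f0, hf0, rfl⟩ := P.extMk_surjective a (p+2) rfl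
  have key : ∀ f : P.complex.X (p+1) ⟶ Y, P.complex.d (p+2) (p+1) ≫ f = 0 →
      ∃ (r : A) (g : P.complex.X p ⟶ Y), P.complex.d (p+1) p ≫ g = f - r • f0 := by
    intro f hf
    obtain ⟨r, hr⟩ := ha (P.extMk f (p+2) rfl hf)
    rw [← extMk_smul, ← sub_eq_zero, P.sub_extMk, P.extMk_eq_zero_iff _ _ _ _ p rfl] at hr
    exact ⟨r, hr⟩
  have h0 : f0 ∈ LinearMap.ker S.g.hom := hf0
  refine ⟨E.symm (Submodule.Quotient.mk ⟨f0, h0⟩), ?_⟩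
  rw [Submodule.eq_top_iff']
  intro z
  obtain ⟨z, rfl⟩ := E.symm.surjective z
  obtain ⟨⟨f, hf⟩, rfl⟩ := Submodule.Quotient.mk_surjective _ z
  obtain ⟨r, g, hg⟩ := key f hf
  rw [Submodule.mem_span_singleton]
  refine ⟨r, ?_⟩
  refine (E.symm.map_smul r _).symm.trans ?_
  refine congrArg E.symm ?_
  have hq : Submodule.Quotient.mk (p := LinearMap.range S.moduleCatToCycles) ⟨f, hf⟩ =
      Submodule.Quotient.mk (r • (⟨f0, h0⟩ : LinearMap.ker S.g.hom)) :=
    (Submodule.Quotient.eq _).2 ⟨g, Subtype.ext hg⟩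
  exact hq.symm

lemma bridge_zero (X Y : ModuleCat.{0} A) (P : ProjectiveResolution X)
    (hs : ∀ f : X ⟶ Y, f = 0) :
    Subsingleton (((_root_.Ext A (ModuleCat.{0} A) 0).obj (Opposite.op X)).obj Y) := by
  have e := P.isoExt (R := A) 0 Y
  apply ModuleCat.subsingleton_of_isZero
  refine Limits.IsZero.of_iso ?_ e
  rw [← HomologicalComplex.exactAt_iff_isZero_homology,
    HomologicalComplex.exactAt_iff' _ 0 0 1 (by simp) (by simp),
    ShortComplex.moduleCat_exact_iff]
  intro x hx
  have hx' : P.complex.d 1 0 ≫ (show P.complex.X 0 ⟶ Y from x) = 0 := hx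
  refine ⟨0, ?_⟩
  have h1 := P.exact₀.desc' (show P.complex.X 0 ⟶ Y from x) hx'
  obtain ⟨l, hl⟩ := h1
  rw [hs l] at hl
  simp at hl
  rw [map_zero]
  exact hl
end Bridge

/-- every maximal ideal is generated by a weakly regular sequence of length `d` -/
def MaxReg (A : Type) [CommRing A] (d : ℕ) : Prop :=
  ∀ p : Ideal A, p.IsMaximal → ∃ rs : List A, rs.length = d ∧
    RingTheory.Sequence.IsWeaklyRegular A rs ∧ Ideal.ofList rs = p

lemma MaxReg.of_equiv {A B : Type} [CommRing A] [CommRing B] (e : A ≃+* B) {d : ℕ}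
    (h : MaxReg A d) : MaxReg B d := by
  intro p hp
  have hp' : (p.comap e).IsMaximal := Ideal.comap_isMaximal_of_equiv e
  obtain ⟨rs, h1, h2, h3⟩ := h _ hp'
  refine ⟨rs.map e, by simp [h1], ?_, ?_⟩
  · let _ := RingHomInvPair.of_ringEquiv e
    let _ := RingHomInvPair.of_ringEquiv e.symm
    have := (LinearEquiv.isWeaklyRegular_congr' (σ := (e : A →+* B))
      ({ e with map_smul' := by intro a b; simp } : A ≃ₛₗ[(e : A →+* B)] B) rs).1 h2
    simpa using this
  · have := Ideal.map_ofList (e : A →+* B) rs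
    rw [h3] at this
    have h4 : Ideal.map (e : A →+* B) (p.comap e) = p :=
      Ideal.map_comap_of_surjective _ e.surjective p
    rw [h4] at this
    simpa using this.symm

lemma MaxReg.field {A : Type} [Field A] : MaxReg A 0 := by
  intro p hp
  refine ⟨[], rfl, RingTheory.Sequence.IsWeaklyRegular.nil _ _, ?_⟩
  have := Ideal.eq_bot_of_prime p
  simp [this]

lemma MaxReg.polynomial {A : Type} [CommRing A] [IsJacobsonRing A] {d : ℕ}
    (h : MaxReg A d) : MaxReg (Polynomial A) (d+1) := by
  intro p hp
  have hq : (p.comap Polynomial.C).IsMaximal :=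
    Polynomial.isMaximal_comap_C_of_isJacobsonRing (hP := hp) p
  obtain ⟨rs, h1, h2, h3⟩ := h _ hq
  have hne : p ≠ (p.comap Polynomial.C).map Polynomial.C := by
    intro hh
    set q := p.comap Polynomial.C
    -- p = q[X] would be maximal
    have hX : (Polynomial.X : Polynomial A) ∉ p := by
      intro hx
      rw [hh, Ideal.mem_map_C_iff] at hx
      have := hx 1
      simp at this
      exact hq.ne_top ((Ideal.eq_top_iff_one _).2 this)
    obtain ⟨y, i, hi, e1⟩ := hp.exists_inv hX
    have h1 : y * Polynomial.X - 1 ∈ p := by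
      have : y * Polynomial.X - 1 = -i := by rw [← e1]; ring
      rw [this]; exact neg_mem hi
    rw [hh, Ideal.mem_map_C_iff] at h1
    have := h1 0
    simp at this
    exact hq.ne_top ((Ideal.eq_top_iff_one _).2 this)
  obtain ⟨f, hf, hfe⟩ := Polynomial.exists_monic_span_sup_map_eq A p hq hne
  have hmap : Ideal.ofList (rs.map (Polynomial.C : A →+* Polynomial A))
      = (p.comap Polynomial.C).map Polynomial.C := by
    rw [← Ideal.map_ofList, h3]
  refine ⟨rs.map Polynomial.C ++ [f], by simp [h1], ?_, ?_⟩
  · rw [RingTheory.Sequence.isWeaklyRegular_append_iff]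
    constructor
    · exact RingTheory.Sequence.IsWeaklyRegular.of_flat (S := Polynomial A) h2
    · rw [RingTheory.Sequence.isWeaklyRegular_singleton_iff]
      rw [isSMulRegular_iff_right_eq_zero_of_smul]
      intro x hx
      obtain ⟨x, rfl⟩ := Submodule.Quotient.mk_surjective _ x
      rw [← Submodule.Quotient.mk_smul, Submodule.Quotient.mk_eq_zero] at hx
      rw [Submodule.Quotient.mk_eq_zero]
      rw [hmap, smul_eq_mul, Ideal.mul_top] at hx ⊢
      have hk : (p.comap Polynomial.C).map Polynomial.C = RingHom.ker
          (Polynomial.mapRingHom (Ideal.Quotient.mk (p.comap Polynomial.C))) := by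
        rw [Polynomial.ker_mapRingHom, Ideal.mk_ker]
      rw [hk, RingHom.mem_ker] at hx ⊢
      rw [smul_eq_mul, map_mul] at hx
      have hm : (Polynomial.mapRingHom (Ideal.Quotient.mk (p.comap Polynomial.C)) f).Monic :=
        hf.map _
      exact (hm.mul_right_eq_zero_iff).1 hx
  · rw [Ideal.ofList_append, hmap, Ideal.ofList_singleton]
    exact hfe.symm
lemma maxReg_mvPolynomial (k : Type) [Field k] (d : ℕ) : MaxReg (MvPolynomial (Fin d) k) d := by
  induction d with
  | zero => exact MaxReg.of_equiv (isEmptyRingEquiv k (Fin 0)).symm MaxReg.field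
  | succ d ih => exact MaxReg.of_equiv (finSuccEquiv k d).symm.toRingEquiv ih.polynomial

lemma pd_quotient (A : Type) [CommRing A] (rs : List A) (M : Type) [AddCommGroup M] [Module A M]
    (hrs : RingTheory.Sequence.IsWeaklyRegular M rs) (d : ℕ)
    (hM : HasProjectiveDimensionLT (ModuleCat.of A M) d) :
    HasProjectiveDimensionLT (ModuleCat.of A (M ⧸ (Ideal.ofList rs • ⊤ : Submodule A M)))
      (d + rs.length) := by
  induction rs generalizing M d with
  | nil =>
    have e : (M ⧸ (Ideal.ofList ([] : List A) • ⊤ : Submodule A M)) ≃ₗ[A] M :=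
      Submodule.quotEquivOfEqBot _ (by rw [Ideal.ofList_nil, Submodule.bot_smul])
    simpa using hasProjectiveDimensionLT_of_iso (e.symm.toModuleIso) d
  | cons r rs ih =>
    rw [RingTheory.Sequence.isWeaklyRegular_cons_iff] at hrs
    have h1 : HasProjectiveDimensionLT (ModuleCat.of A (QuotSMulTop r M)) (d+1) := by
      have hS := IsSMulRegular.smulShortComplex_shortExact (M := ModuleCat.of A M) hrs.1
      exact hS.hasProjectiveDimensionLT_X₃ d hM
        (show HasProjectiveDimensionLT (ModuleCat.of A M) (d+1) from hasProjectiveDimensionLT_of_ge _ d _ (by omega))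
    have h2 := ih _ hrs.2 _ h1
    have e := Submodule.quotOfListConsSMulTopEquivQuotSMulTopInner M r rs
    have := hasProjectiveDimensionLT_of_iso (e.symm.toModuleIso) (d + 1 + rs.length)
    rw [List.length_cons, show d + (rs.length + 1) = d + 1 + rs.length by ring]
    exact this

section Dev
open Abelian Pointwise
variable {A : Type} [CommRing A]

lemma ext_smul_id {X Y : ModuleCat.{0} A} {i : ℕ} (r : A) (e : Ext X Y i) :
    (Ext.mk₀ (r • 𝟙 X)).comp e (zero_add i) = r • e := by
  rw [Ext.mk₀_smul, Ext.smul_comp, Ext.mk₀_id_comp]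

lemma ext_smul_id' {X Y : ModuleCat.{0} A} {i : ℕ} (r : A) (e : Ext X Y i) :
    e.comp (Ext.mk₀ (r • 𝟙 Y)) (add_zero i) = r • e := by
  rw [Ext.mk₀_smul, Ext.comp_smul, Ext.comp_mk₀_id]

lemma ext_sub_of_iso {X X' Y : ModuleCat.{0} A} (e : X ≅ X') (i : ℕ)
    (h : Subsingleton (Ext X' Y i)) : Subsingleton (Ext X Y i) := by
  refine subsingleton_of_forall_eq 0 fun x => ?_
  have h1 : (Ext.mk₀ e.inv).comp x (zero_add i) = 0 := Subsingleton.elim _ _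
  have h2 : (Ext.mk₀ e.hom).comp ((Ext.mk₀ e.inv).comp x (zero_add i)) (zero_add i) = x := by
    rw [Ext.mk₀_comp_mk₀_assoc]; simp
  rw [← h2, h1]; simp

lemma ext_sub_mid {S : ShortComplex (ModuleCat.{0} A)} (hS : S.ShortExact) (Y : ModuleCat.{0} A)
    (i : ℕ) (h1 : Subsingleton (Ext S.X₁ Y i)) (h3 : Subsingleton (Ext S.X₃ Y i)) :
    Subsingleton (Ext S.X₂ Y i) := by
  refine subsingleton_of_forall_eq 0 fun x => ?_
  obtain ⟨y, hy⟩ := Ext.contravariant_sequence_exact₂ hS Y x (Subsingleton.elim _ _)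
  rw [← hy, Subsingleton.elim y 0]; simp

variable [IsNoetherianRing A]

lemma dev_module (Y : ModuleCat.{0} A) (i : ℕ) (J : Ideal A)
    (hp : ∀ P : Ideal A, P.IsPrime → J ≤ P → Subsingleton (Ext (ModuleCat.of A (A ⧸ P)) Y i))
    (M : Type) [AddCommGroup M] [Module A M] [Module.Finite A M]
    (hM : J ≤ Module.annihilator A M) : Subsingleton (Ext (ModuleCat.of A M) Y i) := by
  revert hM
  refine IsNoetherianRing.induction_on_isQuotientEquivQuotientPrime A (M := M) inferInstance
    (motive := fun N _ _ _ => J ≤ Module.annihilator A N →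
      Subsingleton (Ext (ModuleCat.of A N) Y i)) ?_ ?_ ?_
  · intro N _ _ _ _ _
    refine subsingleton_of_forall_eq 0 fun x => ?_
    exact (ModuleCat.isZero_of_subsingleton (ModuleCat.of A N)).projective |> fun h => by
      have h2 : Ext.mk₀ (𝟙 (ModuleCat.of A N)) = 0 := by
        rw [(ModuleCat.isZero_of_subsingleton (ModuleCat.of A N)).eq_of_src (𝟙 _) 0]; simp
      rw [← Ext.mk₀_id_comp x, h2]; simp
  · intro N _ _ _ p e hN
    refine ext_sub_of_iso e.toModuleIso i (hp p.1 p.2 ?_)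
    rw [e.annihilator_eq, Ideal.annihilator_quotient] at hN
    exact hN
  · intro N₁ _ _ _ N₂ _ _ _ N₃ _ _ _ f g hf hg hfg h1 h3 h2
    have hS : (ShortComplex.mk (ModuleCat.ofHom f) (ModuleCat.ofHom g) (by
      ext x; exact hfg.apply_apply_eq_zero x)).ShortExact :=
      ModuleCat.shortComplex_shortExact _ hfg hf hg
    exact ext_sub_mid hS Y i (h1 (h2.trans (f.annihilator_le_of_injective hf)))
      (h3 (h2.trans (g.annihilator_le_of_surjective hg)))

lemma dev_prime (Y : ModuleCat.{0} A) [Module.Finite A Y] (G : ℕ → Ideal A → Prop)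
    (hG : ∀ i P Q, P.IsPrime → Q.IsPrime → P < Q → G i P → G (i+1) Q)
    (hmax : ∀ i P, P.IsMaximal → G i P → Subsingleton (Ext (ModuleCat.of A (A ⧸ P)) Y i))
    (P : Ideal A) : P.IsPrime → ∀ i, G i P → Subsingleton (Ext (ModuleCat.of A (A ⧸ P)) Y i) := by
  induction P using WellFoundedGT.induction with
  | ind P ih =>
  intro hP i hi
  by_cases hPm : P.IsMaximal
  · exact hmax i P hPm hi
  obtain ⟨m, hm, hPlem⟩ := P.exists_le_maximal hP.ne_top
  have hPm' : P < m := lt_of_le_of_ne hPlem (by rintro rfl; exact hPm hm)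
  have key : ∀ x : A, x ∉ P → ∀ e : Ext (ModuleCat.of A (A ⧸ P)) Y i,
      ∃ e', e = x • e' := by
    intro x hx e
    have hreg : IsSMulRegular (ModuleCat.of A (A ⧸ P)) x := by
      rw [isSMulRegular_iff_right_eq_zero_of_smul]
      intro y hy
      obtain ⟨y, rfl⟩ := Ideal.Quotient.mk_surjective y
      have : Ideal.Quotient.mk P (x * y) = 0 := hy
      rw [Ideal.Quotient.eq_zero_iff_mem] at this ⊢
      exact (hP.mem_or_mem this).resolve_left hx
    have hS := hreg.smulShortComplex_shortExact
    have hsub : Subsingleton (Ext (ModuleCat.of A (QuotSMulTop x (A ⧸ P))) Y (i+1)) := by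
      refine dev_module Y (i+1) (P ⊔ Ideal.span {x}) ?_ _ ?_
      · intro Q hQ hle
        have hlt : P < Q := lt_of_le_of_ne (le_sup_left.trans hle) (by
          rintro rfl
          exact hx (hle (Ideal.mem_sup_right (Ideal.mem_span_singleton_self x))))
        exact ih Q hlt hQ (i+1) (hG i P Q hP hQ hlt hi)
      · rw [sup_le_iff]
        constructor
        · have := (Submodule.mkQ (x • (⊤ : Submodule A (A ⧸ P)))).annihilator_le_of_surjective
            (Submodule.mkQ_surjective _)
          rwa [Ideal.annihilator_quotient] at this
        · rw [Ideal.span_le, Set.singleton_subset_iff]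
          exact Module.mem_annihilator.2 fun z => by
            obtain ⟨z, rfl⟩ := Submodule.Quotient.mk_surjective _ z
            rw [← Submodule.Quotient.mk_smul, Submodule.Quotient.mk_eq_zero]
            exact Submodule.smul_mem_pointwise_smul _ _ _ trivial
    obtain ⟨e', he'⟩ := Ext.contravariant_sequence_exact₁ hS Y e (add_comm 1 i)
      (@Subsingleton.elim _ hsub _ _)
    exact ⟨e', he'.symm.trans (ext_smul_id x e')⟩
  obtain ⟨x, hxm, hxP⟩ := Set.exists_of_ssubset hPm'
  have hfin : Module.Finite A (Ext (ModuleCat.of A (A ⧸ P)) Y i) := inferInstance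
  obtain ⟨r, hr1, hr2⟩ := Submodule.exists_sub_one_mem_and_smul_eq_zero_of_fg_of_le_smul
    (Ideal.span {x}) (⊤ : Submodule A (Ext (ModuleCat.of A (A ⧸ P)) Y i)) hfin.1 (by
      intro e _
      obtain ⟨e', he'⟩ := key x hxP e
      rw [he']
      exact Submodule.smul_mem_smul (Ideal.mem_span_singleton_self x) trivial)
  have hrP : r ∉ P := by
    intro hrP
    apply hm.ne_top
    rw [Ideal.eq_top_iff_one]
    have h1 : r - 1 ∈ m := (Ideal.span_singleton_le_iff_mem m).2 hxm hr1
    have := m.sub_mem (hPlem hrP) h1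
    simpa using this
  refine subsingleton_of_forall_eq 0 fun e => ?_
  obtain ⟨e', he'⟩ := key r hrP e
  rw [he', hr2 e' trivial]

end Dev

section HilbertSyzygy
open Abelian
variable {k : Type} [Field k] {d : ℕ}

lemma maxReg_pd {A : Type} [CommRing A] (hA : MaxReg A d) (P : Ideal A) (hP : P.IsMaximal) :
    HasProjectiveDimensionLT (ModuleCat.of A (A ⧸ P)) (d+1) := by
  obtain ⟨rs, h1, h2, h3⟩ := hA P hP
  have h := pd_quotient A rs A h2 1 (projective_iff_hasProjectiveDimensionLT_one.1
    (ModuleCat.projective_of_free (M := ModuleCat.of A A) (Module.Basis.singleton Unit A)))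
  rw [h1] at h
  have e : (A ⧸ (Ideal.ofList rs • ⊤ : Submodule A A)) ≃ₗ[A] A ⧸ P :=
    Submodule.quotEquivOfEq _ _ (by rw [h3, smul_eq_mul, Ideal.mul_top])
  have := hasProjectiveDimensionLT_of_iso e.toModuleIso (1+d)
  rwa [add_comm] at this

lemma hilbert_syzygy (M : ModuleCat.{0} (MvPolynomial (Fin d) k))
    [Module.Finite (MvPolynomial (Fin d) k) M] : HasProjectiveDimensionLT M (d+1) := by
  refine ModuleCat.hasProjectiveDimensionLT_of_forall_finite M _ fun L hL => ?_
  refine dev_module L (d+1) ⊥ (fun P hP _ => ?_) M bot_le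
  refine dev_prime L (fun i _ => d + 1 ≤ i) (fun i _ _ _ _ _ h => by omega) ?_ P hP (d+1) le_rfl
  intro i P hP hi
  have := maxReg_pd (maxReg_mvPolynomial k d) P hP
  exact HasProjectiveDimensionLT.subsingleton _ (d+1) i hi _

lemma maxReg_ext {A : Type} [CommRing A] [IsNoetherianRing A] (hA : MaxReg A d) (P : Ideal A)
    (hP : P.IsMaximal) (i : ℕ) (hi : i < d) :
    Subsingleton (Ext (ModuleCat.of A (A ⧸ P)) (ModuleCat.of A A) i) := by
  obtain ⟨rs, h1, h2, h3⟩ := hA P hP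
  have ht : P • (⊤ : Submodule A A) < ⊤ := by
    rw [smul_eq_mul, Ideal.mul_top]; exact lt_top_iff_ne_top.2 hP.ne_top
  refine ModuleCat.subsingleton_ext_of_exists_isRegular P (ModuleCat.of A (A ⧸ P)) ?_
    (ModuleCat.of A A) ht rs ?_ ⟨h2, ?_⟩ i (by omega)
  · rw [Module.support_eq_zeroLocus]
    apply PrimeSpectrum.zeroLocus_anti_mono
    rw [Ideal.annihilator_quotient]
  · intro r hr
    rw [← h3]; exact Ideal.subset_span hr
  · rw [h3]; exact ht.ne'

lemma ext_vanish_of_height (J : Ideal (MvPolynomial (Fin d) k)) (r : ℕ)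
    (hJ : ∀ p : PrimeSpectrum (MvPolynomial (Fin d) k), J ≤ p.asIdeal → (r : ℕ∞) ≤ Order.height p)
    (i : ℕ) (hi : i < r) :
    Subsingleton (Ext (ModuleCat.of (MvPolynomial (Fin d) k) (MvPolynomial (Fin d) k ⧸ J))
      (ModuleCat.of (MvPolynomial (Fin d) k) (MvPolynomial (Fin d) k)) i) := by
  refine dev_module _ i J (fun P hP hle => ?_) _ (by rw [Ideal.annihilator_quotient])
  refine dev_prime _ (fun i P => (i : ℕ∞) < P.height) ?_ ?_ P hP i ?_
  · intro i P Q hP hQ hlt h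
    have h2 := Ideal.height_add_one_le_of_lt_of_isPrime hlt
    push_cast
    refine lt_of_lt_of_le ?_ h2
    exact (ENat.add_lt_add_iff_right ENat.one_ne_top).2 h
  · intro i P hP hi
    refine maxReg_ext (maxReg_mvPolynomial k d) P hP i ?_
    have h1 : (P.height : WithBot ℕ∞) ≤ ringKrullDim (MvPolynomial (Fin d) k) :=
      Ideal.height_le_ringKrullDim_of_ne_top hP.ne_top
    rw [MvPolynomial.ringKrullDim_of_isNoetherianRing, ringKrullDim_eq_zero_of_field] at h1
    simp at h1
    have h3 : P.height ≤ (d : ℕ∞) := by exact_mod_cast h1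
    exact_mod_cast hi.trans_le h3
  · have h1 := hJ ⟨P, hP⟩ hle
    rw [← PrimeSpectrum.height_eq_orderHeight] at h1
    exact lt_of_lt_of_le (by exact_mod_cast hi) h1

lemma ext_free_zero {A : Type} [CommRing A] (M : ModuleCat.{0} A) (p m : ℕ)
    (h : Subsingleton (Ext M (ModuleCat.of A A) p)) :
    Subsingleton (Ext M (ModuleCat.of A (Fin m → A)) p) := by
  refine subsingleton_of_forall_eq 0 fun x => ?_
  have hid : 𝟙 (ModuleCat.of A (Fin m → A)) = ∑ j : Fin m,
      ModuleCat.ofHom (LinearMap.proj (R := A) (φ := fun _ : Fin m => A) j) ≫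
      ModuleCat.ofHom (LinearMap.single A (fun _ : Fin m => A) j) := by
    ext i j
    simp [Finset.sum_apply, Pi.single_apply]
  rw [← Ext.comp_mk₀_id x, hid, Ext.mk₀_sum, Ext.comp_sum]
  refine Finset.sum_eq_zero fun j _ => ?_
  rw [← Ext.mk₀_comp_mk₀, ← Ext.comp_assoc_of_second_deg_zero]
  rw [Subsingleton.elim (x.comp _ _) 0]
  simp

lemma pd_descend (M : ModuleCat.{0} (MvPolynomial (Fin d) k))
    [Module.Finite (MvPolynomial (Fin d) k) M] (c : ℕ)
    (h : ∀ i, c < i → Subsingleton (Ext M (ModuleCat.of (MvPolynomial (Fin d) k) (MvPolynomial (Fin d) k)) i)) :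
    HasProjectiveDimensionLT M (c+1) := by
  have key : ∀ j, HasProjectiveDimensionLT M (c + 1 + j) → HasProjectiveDimensionLT M (c+1) := by
    intro j
    induction j with
    | zero => exact id
    | succ j ih =>
      intro hpd
      apply ih
      refine ModuleCat.hasProjectiveDimensionLT_of_forall_finite M _ fun L hL => ?_
      obtain ⟨m, f, hf⟩ := Module.Finite.exists_fin' (MvPolynomial (Fin d) k) L
      have hS := LinearMap.shortExact_shortComplexKer hf
      refine subsingleton_of_forall_eq 0 fun x => ?_
      have h1 : Subsingleton (Ext M (f.shortComplexKer).X₁ (c+1+j+1)) :=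
        HasProjectiveDimensionLT.subsingleton M (c+1+(j+1)) _ (by omega) _
      obtain ⟨y, hy⟩ := Ext.covariant_sequence_exact₃ M hS x rfl (Subsingleton.elim _ _)
      have h2 : Subsingleton (Ext M (f.shortComplexKer).X₂ (c+1+j)) :=
        ext_free_zero M _ m (h _ (by omega))
      rw [← hy, Subsingleton.elim y 0]; simp
  refine key d ?_
  have := hilbert_syzygy M
  exact hasProjectiveDimensionLT_of_ge M (d+1) _ (by omega)

end HilbertSyzygy

section Resolution
variable {A : Type} [CommRing A] [IsNoetherianRing A]

/-- length three resolution extracted from `pd (A/I) ≤ 3`. -/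
lemma exists_res {ι : Type} [Fintype ι] (w : ι → A)
    (hpd : HasProjectiveDimensionLT (ModuleCat.of A (A ⧸ Ideal.span (Set.range w))) 4) :
    ∃ (p : ℕ) (d2 : (Fin p → A) →ₗ[A] (ι → A)),
      (∀ z : ι → A, ∑ i, z i * w i = 0 ↔ ∃ y, d2 y = z) ∧
      Module.Projective A (LinearMap.ker d2) := by
  classical
  set I := Ideal.span (Set.range w) with hI
  let q : A →ₗ[A] (A ⧸ I) := Submodule.mkQ I
  let π1 : (ι → A) →ₗ[A] LinearMap.ker q :=
    LinearMap.codRestrict _ (Fintype.linearCombination A w) (by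
      intro c
      rw [Submodule.ker_mkQ]
      rw [Fintype.linearCombination_apply]
      exact Submodule.sum_mem _ fun i _ => I.mul_mem_left _ (Ideal.subset_span ⟨i, rfl⟩))
  have hπ1 : Function.Surjective π1 := by
    rintro ⟨x, hx⟩
    rw [Submodule.ker_mkQ] at hx
    have hx' : x ∈ Submodule.span A (Set.range w) := hx
    rw [← Fintype.range_linearCombination A w] at hx'
    obtain ⟨c, hc⟩ := hx'
    exact ⟨c, Subtype.ext hc⟩
  obtain ⟨p, π2, hπ2⟩ := Module.Finite.exists_fin' A (LinearMap.ker π1)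
  have s0 : HasProjectiveDimensionLT (ModuleCat.of A (LinearMap.ker q)) 3 :=
    ((LinearMap.shortExact_shortComplexKer (f := q)
      (Submodule.mkQ_surjective I)).hasProjectiveDimensionLT_X₃_iff 2
      (show Projective (ModuleCat.of A A) from
        ModuleCat.projective_of_free (M := ModuleCat.of A A) (Module.Basis.singleton Unit A))).1 hpd
  have s1 : HasProjectiveDimensionLT (ModuleCat.of A (LinearMap.ker π1)) 2 :=
    ((LinearMap.shortExact_shortComplexKer (f := π1) hπ1).hasProjectiveDimensionLT_X₃_iff 1
      (show Projective (ModuleCat.of A (ι → A)) from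
        ModuleCat.projective_of_free (M := ModuleCat.of A (ι → A)) (Pi.basisFun A ι))).1 s0
  have s2 : HasProjectiveDimensionLT (ModuleCat.of A (LinearMap.ker π2)) 1 :=
    ((LinearMap.shortExact_shortComplexKer (f := π2) hπ2).hasProjectiveDimensionLT_X₃_iff 0
      (show Projective (ModuleCat.of A (Fin p → A)) from
        ModuleCat.projective_of_free (M := ModuleCat.of A (Fin p → A)) (Pi.basisFun A _))).1 s1
  have s3 : Module.Projective A (LinearMap.ker π2) :=
    (IsProjective.iff_projective (R := A) (LinearMap.ker π2)).2
      (projective_iff_hasProjectiveDimensionLT_one.2 s2)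
  refine ⟨p, (Submodule.subtype _).comp π2, ?_, ?_⟩
  · intro z
    have : ∑ i, z i * w i = 0 ↔ z ∈ LinearMap.ker π1 := by
      rw [LinearMap.mem_ker, Subtype.ext_iff]
      simp [π1, Fintype.linearCombination_apply]
    rw [this]
    constructor
    · intro hz
      obtain ⟨y, hy⟩ := hπ2 ⟨z, hz⟩
      exact ⟨y, by simp [hy]⟩
    · rintro ⟨y, rfl⟩
      exact (π2 y).2
  · rw [LinearMap.ker_comp, Submodule.ker_subtype]
    exact s3

/-- multiplication by `s ∈ I` factors through `F₂` on the last syzygy -/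
lemma exists_eta {ι : Type} [Fintype ι] [DecidableEq ι] (w : ι → A) (p : ℕ) (d2 : (Fin p → A) →ₗ[A] (ι → A))
    (hd : ∀ z : ι → A, ∑ i, z i * w i = 0 ↔ ∃ y, d2 y = z) (h0 : ι → A) :
    ∃ η : (Fin p → A) →ₗ[A] (Fin p → A), (∀ y, d2 (η y) = 0) ∧
      ∀ y, d2 y = 0 → η y = (∑ i, h0 i * w i) • y := by
  set s := ∑ i, h0 i * w i with hs
  have h1 : ∀ j : ι, ∃ y, d2 y = s • Pi.single j (1:A) - w j • h0 := by
    intro j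
    rw [← hd]
    simp only [Pi.sub_apply, Pi.smul_apply, smul_eq_mul, sub_mul, Finset.sum_sub_distrib]
    simp only [Pi.single_apply, mul_ite, mul_one, mul_zero, ite_mul, zero_mul, Finset.sum_ite_eq',
      Finset.mem_univ, if_true, mul_assoc, ← Finset.mul_sum, ← hs]
    ring
  choose y hy using h1
  let H : (ι → A) →ₗ[A] (Fin p → A) := Fintype.linearCombination A y
  have hH : ∀ z, d2 (H z) = s • z - (∑ i, z i * w i) • h0 := by
    intro z
    simp only [H, Fintype.linearCombination_apply, map_sum, map_smul, hy]
    ext j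
    simp only [Finset.sum_apply, Pi.smul_apply, Pi.sub_apply, smul_eq_mul, mul_sub,
      Finset.sum_sub_distrib, Finset.sum_mul]
    simp only [Pi.single_apply, mul_ite, mul_one, mul_zero, Finset.sum_ite_eq,
      Finset.mem_univ, if_true]
    congr 1
    · ring
    · exact Finset.sum_congr rfl fun i _ => by ring
  refine ⟨s • LinearMap.id - H.comp d2, ?_, ?_⟩
  · intro z
    have := (hd (d2 z)).2 ⟨z, rfl⟩
    simp [hH, this]
  · intro z hz
    simp [hz]

/-- `M` f.g. projective; if `ω` satisfies `s ω ∈ K M` for all `s ∈ I` then `ω ∈ (K : I) M`. -/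
lemma mem_colon_smul_of_projective {M : Type} [AddCommGroup M] [Module A M] [Module.Finite A M]
    [Module.Projective A M] (K I : Ideal A) (ω : M)
    (h : ∀ s ∈ I, s • ω ∈ K • (⊤ : Submodule A M)) :
    ω ∈ (K.colon (I : Set A)) • (⊤ : Submodule A M) := by
  obtain ⟨q, f, hf⟩ := Module.Finite.exists_fin' A M
  obtain ⟨g, hg⟩ := Module.projective_lifting_property f LinearMap.id hf
  have e1 : ω = ∑ j, g ω j • f (Pi.single j 1) := by
    have : f (g ω) = ω := LinearMap.congr_fun hg ω
    conv_lhs => rw [← this, pi_eq_sum_univ' (g ω)]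
    rw [map_sum]
    refine Finset.sum_congr rfl fun j _ => ?_
    rw [map_smul]
  rw [e1]
  refine Submodule.sum_mem _ fun j _ => Submodule.smul_mem_smul ?_ trivial
  rw [Submodule.mem_colon]
  intro s hs
  have h2 : (LinearMap.proj j).comp g (s • ω) ∈ Submodule.map ((LinearMap.proj j).comp g)
    (K • (⊤ : Submodule A M)) := Submodule.mem_map_of_mem (h s hs)
  rw [Submodule.map_smul''] at h2
  have h3 : K • Submodule.map ((LinearMap.proj j).comp g) (⊤ : Submodule A M) ≤ K := by
    rw [smul_eq_mul]; exact Ideal.mul_le_left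
  have := h3 h2
  simpa [mul_comm] using this

lemma mem_span_triple_smul {M : Type} [AddCommGroup M] [Module A M] (f g h : A) (x : M) :
    x ∈ Ideal.span {f, g, h} • (⊤ : Submodule A M) ↔ ∃ a b c : M, x = f • a + g • b + h • c := by
  simp only [Ideal.span_insert, Submodule.sup_smul, Submodule.mem_sup,
    Submodule.ideal_span_singleton_smul, Submodule.mem_smul_pointwise_iff_exists]
  constructor
  · rintro ⟨_, ⟨a, -, rfl⟩, _, ⟨_, ⟨b, -, rfl⟩, _, ⟨c, -, rfl⟩, rfl⟩, rfl⟩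
    exact ⟨a, b, c, by abel⟩
  · rintro ⟨a, b, c, rfl⟩
    exact ⟨_, ⟨a, trivial, rfl⟩, _, ⟨_, ⟨b, trivial, rfl⟩, _, ⟨c, trivial, rfl⟩, rfl⟩, by abel⟩

lemma mem_span_quad_smul {M : Type} [AddCommGroup M] [Module A M] (f g h u : A) (x : M) :
    x ∈ Ideal.span {f, g, h, u} • (⊤ : Submodule A M) ↔
      ∃ a b c e : M, x = f • a + g • b + h • c + u • e := by
  rw [Ideal.span_insert, Submodule.sup_smul, Submodule.mem_sup]
  simp only [mem_span_triple_smul,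
    Submodule.ideal_span_singleton_smul, Submodule.mem_smul_pointwise_iff_exists]
  constructor
  · rintro ⟨_, ⟨a, -, rfl⟩, _, ⟨b, c, d, rfl⟩, rfl⟩
    exact ⟨a, b, c, d, by abel⟩
  · rintro ⟨a, b, c, d, rfl⟩
    exact ⟨_, ⟨a, trivial, rfl⟩, _, ⟨b, c, d, rfl⟩, by abel⟩

lemma mem_span_triple {f g h x : A} :
    x ∈ Ideal.span {f, g, h} ↔ ∃ a b c : A, x = f * a + g * b + h * c := by
  simpa [smul_eq_mul] using mem_span_triple_smul (M := A) f g h x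

lemma mem_span_quad {f g h u x : A} :
    x ∈ Ideal.span {f, g, h, u} ↔ ∃ a b c e : A, x = f * a + g * b + h * c + u * e := by
  simpa [smul_eq_mul] using mem_span_quad_smul (M := A) f g h u x

end Resolution

section Koszul
variable {A : Type} [CommRing A]

/-- elementary content of `f, g, h` being a weakly regular sequence -/
structure Reg3 (f g h : A) : Prop where
  r1 : ∀ x, f * x = 0 → x = 0
  r2 : ∀ x y, g * x = f * y → ∃ z, x = f * z
  r3 : ∀ c a b, h * c = f * a + g * b → ∃ a' b', c = f * a' + g * b'

lemma Reg3.K {f g h : A} (H : Reg3 f g h) (a b c : A) (e : f * a + g * b + h * c = 0) :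
    ∃ s1 s2 s3, a = h * s2 - g * s3 ∧ b = f * s3 - h * s1 ∧ c = g * s1 - f * s2 := by
  obtain ⟨a', b', hc⟩ := H.r3 c (-a) (-b) (by linear_combination e)
  obtain ⟨s3, h3⟩ := H.r2 (b + h * b') (-(a + h * a')) (by
    subst hc; linear_combination e)
  refine ⟨b', -a', s3, ?_, by linear_combination h3, by linear_combination hc⟩
  rw [← sub_eq_zero]
  apply H.r1
  linear_combination e - h * hc - g * h3

lemma Reg3.T {f g h : A} (H : Reg3 f g h) (a b c : A) (e1 : f * b = g * a) (e2 : f * c = h * a) :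
    ∃ t, a = f * t ∧ b = g * t ∧ c = h * t := by
  obtain ⟨t, rfl⟩ := H.r2 a b e1.symm
  refine ⟨t, rfl, ?_, ?_⟩
  · rw [← sub_eq_zero]; apply H.r1; linear_combination e1
  · rw [← sub_eq_zero]; apply H.r1; linear_combination e2

lemma Reg3.of_isRegular {f g h : A} (H : RingTheory.Sequence.IsRegular A [f, g, h]) :
    Reg3 f g h := by
  have H1 := H.toIsWeaklyRegular
  rw [RingTheory.Sequence.isWeaklyRegular_cons_iff,
    RingTheory.Sequence.isWeaklyRegular_cons_iff,
    RingTheory.Sequence.isWeaklyRegular_singleton_iff] at H1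
  obtain ⟨a1, a2, a3⟩ := H1
  have e2 : ∀ x, g * x ∈ Ideal.span {f} → x ∈ Ideal.span {f} := by
    intro x hx
    have h0 := isSMulRegular_iff_right_eq_zero_of_smul.1 a2
    have := h0 (Submodule.Quotient.mk x) (by
      rw [← Submodule.Quotient.mk_smul, Submodule.Quotient.mk_eq_zero]
      rw [Ideal.mem_span_singleton] at hx
      obtain ⟨y, hy⟩ := hx
      exact (Submodule.mem_smul_pointwise_iff_exists _ _ _).2 ⟨y, trivial, hy.symm⟩)
    rw [Submodule.Quotient.mk_eq_zero] at this
    obtain ⟨y, -, hy⟩ := (Submodule.mem_smul_pointwise_iff_exists _ _ _).1 this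
    exact Ideal.mem_span_singleton.2 ⟨y, hy.symm⟩
  refine ⟨fun x hx => isSMulRegular_iff_right_eq_zero_of_smul.1 a1 x hx, ?_, ?_⟩
  · intro x y hxy
    exact Ideal.mem_span_singleton.1 (e2 x (Ideal.mem_span_singleton.2 ⟨y, hxy⟩))
  · intro c a b hc
    have h0 := isSMulRegular_iff_right_eq_zero_of_smul.1 a3
    have := h0 (Submodule.Quotient.mk (Submodule.Quotient.mk c)) (by
      rw [← Submodule.Quotient.mk_smul, Submodule.Quotient.mk_eq_zero]
      refine (Submodule.mem_smul_pointwise_iff_exists _ _ _).2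
        ⟨Submodule.Quotient.mk b, trivial, ?_⟩
      rw [← Submodule.Quotient.mk_smul, ← Submodule.Quotient.mk_smul, Submodule.Quotient.eq]
      refine (Submodule.mem_smul_pointwise_iff_exists _ _ _).2 ⟨-a, trivial, ?_⟩
      simp only [smul_eq_mul]
      linear_combination hc)
    rw [Submodule.Quotient.mk_eq_zero] at this
    obtain ⟨y, -, hy⟩ := (Submodule.mem_smul_pointwise_iff_exists _ _ _).1 this
    obtain ⟨y, rfl⟩ := Submodule.Quotient.mk_surjective _ y
    rw [← Submodule.Quotient.mk_smul, Submodule.Quotient.eq] at hy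
    obtain ⟨z, -, hz⟩ := (Submodule.mem_smul_pointwise_iff_exists _ _ _).1 hy
    refine ⟨-z, y, ?_⟩
    simp only [smul_eq_mul] at hz
    linear_combination hz

variable [IsNoetherianRing A]

lemma sum3 {ι : Type} [Fintype ι] [DecidableEq ι] (w : ι → A) (i : ι) (x : A) :
    ∑ j, (Pi.single i x : ι → A) j * w j = x * w i := by
  simp [Pi.single_apply]

theorem linkage_core {ι : Type} [Fintype ι] [DecidableEq ι] (w : ι → A)
    (hpd : HasProjectiveDimensionLT (ModuleCat.of A (A ⧸ Ideal.span (Set.range w))) 4)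
    (i0 i1 i2 : ι) (h01 : i0 ≠ i1) (h02 : i0 ≠ i2) (h12 : i1 ≠ i2)
    (f g h u : A) (hf : w i0 = f) (hg : w i1 = g) (hh : w i2 = h) (H : Reg3 f g h)
    (hu : (Ideal.span {f, g, h}).colon (Ideal.span (Set.range w) : Set A) =
      Ideal.span {f, g, h, u}) :
    (∀ a0, a0 * u ∈ Ideal.span {f, g, h} → a0 ∈ Ideal.span (Set.range w)) ∧
    (∀ m I' : Ideal A, (∀ z : ι → A, ∑ i, z i * w i = 0 → ∀ i, z i ∈ m) →
      (∀ r, r * h ∈ Ideal.span {u, f, g} → r ∈ I') → f ∈ m * I' ∧ g ∈ m * I') := by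
  obtain ⟨p, d2, hd, hproj⟩ := exists_res w hpd
  obtain ⟨v1, hv1⟩ := (hd (Pi.single i1 h - Pi.single i2 g)).1 (by
    simp only [Pi.sub_apply, sub_mul, Finset.sum_sub_distrib, sum3, hg, hh]; ring)
  obtain ⟨v2, hv2⟩ := (hd (Pi.single i2 f - Pi.single i0 h)).1 (by
    simp only [Pi.sub_apply, sub_mul, Finset.sum_sub_distrib, sum3, hf, hh]; ring)
  obtain ⟨v3, hv3⟩ := (hd (Pi.single i0 g - Pi.single i1 f)).1 (by
    simp only [Pi.sub_apply, sub_mul, Finset.sum_sub_distrib, sum3, hg, hf]; ring)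
  have hω : d2 (f • v1 + g • v2 + h • v3) = 0 := by
    simp only [map_add, map_smul, hv1, hv2, hv3]
    ext i
    simp only [Pi.add_apply, Pi.smul_apply, Pi.sub_apply, Pi.single_apply, smul_eq_mul,
      Pi.zero_apply]
    split_ifs <;> ring
  set ω : LinearMap.ker d2 := ⟨f • v1 + g • v2 + h • v3, hω⟩ with hωdef
  have hωJ : ω ∈ (Ideal.span {f, g, h, u}) • (⊤ : Submodule A (LinearMap.ker d2)) := by
    rw [← hu]
    apply mem_colon_smul_of_projective
    intro s hs
    have hs' : s ∈ Submodule.span A (Set.range w) := hs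
    rw [← Fintype.range_linearCombination A w] at hs'
    obtain ⟨h0, rfl⟩ := hs'
    obtain ⟨η, hη1, hη2⟩ := exists_eta w p d2 hd h0
    rw [mem_span_triple_smul]
    refine ⟨⟨η v1, hη1 _⟩, ⟨η v2, hη1 _⟩, ⟨η v3, hη1 _⟩, ?_⟩
    apply Subtype.ext
    have := hη2 _ hω
    simp only [map_add, map_smul] at this
    simp only [Submodule.coe_add, Submodule.coe_smul, hωdef]
    rw [this]
    simp [Fintype.linearCombination_apply]
  rw [mem_span_quad_smul] at hωJ
  obtain ⟨⟨b1, hb1⟩, ⟨b2, hb2⟩, ⟨b3, hb3⟩, ⟨a, ha⟩, he⟩ := hωJ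
  have he' : f • v1 + g • v2 + h • v3 = f • b1 + g • b2 + h • b3 + u • a := by
    simpa [hωdef] using congrArg Subtype.val he
  rw [LinearMap.mem_ker] at hb1 hb2 hb3 ha
  constructor
  · intro a0 ha0
    obtain ⟨x, y, z, hxyz⟩ := mem_span_triple.1 ha0
    have k0 : ∀ j, ∃ s1 s2 s3,
        (a0 • b1 + x • a - a0 • v1) j = h * s2 - g * s3 ∧
        (a0 • b2 + y • a - a0 • v2) j = f * s3 - h * s1 ∧
        (a0 • b3 + z • a - a0 • v3) j = g * s1 - f * s2 := by
      intro j
      apply H.K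
      have := congrFun he' j
      simp only [Pi.add_apply, Pi.smul_apply, Pi.sub_apply, smul_eq_mul] at this ⊢
      linear_combination (-a0) * this - a j * hxyz
    choose s1 s2 s3 k1 k2 k3 using k0
    have K1 : a0 • b1 + x • a - a0 • v1 = h • s2 - g • s3 := funext k1
    have K2 : a0 • b2 + y • a - a0 • v2 = f • s3 - h • s1 := funext k2
    have K3 : a0 • b3 + z • a - a0 • v3 = g • s1 - f • s2 := funext k3
    have K1' := congrArg d2 K1
    have K2' := congrArg d2 K2
    have K3' := congrArg d2 K3
    simp only [map_add, map_sub, map_smul, hb1, hb2, hb3, ha, hv1, hv2, hv3, smul_zero,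
      add_zero, zero_sub, zero_add] at K1' K2' K3'
    have k4 : ∀ i, ∃ t, (d2 s1 + Pi.single i0 a0 : ι → A) i = f * t ∧ (d2 s2 + Pi.single i1 a0 : ι → A) i = g * t ∧
        (d2 s3 + Pi.single i2 a0 : ι → A) i = h * t := by
      intro i
      have q2 := congrFun K2' i
      have q3 := congrFun K3' i
      apply H.T
      · simp only [Pi.add_apply, Pi.smul_apply, Pi.sub_apply, Pi.neg_apply, Pi.single_apply,
          smul_eq_mul] at q3 ⊢
        split_ifs at q3 ⊢ <;> linear_combination q3
      · simp only [Pi.add_apply, Pi.smul_apply, Pi.sub_apply, Pi.neg_apply, Pi.single_apply,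
          smul_eq_mul] at q2 ⊢
        split_ifs at q2 ⊢ <;> linear_combination -q2
    choose t ht _ _ using k4
    have e0 := (hd (d2 s1)).2 ⟨_, rfl⟩
    have e1 : ∑ i, (d2 s1 + Pi.single i0 a0 : ι → A) i * w i = a0 * f := by
      simp only [Pi.add_apply, add_mul, Finset.sum_add_distrib, sum3, e0, hf, zero_add]
    have e2 : ∑ i, (d2 s1 + Pi.single i0 a0 : ι → A) i * w i = f * ∑ i, t i * w i := by
      rw [Finset.mul_sum]
      exact Finset.sum_congr rfl fun i _ => by rw [ht i]; ring
    have e3 : a0 = ∑ i, t i * w i := by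
      rw [← sub_eq_zero]; apply H.r1
      linear_combination e2 - e1
    rw [e3]
    exact Submodule.sum_mem _ fun i _ => Ideal.mul_mem_left _ _ (Ideal.subset_span ⟨i, rfl⟩)
  · intro m I' hm hI'
    have hmem : ∀ j, (v3 - b3) j ∈ I' := by
      intro j
      apply hI'
      rw [mem_span_triple]
      refine ⟨a j, (b1 - v1) j, (b2 - v2) j, ?_⟩
      have := congrFun he' j
      simp only [Pi.add_apply, Pi.smul_apply, Pi.sub_apply, smul_eq_mul] at this ⊢
      linear_combination this
    have hex : ∀ i, d2 v3 i ∈ m * I' := by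
      intro i
      have : d2 v3 = d2 (v3 - b3) := by rw [map_sub, hb3, sub_zero]
      rw [this, pi_eq_sum_univ' (v3 - b3), map_sum, Finset.sum_apply]
      refine Submodule.sum_mem _ fun j _ => ?_
      rw [map_smul, Pi.smul_apply, smul_eq_mul, mul_comm ((v3 - b3) j)]
      exact Ideal.mul_mem_mul (hm _ ((hd _).2 ⟨_, rfl⟩) i) (hmem j)
    have x0 := hex i0
    have x1 := hex i1
    rw [hv3] at x0 x1
    simp [Pi.single_apply, h01, h01.symm] at x0 x1
    exact ⟨x1, x0⟩

end Koszul
section Graded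
variable {k : Type} [Field k] {n : ℕ}

lemma hc_mul {a b : MvPolynomial (Fin (n+1)) k} {i : ℕ} (ha : IsHomogeneous a i) (j : ℕ) :
    homogeneousComponent (i + j) (a * b) = a * homogeneousComponent j b := by
  let _ := MvPolynomial.gradedAlgebra (σ := Fin (n+1)) (R := k)
  have := DirectSum.coe_decompose_mul_add_of_left_mem (j := j) (homogeneousSubmodule (Fin (n+1)) k)
    (a := a) (b := b) ha
  exact (decomposition.decompose'_apply _ _).symm.trans
    (this.trans (congrArg (a * ·) (decomposition.decompose'_apply _ _)))

lemma hc_mul_lt {a b : MvPolynomial (Fin (n+1)) k} {i : ℕ} (ha : IsHomogeneous a i) (j : ℕ)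
    (hj : j < i) :
    homogeneousComponent j (a * b) = 0 := by
  let _ := MvPolynomial.gradedAlgebra (σ := Fin (n+1)) (R := k)
  have := DirectSum.coe_decompose_mul_of_left_mem_of_not_le (n := j)
    (homogeneousSubmodule (Fin (n+1)) k) (a := a) (b := b) ha (by omega)
  exact (decomposition.decompose'_apply _ _).symm.trans this

/-- componentwise homogeneity -/
def HomI (I : Ideal (MvPolynomial (Fin (n+1)) k)) : Prop :=
  ∀ x ∈ I, ∀ d, homogeneousComponent d x ∈ I

lemma homI_of_span {S : Set (MvPolynomial (Fin (n+1)) k)}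
    (hS : ∀ f ∈ S, ∃ d, MvPolynomial.IsHomogeneous f d) : HomI (Ideal.span S) := by
  intro x hx
  induction hx using Submodule.span_induction with
  | mem x h =>
    intro d
    obtain ⟨e, he⟩ := hS x h
    rw [homogeneousComponent_of_mem he]
    split_ifs
    · exact Ideal.subset_span h
    · exact zero_mem _
  | zero => intro d; simp
  | add x y _ _ hx hy => intro d; rw [map_add]; exact add_mem (hx d) (hy d)
  | smul a x hx h =>
    intro d
    have e : a • x = ∑ i ∈ Finset.range (a.totalDegree + 1), homogeneousComponent i a * x := by
      rw [← Finset.sum_mul, sum_homogeneousComponent, smul_eq_mul]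
    rw [e, map_sum]
    refine Submodule.sum_mem _ fun i _ => ?_
    by_cases hd : d < i
    · rw [hc_mul_lt (homogeneousComponent_isHomogeneous i a) d hd]; exact zero_mem _
    · obtain ⟨j, rfl⟩ := Nat.exists_eq_add_of_le (not_lt.1 hd)
      rw [hc_mul (homogeneousComponent_isHomogeneous i a) j]
      exact Ideal.mul_mem_left _ _ (h j)

lemma IsHomogeneousIdeal.homI {I : Ideal (MvPolynomial (Fin (n+1)) k)}
    (h : IsHomogeneousIdeal I) : HomI I := by
  obtain ⟨S, hS, rfl⟩ := h
  exact homI_of_span hS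

lemma HomI.isHomogeneousIdeal {I : Ideal (MvPolynomial (Fin (n+1)) k)}
    (h : HomI I) : IsHomogeneousIdeal I := by
  refine ⟨{x | x ∈ I ∧ ∃ d, MvPolynomial.IsHomogeneous x d}, fun f hf => hf.2, ?_⟩
  apply le_antisymm
  · intro x hx
    rw [← sum_homogeneousComponent x]
    exact Submodule.sum_mem _ fun i _ => Ideal.subset_span
      ⟨h x hx i, i, homogeneousComponent_isHomogeneous i x⟩
  · rw [Ideal.span_le]
    exact fun x hx => hx.1

/-- the irrelevant ideal -/
def mIdeal (k : Type) [Field k] (n : ℕ) : Ideal (MvPolynomial (Fin (n+1)) k) :=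
  Ideal.span (Set.range X)

lemma sub_C_mem (x : MvPolynomial (Fin (n+1)) k) : x - C (constantCoeff x) ∈ mIdeal k n := by
  induction x using MvPolynomial.induction_on with
  | C a => simp
  | add p q hp hq =>
    have : p + q - C (constantCoeff (p + q)) = (p - C (constantCoeff p)) +
      (q - C (constantCoeff q)) := by rw [map_add, map_add]; ring
    rw [this]; exact add_mem hp hq
  | mul_X p i hp =>
    simp only [map_mul, constantCoeff_X, mul_zero, map_zero, sub_zero]
    exact Ideal.mul_mem_left _ _ (Ideal.subset_span ⟨i, rfl⟩)

lemma mem_mIdeal {x : MvPolynomial (Fin (n+1)) k} : x ∈ mIdeal k n ↔ constantCoeff x = 0 := by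
  constructor
  · intro hx
    have : mIdeal k n ≤ RingHom.ker (constantCoeff (σ := Fin (n+1)) (R := k)) := by
      rw [mIdeal, Ideal.span_le]
      rintro _ ⟨i, rfl⟩
      simp [RingHom.mem_ker]
    exact this hx
  · intro hx
    have := sub_C_mem x
    rwa [hx, map_zero, sub_zero] at this

lemma hc_mem_of_mul {I N : Ideal (MvPolynomial (Fin (n+1)) k)} (d : ℕ)
    (hI : HomI I) (h : ∀ e < d, ∀ y ∈ I, IsHomogeneous y e → y ∈ N)
    (x : MvPolynomial (Fin (n+1)) k) (hx : x ∈ mIdeal k n * I) : homogeneousComponent d x ∈ N := by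
  induction hx using Submodule.mul_induction_on' with
  | mem_mul_mem a ha y hy =>
    induction ha using Submodule.span_induction generalizing y with
    | mem a h' =>
      obtain ⟨i, rfl⟩ := h'
      rcases Nat.eq_zero_or_pos d with rfl | hd
      · rw [hc_mul_lt (isHomogeneous_X k i) 0 (by omega)]; exact zero_mem _
      · obtain ⟨j, rfl⟩ : ∃ j, d = 1 + j := ⟨d - 1, by omega⟩
        rw [hc_mul (isHomogeneous_X k i) j]
        exact Ideal.mul_mem_left _ _ (h j (by omega) _ (hI y hy j)
          (homogeneousComponent_isHomogeneous j y))
    | zero => simp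
    | add a b _ _ ha hb => rw [add_mul, map_add]; exact add_mem (ha y hy) (hb y hy)
    | smul b a _ ha =>
      rw [smul_eq_mul, mul_assoc, mul_left_comm]
      exact ha (b * y) (Ideal.mul_mem_left _ _ hy)
  | add x _ y _ hx hy => rw [map_add]; exact add_mem hx hy

/-- graded Nakayama -/
lemma graded_nakayama {I N : Ideal (MvPolynomial (Fin (n+1)) k)} (hI : HomI I) (hN : HomI N)
    (h : I ≤ N ⊔ mIdeal k n * I) : I ≤ N := by
  have key : ∀ d : ℕ, ∀ x ∈ I, IsHomogeneous x d → x ∈ N := by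
    intro d
    induction d using Nat.strong_induction_on with
    | _ d ih =>
      intro x hx hxd
      obtain ⟨y, hy, z, hz, e⟩ := Submodule.mem_sup.1 (h hx)
      rw [← homogeneousComponent_eq_self hxd, ← e, map_add]
      exact add_mem (hN y hy d) (hc_mem_of_mul d hI ih z hz)
  intro x hx
  rw [← sum_homogeneousComponent x]
  exact Submodule.sum_mem _ fun i _ => key i _ (hI x hx i) (homogeneousComponent_isHomogeneous i x)

/-- `I / m I` -/
abbrev VI (I : Ideal (MvPolynomial (Fin (n+1)) k)) : Type :=
  ↥I ⧸ (mIdeal k n • ⊤ : Submodule (MvPolynomial (Fin (n+1)) k) ↥I)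

def cls (I : Ideal (MvPolynomial (Fin (n+1)) k)) : ↥I →ₗ[k] VI I :=
  (Submodule.mkQ (mIdeal k n • ⊤ : Submodule (MvPolynomial (Fin (n+1)) k) ↥I)).restrictScalars k

lemma cls_surjective (I : Ideal (MvPolynomial (Fin (n+1)) k)) : Function.Surjective (cls I) :=
  fun y => by
    obtain ⟨x, hx⟩ := Submodule.Quotient.mk_surjective _ y
    exact ⟨x, hx⟩

lemma cls_eq_zero {I : Ideal (MvPolynomial (Fin (n+1)) k)} (x : I) :
    cls I x = 0 ↔ (x : MvPolynomial (Fin (n+1)) k) ∈ mIdeal k n * I := by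
  refine (Submodule.Quotient.mk_eq_zero _).trans ?_
  rw [Submodule.mem_smul_top_iff, smul_eq_mul]

lemma cls_smul {I : Ideal (MvPolynomial (Fin (n+1)) k)} (a : MvPolynomial (Fin (n+1)) k) (x : I) :
    cls I (a • x) = constantCoeff a • cls I x := by
  rw [← map_smul, ← sub_eq_zero, ← map_sub, cls_eq_zero]
  have : ((a • x - constantCoeff a • x : I) : MvPolynomial (Fin (n+1)) k) =
      (a - C (constantCoeff a)) * (x : MvPolynomial (Fin (n+1)) k) := by
    rw [sub_mul, ← smul_eq_C_mul]; rfl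
  rw [this]
  exact Ideal.mul_mem_mul (sub_C_mem a) x.2

lemma span_cls {I : Ideal (MvPolynomial (Fin (n+1)) k)} {ι : Type} (s : ι → I)
    (hs : Ideal.span (Set.range fun i => (s i : MvPolynomial (Fin (n+1)) k)) = I) :
    Submodule.span k (Set.range fun i => cls I (s i)) = ⊤ := by
  have h1 : Submodule.span (MvPolynomial (Fin (n+1)) k) (Set.range s) = ⊤ := by
    apply Submodule.map_injective_of_injective (Submodule.subtype_injective I)
    rw [Submodule.map_span, ← Set.range_comp, Submodule.map_top, Submodule.range_subtype]
    exact hs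
  rw [eq_top_iff]
  rintro x -
  obtain ⟨x, rfl⟩ := cls_surjective I x
  have hx : x ∈ Submodule.span (MvPolynomial (Fin (n+1)) k) (Set.range s) := h1 ▸ trivial
  induction hx using Submodule.span_induction with
  | mem x h => obtain ⟨i, rfl⟩ := h; exact Submodule.subset_span ⟨i, rfl⟩
  | zero => simp
  | add x y _ _ hx hy => rw [map_add]; exact add_mem hx hy
  | smul a x _ hx => rw [cls_smul]; exact Submodule.smul_mem _ _ hx

lemma span_of_cls {I : Ideal (MvPolynomial (Fin (n+1)) k)} (hI : HomI I) {ι : Type} (s : ι → I)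
    (hom : ∀ i, ∃ d, IsHomogeneous (s i : MvPolynomial (Fin (n+1)) k) d)
    (hs : Submodule.span k (Set.range fun i => cls I (s i)) = ⊤) :
    Ideal.span (Set.range fun i => (s i : MvPolynomial (Fin (n+1)) k)) = I := by
  apply le_antisymm
  · rw [Ideal.span_le]; rintro _ ⟨i, rfl⟩; exact (s i).2
  · apply graded_nakayama hI
    · apply homI_of_span; rintro _ ⟨i, rfl⟩; exact hom i
    · intro x hx
      have h1 : cls I ⟨x, hx⟩ ∈ Submodule.span k (Set.range fun i => cls I (s i)) := hs ▸ trivial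
      have h2 : (Set.range fun i => cls I (s i)) = cls I '' Set.range s := by
        rw [← Set.range_comp]; rfl
      rw [h2, ← Submodule.map_span] at h1
      obtain ⟨y, hy, e⟩ := h1
      have h3 : (y : MvPolynomial (Fin (n+1)) k) ∈
          Ideal.span (Set.range fun i => (s i : MvPolynomial (Fin (n+1)) k)) := by
        clear e
        induction hy using Submodule.span_induction with
        | mem x h => obtain ⟨i, rfl⟩ := h; exact Ideal.subset_span ⟨i, rfl⟩
        | zero => exact zero_mem _
        | add x y _ _ hx hy => exact add_mem hx hy
        | smul a x _ hx =>
          have : ((a • x : I) : MvPolynomial (Fin (n+1)) k) = C a * (x : MvPolynomial (Fin (n+1)) k) := by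
            rw [← smul_eq_C_mul]; rfl
          rw [this]; exact Ideal.mul_mem_left _ _ hx
      rw [← sub_eq_zero, ← map_sub, cls_eq_zero] at e
      refine Submodule.mem_sup.2 ⟨y, h3, x - y, ?_, by ring⟩
      have := neg_mem e
      simpa using this

instance finite_VI (I : Ideal (MvPolynomial (Fin (n+1)) k)) : Module.Finite k (VI I) := by
  obtain ⟨S, hS⟩ := (IsNoetherian.noetherian I : I.FG)
  have hS' : Ideal.span (S : Set (MvPolynomial (Fin (n+1)) k)) = I := hS
  let s : S → I := fun x => ⟨x, hS' ▸ Ideal.subset_span x.2⟩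
  have := span_cls s (by simpa [s] using hS')
  refine Module.finite_def.2 ?_
  rw [← this]
  exact Submodule.fg_span (Set.finite_range _)

lemma finrank_le_card {I : Ideal (MvPolynomial (Fin (n+1)) k)}
    (S : Finset (MvPolynomial (Fin (n+1)) k)) (hS : Ideal.span (S : Set _) = I) :
    Module.finrank k (VI I) ≤ S.card := by
  let s : S → I := fun x => ⟨x, hS ▸ Ideal.subset_span x.2⟩
  have h1 := span_cls s (by simpa [s] using hS)
  have h2 := finrank_range_le_card (R := k) (fun i => cls I (s i))
  rw [Set.finrank, h1, finrank_top] at h2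
  simpa using h2

lemma mu_eq {I : Ideal (MvPolynomial (Fin (n+1)) k)} (hI : HomI I) :
    mu I = Module.finrank k (VI I) := by
  classical
  apply le_antisymm
  · let T := {x : I // ∃ d, IsHomogeneous (x : MvPolynomial (Fin (n+1)) k) d}
    have h0 : Ideal.span (Set.range fun i : T => ((i.1 : I) : MvPolynomial (Fin (n+1)) k)) = I := by
      apply le_antisymm
      · rw [Ideal.span_le]; rintro _ ⟨i, rfl⟩; exact i.1.2
      · intro x hx
        rw [← sum_homogeneousComponent x]
        exact Submodule.sum_mem _ fun i _ => Ideal.subset_span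
          ⟨⟨⟨_, hI x hx i⟩, i, homogeneousComponent_isHomogeneous i x⟩, rfl⟩
    have h1 := span_cls (fun i : T => i.1) h0
    obtain ⟨κ, a, ha, hsp, hli⟩ := exists_linearIndependent' k (fun i : T => cls I i.1)
    rw [h1] at hsp
    have : Finite κ := hli.finite
    let _ := Fintype.ofFinite κ
    have h2 := span_of_cls hI (fun i : κ => (a i).1) (fun i => (a i).2) hsp
    have h3 : Fintype.card κ = Module.finrank k (VI I) := by
      have := finrank_span_eq_card hli
      rw [hsp, finrank_top] at this
      exact this.symm
    refine Nat.sInf_le ⟨Finset.univ.image fun i : κ => ((a i).1 : MvPolynomial (Fin (n+1)) k), ?_, ?_⟩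
    · rw [Finset.card_image_of_injective, Finset.card_univ, h3]
      intro i j hij
      exact ha (Subtype.ext (Subtype.ext hij))
    · rw [Finset.coe_image, Finset.coe_univ, Set.image_univ]
      exact h2
  · refine le_csInf ?_ ?_
    · obtain ⟨S, hS⟩ := (IsNoetherian.noetherian I : I.FG)
      exact ⟨_, S, rfl, hS⟩
    · rintro m ⟨S, rfl, hS⟩
      exact finrank_le_card S hS

lemma rel_mem_mIdeal {I : Ideal (MvPolynomial (Fin (n+1)) k)} (hI : HomI I)
    (S : Finset (MvPolynomial (Fin (n+1)) k)) (hS : Ideal.span (S : Set _) = I)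
    (hc : S.card = mu I) :
    LinearIndependent k (fun x : S => cls I ⟨x, hS ▸ Ideal.subset_span x.2⟩) ∧
    ∀ z : S → MvPolynomial (Fin (n+1)) k, ∑ i, z i * i = 0 → ∀ i, z i ∈ mIdeal k n := by
  let s : S → I := fun x => ⟨x, hS ▸ Ideal.subset_span x.2⟩
  have h1 := span_cls s (by simpa [s] using hS)
  have h2 : LinearIndependent k (fun x : S => cls I (s x)) :=
    linearIndependent_of_top_le_span_of_card_eq_finrank h1.ge (by
      rw [← mu_eq hI, ← hc]; simp)
  refine ⟨h2, fun z hz i => ?_⟩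
  rw [mem_mIdeal]
  refine Fintype.linearIndependent_iff.1 h2 (fun i => constantCoeff (z i)) ?_ i
  simp only [← cls_smul, ← map_sum]
  have : ∑ i, z i • s i = 0 := by
    apply Subtype.ext
    simpa [s] using hz
  rw [this, map_zero]

end Graded
section Count

lemma lin_count {K M V W : Type} [Field K] [AddCommGroup M] [Module K M] [AddCommGroup V]
    [Module K V] [AddCommGroup W] [Module K W] [Module.Finite K V]
    (φV : M →ₗ[K] V) (φW : M →ₗ[K] W) (hV : Function.Surjective φV) (hW : Function.Surjective φW)
    (a b : M) (hli : LinearIndependent K ![φV a, φV b]) (hVW : ∀ x, φV x = 0 → φW x = 0)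
    (ha : φW a = 0) (hb : φW b = 0)
    (hker : ∀ x, φW x = 0 → ∃ c d : K, φV x = c • φV a + d • φV b) :
    Module.finrank K W + 2 = Module.finrank K V := by
  let e := φV.quotKerEquivOfSurjective hV
  let ψ : V →ₗ[K] W := ((LinearMap.ker φV).liftQ φW (fun x hx => hVW x hx)).comp e.symm.toLinearMap
  have hψ : ∀ x, ψ (φV x) = φW x := by
    intro x
    have : e.symm (φV x) = Submodule.Quotient.mk x := by
      rw [LinearEquiv.symm_apply_eq]; rfl
    simp only [ψ, LinearMap.comp_apply, LinearEquiv.coe_coe, this]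
    exact Submodule.liftQ_apply _ _ _
  have hs : Function.Surjective ψ := by
    intro y
    obtain ⟨x, rfl⟩ := hW y
    exact ⟨φV x, hψ x⟩
  have hk : LinearMap.ker ψ = Submodule.span K (Set.range ![φV a, φV b]) := by
    apply le_antisymm
    · intro y hy
      obtain ⟨x, rfl⟩ := hV y
      rw [LinearMap.mem_ker, hψ] at hy
      obtain ⟨c, d, e⟩ := hker x hy
      rw [e]
      exact add_mem (Submodule.smul_mem _ _ (Submodule.subset_span ⟨0, rfl⟩))
        (Submodule.smul_mem _ _ (Submodule.subset_span ⟨1, rfl⟩))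
    · rw [Submodule.span_le]
      rintro _ ⟨i, rfl⟩
      fin_cases i
      · simp [hψ, ha]
      · simp [hψ, hb]
  have h1 := ψ.finrank_range_add_finrank_ker
  rw [LinearMap.range_eq_top.2 hs, finrank_top, hk, finrank_span_eq_card hli] at h1
  simpa using h1

variable {k : Type} [Field k] {n : ℕ}

def syz4 {A : Type} [CommRing A] (u f g h : A) : Submodule A (Fin 4 → A) where
  carrier := {q | u * q 0 + f * q 1 + g * q 2 + h * q 3 = 0}
  zero_mem' := by simp
  add_mem' {a b} ha hb := by
    simp only [Set.mem_ofPred_eq, Pi.add_apply] at *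
    linear_combination ha + hb
  smul_mem' c a ha := by
    simp only [Set.mem_ofPred_eq, Pi.smul_apply, smul_eq_mul] at *
    linear_combination c * ha

lemma mem_syz4 {A : Type} [CommRing A] {u f g h : A} (q : Fin 4 → A) :
    q ∈ syz4 u f g h ↔ u * q 0 + f * q 1 + g * q 2 + h * q 3 = 0 := Iff.rfl

def syzCoord {A : Type} [CommRing A] (u f g h : A) (i : Fin 4) (I : Ideal A)
    (hI : ∀ q ∈ syz4 u f g h, q i ∈ I) : syz4 u f g h →ₗ[A] I where
  toFun q := ⟨q.1 i, hI q.1 q.2⟩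
  map_add' _ _ := rfl
  map_smul' _ _ := rfl

theorem count (I I' : Ideal (MvPolynomial (Fin (n+1)) k)) (f g h u : MvPolynomial (Fin (n+1)) k)
    (hIu : ∀ a, a ∈ I ↔ a * u ∈ Ideal.span {f, g, h})
    (hI'h : ∀ a, a ∈ I' ↔ a * h ∈ Ideal.span {u, f, g})
    (H : Reg3 f g h) (H' : Reg3 u f g)
    (hf : f ∈ mIdeal k n * I') (hg : g ∈ mIdeal k n * I')
    (hfI : f ∈ I) (hgI : g ∈ I)
    (hli : LinearIndependent k ![cls I ⟨f, hfI⟩, cls I ⟨g, hgI⟩]) :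
    Module.finrank k (VI I') + 2 = Module.finrank k (VI I) := by
  have c0 : ∀ q ∈ syz4 u f g h, q 0 ∈ I := by
    intro q hq
    rw [mem_syz4] at hq
    rw [hIu, mem_span_triple]
    exact ⟨-q 1, -q 2, -q 3, by linear_combination hq⟩
  have c3 : ∀ q ∈ syz4 u f g h, q 3 ∈ I' := by
    intro q hq
    rw [mem_syz4] at hq
    rw [hI'h, mem_span_triple]
    exact ⟨-q 0, -q 1, -q 2, by linear_combination hq⟩
  have s0 : ∀ a ∈ I, ∃ q ∈ syz4 u f g h, q 0 = a := by
    intro a ha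
    rw [hIu, mem_span_triple] at ha
    obtain ⟨x, y, z, e⟩ := ha
    exact ⟨![a, -x, -y, -z], by rw [mem_syz4]; simp; linear_combination e, rfl⟩
  have s3 : ∀ a ∈ I', ∃ q ∈ syz4 u f g h, q 3 = a := by
    intro a ha
    rw [hI'h, mem_span_triple] at ha
    obtain ⟨x, y, z, e⟩ := ha
    exact ⟨![-x, -y, -z, a], by rw [mem_syz4]; simp; linear_combination e, rfl⟩
  have t0 : ∀ a ∈ mIdeal k n * I, ∃ q ∈ syz4 u f g h, q 0 = a ∧ q 3 ∈ mIdeal k n * I' := by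
    intro a ha
    induction ha using Submodule.mul_induction_on' with
    | mem_mul_mem m hm y hy =>
      obtain ⟨q, hq, rfl⟩ := s0 y hy
      exact ⟨m • q, Submodule.smul_mem _ _ hq, rfl, Ideal.mul_mem_mul hm (c3 q hq)⟩
    | add x _ y _ hx hy =>
      obtain ⟨q, hq, rfl, h1⟩ := hx
      obtain ⟨q', hq', rfl, h2⟩ := hy
      exact ⟨q + q', add_mem hq hq', rfl, add_mem h1 h2⟩
  have t3 : ∀ a ∈ mIdeal k n * I', ∃ q ∈ syz4 u f g h, q 3 = a ∧ q 0 ∈ mIdeal k n * I := by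
    intro a ha
    induction ha using Submodule.mul_induction_on' with
    | mem_mul_mem m hm y hy =>
      obtain ⟨q, hq, rfl⟩ := s3 y hy
      exact ⟨m • q, Submodule.smul_mem _ _ hq, rfl, Ideal.mul_mem_mul hm (c0 q hq)⟩
    | add x _ y _ hx hy =>
      obtain ⟨q, hq, rfl, h1⟩ := hx
      obtain ⟨q', hq', rfl, h2⟩ := hy
      exact ⟨q + q', add_mem hq hq', rfl, add_mem h1 h2⟩
  let φV : syz4 u f g h →ₗ[k] VI I := (cls I).comp ((syzCoord u f g h 0 I c0).restrictScalars k)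
  let φW : syz4 u f g h →ₗ[k] VI I' := (cls I').comp ((syzCoord u f g h 3 I' c3).restrictScalars k)
  have eV : ∀ q, φV q = cls I ⟨q.1 0, c0 q.1 q.2⟩ := fun q => rfl
  have eW : ∀ q, φW q = cls I' ⟨q.1 3, c3 q.1 q.2⟩ := fun q => rfl
  have m1 : (![f, -u, 0, 0] : Fin 4 → MvPolynomial (Fin (n+1)) k) ∈ syz4 u f g h := by
    rw [mem_syz4]; simp; ring
  have m2 : (![g, 0, -u, 0] : Fin 4 → MvPolynomial (Fin (n+1)) k) ∈ syz4 u f g h := by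
    rw [mem_syz4]; simp; ring
  refine lin_count φV φW ?_ ?_ ⟨_, m1⟩ ⟨_, m2⟩ hli ?_ ?_ ?_ ?_
  · intro y
    obtain ⟨⟨a, ha⟩, rfl⟩ := cls_surjective I y
    obtain ⟨q, hq, rfl⟩ := s0 a ha
    exact ⟨⟨q, hq⟩, rfl⟩
  · intro y
    obtain ⟨⟨a, ha⟩, rfl⟩ := cls_surjective I' y
    obtain ⟨q, hq, rfl⟩ := s3 a ha
    exact ⟨⟨q, hq⟩, rfl⟩
  · rintro ⟨q, hq⟩ hx
    rw [eV, cls_eq_zero] at hx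
    rw [eW, cls_eq_zero]
    obtain ⟨q', hq', h1, h2⟩ := t0 _ hx
    have h3 := (mem_syz4 _).1 (sub_mem hq hq')
    simp only [Pi.sub_apply, h1, sub_self, mul_zero, zero_add] at h3
    obtain ⟨s1, s2, s3, -, -, h4⟩ := H.K _ _ _ h3
    have h5 : q 3 = q' 3 + (s1 * g - s2 * f) := by linear_combination h4
    show q 3 ∈ _
    rw [h5]
    exact add_mem h2 (sub_mem (Ideal.mul_mem_left _ _ hg) (Ideal.mul_mem_left _ _ hf))
  · rw [eW, cls_eq_zero]; exact zero_mem _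
  · rw [eW, cls_eq_zero]; exact zero_mem _
  · rintro ⟨q, hq⟩ hx
    rw [eW, cls_eq_zero] at hx
    obtain ⟨q', hq', h1, h2⟩ := t3 _ hx
    have h3 := (mem_syz4 _).1 (sub_mem hq hq')
    simp only [Pi.sub_apply, h1, sub_self, mul_zero, add_zero] at h3
    obtain ⟨s1, s2, s3, h4, -, -⟩ := H'.K _ _ _ h3
    refine ⟨constantCoeff (-s3), constantCoeff s2, ?_⟩
    rw [eV, eV, eV, ← cls_smul, ← cls_smul, ← map_add, ← sub_eq_zero, ← map_sub, cls_eq_zero]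
    have h5 : q 0 - (-s3 * f + s2 * g) = q' 0 := by linear_combination h4
    show q 0 - (-s3 * f + s2 * g) ∈ _
    rw [h5]
    exact h2

lemma colon_hom (f g h u : MvPolynomial (Fin (n+1)) k) (I' : Ideal (MvPolynomial (Fin (n+1)) k))
    (hI'h : ∀ a, a ∈ I' ↔ a * h ∈ Ideal.span {u, f, g})
    (hf : ∃ d, IsHomogeneous f d) (hg : ∃ d, IsHomogeneous g d) (hh : ∃ d, IsHomogeneous h d)
    (hu : ∃ d, IsHomogeneous u d) : HomI I' := by
  intro x hx d
  obtain ⟨e, he⟩ := hh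
  have h0 : HomI (Ideal.span {u, f, g}) := by
    apply homI_of_span
    rintro x (rfl | rfl | rfl) <;> assumption
  rw [hI'h] at hx ⊢
  have := h0 _ hx (e + d)
  rwa [mul_comm x, hc_mul he, mul_comm] at this

lemma finrank_top_le : Module.finrank k (VI (⊤ : Ideal (MvPolynomial (Fin (n+1)) k))) ≤ 1 := by
  refine (finrank_le_card {1} ?_).trans (by simp)
  simp

end Count
section HomAlg
open Abelian
variable {A : Type} [CommRing A]

lemma ext_theta (rs : List A) (Y : Type) [AddCommGroup Y] [Module A Y]
    (hrs : RingTheory.Sequence.IsWeaklyRegular Y rs) :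
    ∃ θ : Ext (ModuleCat.of A (Y ⧸ (Ideal.ofList rs • ⊤ : Submodule A Y))) (ModuleCat.of A Y)
        rs.length,
      ∀ (M : ModuleCat.{0} A), (∀ r ∈ rs, ∀ m : M, r • m = 0) →
        ∀ e : Ext M (ModuleCat.of A Y) rs.length,
          ∃ φ : M ⟶ ModuleCat.of A (Y ⧸ (Ideal.ofList rs • ⊤ : Submodule A Y)),
            e = (Ext.mk₀ φ).comp θ (zero_add _) := by
  induction rs generalizing Y with
  | nil =>
    obtain ⟨i⟩ : Nonempty (ModuleCat.of A (Y ⧸ (Ideal.ofList ([] : List A) • ⊤ : Submodule A Y)) ≅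
        ModuleCat.of A Y) := ⟨(Submodule.quotEquivOfEqBot _
          (by rw [Ideal.ofList_nil, Submodule.bot_smul])).toModuleIso⟩
    refine ⟨Ext.mk₀ i.hom, fun M _ e => ?_⟩
    obtain ⟨ψ, rfl⟩ := (Ext.mk₀_bijective M (ModuleCat.of A Y)).2 e
    refine ⟨ψ ≫ i.inv, ?_⟩
    refine Eq.trans ?_ (Ext.mk₀_comp_mk₀ _ _).symm
    simp
  | cons r rs ih =>
    rw [RingTheory.Sequence.isWeaklyRegular_cons_iff] at hrs
    have hS := IsSMulRegular.smulShortComplex_shortExact (M := ModuleCat.of A Y) hrs.1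
    obtain ⟨θ', hθ'⟩ := ih _ hrs.2
    let i := (Submodule.quotOfListConsSMulTopEquivQuotSMulTopInner Y r rs).toModuleIso
    refine ⟨(Ext.mk₀ i.hom).comp (θ'.comp hS.extClass rfl) (zero_add _), fun M hM e => ?_⟩
    have h0 : e.comp (Ext.mk₀ (ModuleCat.smulShortComplex (ModuleCat.of A Y) r).f) (add_zero _) = 0 := by
      refine (ext_smul_id' r e).trans ?_
      rw [← ext_smul_id r e]
      have : r • 𝟙 M = 0 := by ext m; exact hM r (by simp) m
      rw [this, Ext.mk₀_zero, Ext.zero_comp]; rfl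
    obtain ⟨e', he'⟩ := Ext.covariant_sequence_exact₁ M hS e h0 (n₀ := rs.length) rfl
    obtain ⟨φ', hφ'⟩ := hθ' M (fun s hs m => hM s (by simp [hs]) m) e'
    refine ⟨φ' ≫ i.inv, ?_⟩
    refine Eq.trans ?_ (Ext.mk₀_comp_mk₀_assoc _ _ _).symm
    rw [Category.assoc, Iso.inv_hom_id, Category.comp_id, ← he', hφ']
    exact Ext.comp_assoc _ _ _ _ _ (by simp)

/-- vanishing shift -/
lemma ext_vanish_quot (rs : List A) (Y : Type) [AddCommGroup Y] [Module A Y]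
    (hrs : RingTheory.Sequence.IsWeaklyRegular Y rs) (M : ModuleCat.{0} A) (j : ℕ)
    (h : ∀ i ≤ j + rs.length, Subsingleton (Ext M (ModuleCat.of A Y) i)) :
    ∀ i ≤ j, Subsingleton
      (Ext M (ModuleCat.of A (Y ⧸ (Ideal.ofList rs • ⊤ : Submodule A Y))) i) := by
  induction rs generalizing Y with
  | nil =>
    intro i hi
    obtain ⟨e⟩ : Nonempty (ModuleCat.of A (Y ⧸ (Ideal.ofList ([] : List A) • ⊤ : Submodule A Y)) ≅
        ModuleCat.of A Y) := ⟨(Submodule.quotEquivOfEqBot _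
          (by rw [Ideal.ofList_nil, Submodule.bot_smul])).toModuleIso⟩
    have := h i (by simpa using hi)
    refine subsingleton_of_forall_eq 0 fun x => ?_
    have h1 : x.comp (Ext.mk₀ e.hom) (add_zero i) = 0 := Subsingleton.elim _ _
    have h2 : (x.comp (Ext.mk₀ e.hom) (add_zero i)).comp
        (Ext.mk₀ e.inv) (add_zero i) = x := by
      rw [Ext.comp_assoc_of_third_deg_zero, Ext.mk₀_comp_mk₀]; simp
    rw [← h2, h1]; simp
  | cons r rs ih =>
    rw [RingTheory.Sequence.isWeaklyRegular_cons_iff] at hrs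
    have hS := IsSMulRegular.smulShortComplex_shortExact (M := ModuleCat.of A Y) hrs.1
    intro i hi
    have key := ih _ hrs.2 (fun i hi => by
      refine subsingleton_of_forall_eq 0 fun x => ?_
      have s1 := h (i+1) (by simp; omega)
      have s2 := h i (by simp; omega)
      obtain ⟨y, hy⟩ := Ext.covariant_sequence_exact₃ M hS x (n₁ := i+1) rfl
        (@Subsingleton.elim _ s1 _ _)
      have y0 : y = 0 := @Subsingleton.elim _ s2 y 0
      subst y0
      exact hy.symm.trans (Ext.zero_comp ..)) i hi
    have e := (Submodule.quotOfListConsSMulTopEquivQuotSMulTopInner Y r rs).toModuleIso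
    refine subsingleton_of_forall_eq 0 fun x => ?_
    have h1 : x.comp (Ext.mk₀ e.hom) (add_zero i) = 0 := Subsingleton.elim _ _
    have h2 : (x.comp (Ext.mk₀ e.hom) (add_zero i)).comp
        (Ext.mk₀ e.inv) (add_zero i) = x := by
      rw [Ext.comp_assoc_of_third_deg_zero, Ext.mk₀_comp_mk₀]; simp
    rw [← h2, h1]; simp

lemma ofList_triple (x y z : A) :
    (Ideal.ofList [x, y, z] • ⊤ : Submodule A A) = Ideal.span {x, y, z} := by
  rw [smul_eq_mul, Ideal.mul_top, Ideal.ofList]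
  congr 1
  ext a; simp

def tripleIso (x y z : A) :
    ModuleCat.of A (A ⧸ (Ideal.ofList [x, y, z] • ⊤ : Submodule A A)) ≅
      ModuleCat.of A (A ⧸ Ideal.span {x, y, z}) :=
  (Submodule.quotEquivOfEq _ _ (ofList_triple x y z)).toModuleIso

/-- multiplication by `x` from `A/I` to `A/K`. -/
def mulMap (K I : Ideal A) (x : A) (hI : ∀ a, a ∈ I → a * x ∈ K) : (A ⧸ I) →ₗ[A] (A ⧸ K) :=
  Submodule.mapQ I K (LinearMap.mulRight A x) (fun a ha => hI a ha)

lemma mulMap_mk (K I : Ideal A) (x : A) (hI : ∀ a, a ∈ I → a * x ∈ K) (a : A) :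
    mulMap K I x hI (Submodule.Quotient.mk a) = Submodule.Quotient.mk (a * x) := rfl

lemma hom_eq_mulMap (K I : Ideal A) (φ : (A ⧸ I) →ₗ[A] (A ⧸ K)) :
    ∃ c : A, (∀ a ∈ I, a * c ∈ K) ∧ ∀ a, φ (Submodule.Quotient.mk a) = Submodule.Quotient.mk (a * c) := by
  obtain ⟨c, hc⟩ := Submodule.Quotient.mk_surjective _ (φ (Submodule.Quotient.mk 1))
  have h1 : ∀ a, φ (Submodule.Quotient.mk a) = Submodule.Quotient.mk (a * c) := by
    intro a
    have : (Submodule.Quotient.mk a : A ⧸ I) = a • Submodule.Quotient.mk 1 := by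
      rw [← Submodule.Quotient.mk_smul, smul_eq_mul, mul_one]
    rw [this, map_smul, ← hc, ← Submodule.Quotient.mk_smul, smul_eq_mul]
  refine ⟨c, fun a ha => ?_, h1⟩
  rw [← Submodule.Quotient.mk_eq_zero K, ← h1, (Submodule.Quotient.mk_eq_zero I).2 ha, map_zero]

def sesComplex (K I J : Ideal A) (x : A) (hI : ∀ a, a ∈ I ↔ a * x ∈ K)
    (hJ : ∀ a, a ∈ J ↔ ∃ c, a - c * x ∈ K) : ShortComplex (ModuleCat.{0} A) :=
  ShortComplex.mk (X₁ := ModuleCat.of A (A ⧸ I)) (X₂ := ModuleCat.of A (A ⧸ K))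
    (X₃ := ModuleCat.of A (A ⧸ J))
    (ModuleCat.ofHom (mulMap K I x fun a => (hI a).1))
    (ModuleCat.ofHom (Submodule.mapQ K J LinearMap.id
      (fun a ha => (hJ a).2 ⟨0, by simpa using ha⟩))) (by
    refine ModuleCat.hom_ext (LinearMap.ext fun a => ?_)
    obtain ⟨a, rfl⟩ := Submodule.Quotient.mk_surjective _ a
    exact (Submodule.Quotient.mk_eq_zero J).2 ((hJ _).2 ⟨a, by simp⟩))

lemma ses_shortExact (K I J : Ideal A) (x : A) (hI : ∀ a, a ∈ I ↔ a * x ∈ K)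
    (hJ : ∀ a, a ∈ J ↔ ∃ c, a - c * x ∈ K) : (sesComplex K I J x hI hJ).ShortExact := by
  refine ModuleCat.shortComplex_shortExact _ ?_ ?_ ?_
  · intro y
    obtain ⟨y, rfl⟩ := Submodule.Quotient.mk_surjective _ y
    constructor
    · intro hy
      obtain ⟨c, hc⟩ := (hJ y).1 ((Submodule.Quotient.mk_eq_zero J).1 hy)
      refine ⟨Submodule.Quotient.mk c, ?_⟩
      refine (Submodule.Quotient.eq K).2 ?_
      have := neg_mem hc
      rwa [neg_sub] at this
    · rintro ⟨c, hc⟩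
      obtain ⟨c, rfl⟩ := Submodule.Quotient.mk_surjective _ c
      refine (Submodule.Quotient.mk_eq_zero J).2 ((hJ y).2 ⟨c, ?_⟩)
      have := neg_mem ((Submodule.Quotient.eq K).1 hc)
      rwa [neg_sub] at this
  · refine (injective_iff_map_eq_zero (mulMap K I x fun a => (hI a).1)).2 fun a ha => ?_
    obtain ⟨a, rfl⟩ := Submodule.Quotient.mk_surjective _ a
    exact (Submodule.Quotient.mk_eq_zero I).2 ((hI a).2 ((Submodule.Quotient.mk_eq_zero K).1 ha))
  · intro y
    obtain ⟨y, rfl⟩ := Submodule.Quotient.mk_surjective _ y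
    exact ⟨Submodule.Quotient.mk y, rfl⟩


lemma ext_theta3 (x y z : A) (hrs : RingTheory.Sequence.IsWeaklyRegular A [x, y, z]) :
    ∃ θ : Ext (ModuleCat.of A (A ⧸ Ideal.span {x, y, z})) (ModuleCat.of A A) 3,
      ∀ (M : ModuleCat.{0} A), (∀ r ∈ [x, y, z], ∀ m : M, r • m = 0) →
        ∀ e : Ext M (ModuleCat.of A A) 3,
          ∃ φ : M ⟶ ModuleCat.of A (A ⧸ Ideal.span {x, y, z}),
            e = (Ext.mk₀ φ).comp θ (zero_add _) := by
  obtain ⟨θ, hθ⟩ := ext_theta [x, y, z] A hrs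
  have i := tripleIso x y z
  refine ⟨(Ext.mk₀ i.inv).comp θ (zero_add _), fun M hM e => ?_⟩
  obtain ⟨φ, hφ⟩ := hθ M hM e
  refine ⟨φ ≫ i.hom, hφ.trans ?_⟩
  refine Eq.trans ?_ (Ext.mk₀_comp_mk₀_assoc _ _ _).symm
  rw [Category.assoc, Iso.hom_inv_id, Category.comp_id]

end HomAlg
section Gor
open Abelian
variable {A : Type} [CommRing A]

lemma pd_triple (x y z : A) (hrs : RingTheory.Sequence.IsWeaklyRegular A [x, y, z]) :
    HasProjectiveDimensionLT (ModuleCat.of A (A ⧸ Ideal.span {x, y, z})) 4 := by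
  have hM : HasProjectiveDimensionLT (ModuleCat.of A A) 1 := by
    have : Projective (ModuleCat.of A A) := (IsProjective.iff_projective A).1 inferInstance
    exact projective_iff_hasProjectiveDimensionLT_one.1 this
  have := pd_quotient A [x, y, z] A hrs 1 hM
  exact hasProjectiveDimensionLT_of_iso (tripleIso x y z) 4

lemma quot_kill (I : Ideal A) (r : A) (hr : r ∈ I) (m : A ⧸ I) : r • m = 0 := by
  obtain ⟨m, rfl⟩ := Submodule.Quotient.mk_surjective _ m
  exact (Submodule.Quotient.mk_eq_zero I).2 (I.mul_mem_right _ hr)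

/-- every class in `Ext³(A/I, A)` comes from `Ext³(A/K, A)` along multiplication by `u`. -/
lemma ext3_factor (f g h u : A) (I : Ideal A)
    (hrs : RingTheory.Sequence.IsWeaklyRegular A [f, g, h])
    (hf : f ∈ I) (hg : g ∈ I) (hh : h ∈ I)
    (hI : ∀ a, a ∈ I → a * u ∈ Ideal.span {f, g, h})
    (hJ : ∀ c, (∀ a ∈ I, a * c ∈ Ideal.span {f, g, h}) → ∃ r, c - r * u ∈ Ideal.span {f, g, h}) :
    ∃ θ : Ext (ModuleCat.of A (A ⧸ Ideal.span {f, g, h})) (ModuleCat.of A A) 3,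
      ∀ e : Ext (ModuleCat.of A (A ⧸ I)) (ModuleCat.of A A) 3, ∃ r : A,
        e = r • (Ext.mk₀ (ModuleCat.ofHom (mulMap (Ideal.span {f, g, h}) I u hI))).comp θ
          (zero_add _) := by
  obtain ⟨θ, hθ⟩ := ext_theta3 f g h hrs
  refine ⟨θ, fun e => ?_⟩
  obtain ⟨φ, hφ⟩ := hθ (ModuleCat.of A (A ⧸ I)) (by
    intro r hr m
    refine quot_kill I r ?_ m
    simp only [List.mem_cons, List.not_mem_nil, or_false] at hr
    rcases hr with rfl | rfl | rfl <;> assumption) e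
  obtain ⟨c, hc, hcφ⟩ := hom_eq_mulMap _ _ φ.hom
  obtain ⟨r, hr⟩ := hJ c hc
  refine ⟨r, ?_⟩
  have : φ = r • ModuleCat.ofHom (mulMap (Ideal.span {f, g, h}) I u hI) := by
    refine ModuleCat.hom_ext (LinearMap.ext fun a => ?_)
    obtain ⟨a, rfl⟩ := Submodule.Quotient.mk_surjective _ a
    refine (hcφ a).trans ?_
    refine (Submodule.Quotient.eq _).2 ?_
    have := Ideal.mul_mem_left _ a hr
    convert this using 1
    simp only [LinearMap.mulRight_apply, smul_eq_mul]
    ring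
  rw [hφ, this, Ext.mk₀_smul, Ext.smul_comp]

/-- Ext⁴(A/J, A) = 0 and pd A/J < 5 -/
lemma ext4_vanish (f g h u : A) (I J : Ideal A)
    (hrs : RingTheory.Sequence.IsWeaklyRegular A [f, g, h])
    (hf : f ∈ I) (hg : g ∈ I) (hh : h ∈ I)
    (hI : ∀ a, a ∈ I ↔ a * u ∈ Ideal.span {f, g, h})
    (hJ : ∀ c, c ∈ J ↔ ∃ r, c - r * u ∈ Ideal.span {f, g, h})
    (hc : ∀ c, (∀ a ∈ I, a * c ∈ Ideal.span {f, g, h}) → c ∈ J)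
    (hpd : HasProjectiveDimensionLT (ModuleCat.of A (A ⧸ I)) 4) :
    HasProjectiveDimensionLT (ModuleCat.of A (A ⧸ J)) 5 ∧
    Subsingleton (Ext (ModuleCat.of A (A ⧸ J)) (ModuleCat.of A A) 4) := by
  have hS := ses_shortExact _ I J u hI hJ
  have hK := pd_triple f g h hrs
  have hK5 : HasProjectiveDimensionLT (ModuleCat.of A (A ⧸ Ideal.span {f, g, h})) 5 :=
    hasProjectiveDimensionLT_of_ge _ 4 5 (by norm_num)
  refine ⟨hS.hasProjectiveDimensionLT_X₃ 4 hpd hK5, ?_⟩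
  obtain ⟨θ, hθ⟩ := ext3_factor f g h u I hrs hf hg hh (fun a => (hI a).1)
    (fun c h => (hJ c).1 (hc c h))
  refine subsingleton_of_forall_eq 0 fun x => ?_
  have s4 : Subsingleton (Ext (ModuleCat.of A (A ⧸ Ideal.span {f, g, h})) (ModuleCat.of A A) 4) :=
    HasProjectiveDimensionLT.subsingleton _ 4 4 le_rfl _
  obtain ⟨e, he⟩ := Ext.contravariant_sequence_exact₃ hS (ModuleCat.of A A) (n₀ := 3) (n₁ := 4) x
    (@Subsingleton.elim _ s4 _ _) rfl
  obtain ⟨r, hr⟩ := hθ e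
  have hz : hS.extClass.comp e rfl = 0 := by
    subst hr
    refine (Ext.comp_smul ..).trans ?_
    have : hS.extClass.comp ((Ext.mk₀ (sesComplex _ I J u hI hJ).f).comp θ (zero_add _)) rfl
       = (0 : Ext _ _ 4) := by
      refine Eq.trans (Ext.comp_assoc_of_second_deg_zero ..).symm ?_
      refine Eq.trans (congrArg (fun z => Ext.comp z θ rfl) hS.extClass_comp) ?_
      exact Ext.zero_comp ..
    exact (congrArg (fun z => r • z) this).trans (smul_zero r)
  exact he.symm.trans hz

lemma gor_transfer (f g h u : A) (I' J : Ideal A)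
    (hrs' : RingTheory.Sequence.IsWeaklyRegular A [u, f, g])
    (hI : ∀ a, a ∈ I' ↔ a * h ∈ Ideal.span {u, f, g})
    (hJ : ∀ c, c ∈ J ↔ ∃ r, c - r * h ∈ Ideal.span {u, f, g})
    (h5 : HasProjectiveDimensionLT (ModuleCat.of A (A ⧸ J)) 5)
    (h4 : Subsingleton (Ext (ModuleCat.of A (A ⧸ J)) (ModuleCat.of A A) 4)) :
    HasProjectiveDimensionLT (ModuleCat.of A (A ⧸ I')) 4 ∧
    ∃ a : Ext (ModuleCat.of A (A ⧸ I')) (ModuleCat.of A A) 3, ∀ b, ∃ r : A, b = r • a := by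
  have hS := ses_shortExact _ I' J h hI hJ
  have hK := pd_triple u f g hrs'
  refine ⟨hS.hasProjectiveDimensionLT_X₁ 4 hK h5, ?_⟩
  obtain ⟨θ, hθ⟩ := ext_theta3 u f g hrs'
  refine ⟨(Ext.mk₀ (sesComplex _ I' J h hI hJ).f).comp θ (zero_add _), fun b => ?_⟩
  obtain ⟨x, hx⟩ := Ext.contravariant_sequence_exact₁ hS (ModuleCat.of A A) (n₀ := 3) (n₁ := 4) b
    rfl (@Subsingleton.elim _ h4 _ _)
  obtain ⟨φ, hφ⟩ := hθ (ModuleCat.of A (A ⧸ Ideal.span {u, f, g})) (by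
    intro r hr m
    refine quot_kill _ r ?_ m
    refine Ideal.subset_span ?_
    simpa using hr) x
  obtain ⟨c, hc, hcφ⟩ := hom_eq_mulMap _ _ φ.hom
  refine ⟨c, ?_⟩
  have : φ = c • 𝟙 _ := by
    refine ModuleCat.hom_ext (LinearMap.ext fun a => ?_)
    obtain ⟨a, rfl⟩ := Submodule.Quotient.mk_surjective _ a
    refine (hcφ a).trans ?_
    rw [mul_comm]; rfl
  subst this
  have hx2 : x = c • θ := by
    rw [hφ, Ext.mk₀_smul, Ext.smul_comp, Ext.mk₀_id_comp]
  subst hx2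
  exact hx.symm.trans (Ext.comp_smul ..)

end Gor
section Final
open Abelian

lemma height_of_regular {A : Type} [CommRing A] [IsNoetherianRing A] (rs : List A)
    (hrs : RingTheory.Sequence.IsWeaklyRegular A rs) (p : PrimeSpectrum A)
    (hp : ∀ r ∈ rs, r ∈ p.asIdeal) : (rs.length : ℕ∞) ≤ Order.height p := by
  have h1 := hrs.isRegular_of_isLocalization_of_mem (Localization.AtPrime p.asIdeal) p.asIdeal hp
  have h2 := ringKrullDim_add_length_eq_ringKrullDim_of_isRegular _ h1
  rw [IsLocalization.AtPrime.ringKrullDim_eq_height p.asIdeal (Localization.AtPrime p.asIdeal), List.length_map] at h2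
  have h3 : (0 : WithBot ℕ∞) ≤ ringKrullDim (Localization.AtPrime p.asIdeal ⧸
      Ideal.ofList (rs.map (algebraMap A (Localization.AtPrime p.asIdeal)))) := by
    have : Nontrivial (Localization.AtPrime p.asIdeal ⧸
      Ideal.ofList (rs.map (algebraMap A (Localization.AtPrime p.asIdeal)))) := by
      apply Ideal.Quotient.nontrivial_iff.2
      intro h
      exact h1.2 (by rw [h, smul_eq_mul, Ideal.mul_top])
    exact ringKrullDim_nonneg_of_nontrivial
  rw [← PrimeSpectrum.height_eq_orderHeight]
  have h4 : (rs.length : WithBot ℕ∞) ≤ (p.asIdeal.height : WithBot ℕ∞) := by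
    rw [← h2]
    exact le_add_of_nonneg_left h3
  exact_mod_cast h4

variable {k : Type} [Field k] {n : ℕ}

lemma height_three (I' : Ideal (MvPolynomial (Fin (n+1)) k)) (f g h u : MvPolynomial (Fin (n+1)) k)
    (hrs : RingTheory.Sequence.IsWeaklyRegular (MvPolynomial (Fin (n+1)) k) [u, f, g])
    (hI'h : ∀ a, a ∈ I' ↔ a * h ∈ Ideal.span {u, f, g}) (hne : I' ≠ ⊤) :
    (∀ p : PrimeSpectrum (MvPolynomial (Fin (n+1)) k), I' ≤ p.asIdeal →
      ((3 : ℕ) : ℕ∞) ≤ Order.height p) ∧ idealHeight I' = 3 := by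
  have h3 : ∀ p : PrimeSpectrum (MvPolynomial (Fin (n+1)) k), I' ≤ p.asIdeal →
      ((3 : ℕ) : ℕ∞) ≤ Order.height p := by
    intro p hp
    refine height_of_regular [u, f, g] hrs p fun r hr => hp ((hI'h r).2 ?_)
    refine Ideal.mul_mem_right _ _ (Ideal.subset_span ?_)
    simpa using hr
  refine ⟨h3, le_antisymm ?_ (le_iInf₂ h3)⟩
  by_contra hcon
  have h4 : ∀ p : PrimeSpectrum (MvPolynomial (Fin (n+1)) k), I' ≤ p.asIdeal →
      ((4 : ℕ) : ℕ∞) ≤ Order.height p := by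
    intro p hp
    have h1 : idealHeight I' ≤ Order.height p := iInf₂_le p hp
    have h2 : ((3 : ℕ) : ℕ∞) < Order.height p := lt_of_lt_of_le (not_le.1 hcon) h1
    have := Order.add_one_le_of_lt h2
    exact_mod_cast this
  have h5 := ext_vanish_quot [u, f, g] (MvPolynomial (Fin (n+1)) k) hrs
    (ModuleCat.of (MvPolynomial (Fin (n+1)) k) (MvPolynomial (Fin (n+1)) k ⧸ I')) 0
    (fun i hi => ext_vanish_of_height I' 4 h4 i (by simp at hi; omega)) 0 le_rfl
  have h6 : ∀ φ : ModuleCat.of (MvPolynomial (Fin (n+1)) k) (MvPolynomial (Fin (n+1)) k ⧸ I') ⟶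
      ModuleCat.of (MvPolynomial (Fin (n+1)) k) (MvPolynomial (Fin (n+1)) k ⧸
        (Ideal.ofList [u, f, g] • ⊤ : Submodule (MvPolynomial (Fin (n+1)) k) (MvPolynomial (Fin (n+1)) k))), φ = 0 :=
    fun φ => (Ext.mk₀_bijective _ _).1 (Subsingleton.elim _ _)
  have h7 := h6 (ModuleCat.ofHom (mulMap (Ideal.span {u, f, g}) I' h fun a => (hI'h a).1) ≫
    (tripleIso u f g).inv)
  have h8 : ModuleCat.ofHom (mulMap (Ideal.span {u, f, g}) I' h fun a => (hI'h a).1) = 0 := by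
    have := congrArg (fun z => z ≫ (tripleIso u f g).hom) h7
    simpa using this
  have h9 : mulMap (Ideal.span {u, f, g}) I' h (fun a => (hI'h a).1) (Submodule.Quotient.mk 1) = 0 :=
    congrArg (fun z => z.hom (Submodule.Quotient.mk 1)) h8
  exact hne ((Ideal.eq_top_iff_one _).2 ((hI'h 1).2 ((Submodule.Quotient.mk_eq_zero _).1 h9)))

lemma pd_of_gor (I : Ideal (MvPolynomial (Fin (n+1)) k)) (hGor : IsArithGorHt3 I) :
    HasProjectiveDimensionLT (ModuleCat.of (MvPolynomial (Fin (n+1)) k)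
      (MvPolynomial (Fin (n+1)) k ⧸ I)) 4 := by
  refine pd_descend _ 3 fun i hi => ?_
  obtain ⟨j, rfl⟩ : ∃ j, i = j + 1 := ⟨i - 1, by omega⟩
  exact bridge_char' _ _ j (ProjectiveResolution.of _) (hGor.2.2.2.1 (j+1) (by omega))

lemma gor_of (I' : Ideal (MvPolynomial (Fin (n+1)) k)) (f g h u : MvPolynomial (Fin (n+1)) k)
    (hrs : RingTheory.Sequence.IsWeaklyRegular (MvPolynomial (Fin (n+1)) k) [u, f, g])
    (hI'h : ∀ a, a ∈ I' ↔ a * h ∈ Ideal.span {u, f, g}) (hne : I' ≠ ⊤) (hH : HomI I')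
    (hpd : HasProjectiveDimensionLT (ModuleCat.of (MvPolynomial (Fin (n+1)) k)
      (MvPolynomial (Fin (n+1)) k ⧸ I')) 4)
    (hcyc : ∃ a : Ext (ModuleCat.of (MvPolynomial (Fin (n+1)) k)
      (MvPolynomial (Fin (n+1)) k ⧸ I'))
      (ModuleCat.of (MvPolynomial (Fin (n+1)) k) (MvPolynomial (Fin (n+1)) k)) 3,
      ∀ b, ∃ r : MvPolynomial (Fin (n+1)) k, b = r • a) : IsArithGorHt3 I' := by
  obtain ⟨h3, hh⟩ := height_three I' f g h u hrs hI'h hne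
  obtain ⟨a, ha⟩ := hcyc
  refine ⟨hne, hH.isHomogeneousIdeal, hh, fun i hi => ?_, ?_⟩
  · rcases i with _ | j
    · have := ext_vanish_of_height I' 3 h3 0 (by norm_num)
      exact bridge_zero _ _ (ProjectiveResolution.of _)
        fun φ => (Ext.mk₀_bijective _ _).1 (Subsingleton.elim _ _)
    · refine bridge_char _ _ j (ProjectiveResolution.of _) ?_
      rcases lt_or_gt_of_ne hi with h | h
      · exact ext_vanish_of_height I' 3 h3 (j+1) h
      · exact HasProjectiveDimensionLT.subsingleton _ 4 (j+1) h _
  · exact bridge_cyclic _ _ 2 (ProjectiveResolution.of _) a ha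

end Final
section Main
variable {k : Type} [Field k] {n : ℕ}

lemma pos_deg {I : Ideal (MvPolynomial (Fin (n+1)) k)} (hI : I ≠ ⊤)
    {x : MvPolynomial (Fin (n+1)) k} (hx : x ∈ I) (hh : ∃ d, MvPolynomial.IsHomogeneous x d) :
    ∃ d, 0 < d ∧ MvPolynomial.IsHomogeneous x d := by
  obtain ⟨d, hd⟩ := hh
  rcases Nat.eq_zero_or_pos d with rfl | h
  · have h0 : x = C (coeff 0 x) :=
      MvPolynomial.totalDegree_eq_zero_iff_eq_C.1 (Nat.le_zero.1 hd.totalDegree_le)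
    by_cases hc : coeff 0 x = 0
    · rw [hc, map_zero] at h0
      exact ⟨1, one_pos, h0 ▸ isHomogeneous_zero _ _ _⟩
    · exact absurd (Ideal.eq_top_of_isUnit_mem I hx (h0 ▸ (IsUnit.mk0 _ hc).map C)) hI
  · exact ⟨d, h, hd⟩

end Main

/-- Watanabe's Lemma, second part: if moreover `u, f, g` is a regular sequence, then
`(u,f,g) : (f,g,h,u)` is an arithmetically Gorenstein homogeneous ideal of height three
with two fewer minimal generators than `I`. -/
theorem stmt_4 (I : Ideal (MvPolynomial (Fin (n+1)) k))
    (hGor : IsArithGorHt3 I) (hnotCI : ¬ IsCI I)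
    (f g h u : MvPolynomial (Fin (n+1)) k)
    (hfI : f ∈ I) (hgI : g ∈ I) (hhI : h ∈ I)
    (hfhom : ∃ d, MvPolynomial.IsHomogeneous f d)
    (hghom : ∃ d, MvPolynomial.IsHomogeneous g d)
    (hhhom : ∃ d, MvPolynomial.IsHomogeneous h d)
    (huhom : ∃ d, MvPolynomial.IsHomogeneous u d)
    (hreg : RingTheory.Sequence.IsRegular (MvPolynomial (Fin (n+1)) k) [f, g, h])
    (hext : ∃ S : Finset (MvPolynomial (Fin (n+1)) k), f ∈ S ∧ g ∈ S ∧ h ∈ S ∧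
      Ideal.span (S : Set (MvPolynomial (Fin (n+1)) k)) = I ∧ S.card = mu I)
    (hu : (Ideal.span {f, g, h}).colon I = Ideal.span {f, g, h, u})
    (hreg' : RingTheory.Sequence.IsRegular (MvPolynomial (Fin (n+1)) k) [u, f, g])
    (I' : Ideal (MvPolynomial (Fin (n+1)) k))
    (hI' : I' = (Ideal.span {u, f, g}).colon (Ideal.span {f, g, h, u})) :
    IsArithGorHt3 I' ∧ mu I' + 2 = mu I := by
  classical
  obtain ⟨S, hfS, hgS, hhS, hS, hcard⟩ := hext
  have hne : I ≠ ⊤ := hGor.1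
  have hHom : HomI I := hGor.2.1.homI
  have H := Reg3.of_isRegular hreg
  have H' := Reg3.of_isRegular hreg'
  have hpd := pd_of_gor I hGor
  have top1 : (1 : MvPolynomial (Fin (n+1)) k) ∈ I → False :=
    fun h1 => hne ((Ideal.eq_top_iff_one I).2 h1)
  have hfg : f ≠ g := by
    rintro rfl
    obtain ⟨z, hz⟩ := H.r2 1 1 rfl
    exact top1 (hz ▸ I.mul_mem_right _ hfI)
  have hfh : f ≠ h := by
    rintro rfl
    obtain ⟨z, w, hz⟩ := H.r3 1 1 0 (by ring)
    exact top1 (hz ▸ I.add_mem (I.mul_mem_right _ hfI) (I.mul_mem_right _ hgI))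
  have hgh : g ≠ h := by
    rintro rfl
    obtain ⟨z, w, hz⟩ := H.r3 1 0 1 (by ring)
    exact top1 (hz ▸ I.add_mem (I.mul_mem_right _ hfI) (I.mul_mem_right _ hgI))
  -- linkage
  have hrange : Ideal.span (Set.range (fun x : S => (x : MvPolynomial (Fin (n+1)) k))) = I := by
    rw [← hS]; congr 1; ext x; simp
  obtain ⟨L1, L2⟩ := linkage_core (fun x : S => (x : MvPolynomial (Fin (n+1)) k))
    (by rw [hrange]; exact hpd) ⟨f, hfS⟩ ⟨g, hgS⟩ ⟨h, hhS⟩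
    (by simpa using hfg) (by simpa using hfh) (by simpa using hgh) f g h u rfl rfl rfl H
    (by rw [hrange]; exact hu)
  rw [hrange] at L1
  have huJ : ∀ a ∈ I, a * u ∈ Ideal.span {f, g, h} := by
    intro a ha
    have h1 : u ∈ (Ideal.span {f, g, h}).colon I := by
      rw [hu]; exact Ideal.subset_span (by simp)
    have := Submodule.mem_colon.1 h1 a ha
    rwa [smul_eq_mul, mul_comm] at this
  have hIu : ∀ a, a ∈ I ↔ a * u ∈ Ideal.span {f, g, h} := fun a => ⟨huJ a, L1 a⟩
  have hI'h : ∀ a, a ∈ I' ↔ a * h ∈ Ideal.span {u, f, g} := by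
    intro a
    rw [hI']
    constructor
    · intro ha
      exact Submodule.mem_colon.1 ha h (Ideal.subset_span (by simp))
    · intro ha
      refine Submodule.mem_colon.2 fun p hp => ?_
      obtain ⟨x, y, z, w, rfl⟩ := mem_span_quad.1 hp
      obtain ⟨x', y', z', e⟩ := mem_span_triple.1 ha
      refine mem_span_triple.2 ⟨x' * z + a * w, y' * z + a * x, z' * z + a * y, ?_⟩
      rw [smul_eq_mul]
      linear_combination z * e
  obtain ⟨hli, hrel⟩ := rel_mem_mIdeal hHom S hS hcard
  obtain ⟨hfm, hgm⟩ := L2 (mIdeal k n) I' hrel (fun r hr => (hI'h r).2 hr)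
  have hli2 : LinearIndependent k ![cls I ⟨f, hfI⟩, cls I ⟨g, hgI⟩] := by
    have := hli.comp (![⟨f, hfS⟩, ⟨g, hgS⟩] : Fin 2 → S) (by
      intro i j hij
      fin_cases i <;> fin_cases j <;> simp_all [eq_comm])
    convert this using 1
    funext i
    fin_cases i <;> rfl
  have hcount := count I I' f g h u hIu hI'h H H' hfm hgm hfI hgI hli2
  have hHom' : HomI I' := colon_hom f g h u I' hI'h hfhom hghom hhhom huhom
  have hne' : I' ≠ ⊤ := by
    rintro hT
    have h1 := finrank_top_le (k := k) (n := n)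
    rw [hT] at hcount
    have h2 : S.card ≤ 3 := by rw [hcard, mu_eq hHom]; omega
    have h3 : ({f, g, h} : Finset (MvPolynomial (Fin (n+1)) k)) = S := by
      refine Finset.eq_of_subset_of_card_le ?_ ?_
      · intro x hx
        simp only [Finset.mem_insert, Finset.mem_singleton] at hx
        rcases hx with rfl | rfl | rfl <;> assumption
      · rw [Finset.card_eq_three.2 ⟨f, g, h, hfg, hfh, hgh, rfl⟩]; exact h2
    refine hnotCI ⟨[f, g, h], ?_, hreg, ?_⟩
    · intro x hx
      simp only [List.mem_cons, List.not_mem_nil, or_false] at hx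
      rcases hx with rfl | rfl | rfl
      · exact pos_deg hne hfI hfhom
      · exact pos_deg hne hgI hghom
      · exact pos_deg hne hhI hhhom
    · rw [← hS, ← h3]
      congr 1; ext x; simp
  refine ⟨?_, by rw [mu_eq hHom, mu_eq hHom']; exact hcount⟩
  obtain ⟨h5, h4⟩ := ext4_vanish f g h u I (Ideal.span {f, g, h, u}) hreg.toIsWeaklyRegular
    hfI hgI hhI hIu (by
      intro c
      constructor
      · intro hc
        obtain ⟨x, y, z, w, rfl⟩ := mem_span_quad.1 hc
        exact ⟨w, mem_span_triple.2 ⟨x, y, z, by ring⟩⟩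
      · rintro ⟨r, hr⟩
        obtain ⟨x, y, z, e⟩ := mem_span_triple.1 hr
        exact mem_span_quad.2 ⟨x, y, z, r, by linear_combination e⟩) (by
      intro c hc
      rw [← hu]
      refine Submodule.mem_colon.2 fun p hp => ?_
      rw [smul_eq_mul, mul_comm]
      exact hc p hp) hpd
  obtain ⟨p4, hcyc⟩ := gor_transfer f g h u I' (Ideal.span {f, g, h, u}) hreg'.toIsWeaklyRegular
    hI'h (by
      intro c
      constructor
      · intro hc
        obtain ⟨x, y, z, w, rfl⟩ := mem_span_quad.1 hc
        exact ⟨z, mem_span_triple.2 ⟨w, x, y, by ring⟩⟩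
      · rintro ⟨r, hr⟩
        obtain ⟨x, y, z, e⟩ := mem_span_triple.1 hr
        exact mem_span_quad.2 ⟨y, z, r, x, by linear_combination e⟩) h5 h4
  exact gor_of I' f g h u hreg'.toIsWeaklyRegular hI'h hne' hHom' p4 hcyc

end
end

section
/- Let I be an arithmetically Gorenstein homogeneous ideal of height three in R that is not a complete intersection, let f, g, h be a regular sequence of homogeneous elements of I such that deg f equals the least degree of a nonzero homogeneous element of I, and let u be a homogeneous element of R with (f,g,h) : I = (f,g,h,u). Then u, f is an R-regular sequence (in particular u ≠ 0 and u and f have no common factor of positive degree). -/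
namespace St5
set_option linter.unusedSectionVars false
open Module
open CategoryTheory
open Polynomial TensorProduct

section hilb
variable {A : Type} [CommRing A]

theorem tensor_pd (n : ℕ) : ∀ N : ModuleCat.{0} A, HasProjectiveDimensionLT N (n+1) →
    HasProjectiveDimensionLT (ModuleCat.of A[X] (A[X] ⊗[A] N)) (n+1) := by
  induction n with
  | zero =>
    intro N h
    rw [zero_add, ← projective_iff_hasProjectiveDimensionLT_one] at h ⊢
    have : Module.Projective A N := (IsProjective.iff_projective (P := N)).2 h
    exact (IsProjective.iff_projective (P := A[X] ⊗[A] N)).1 inferInstance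
  | succ n ih =>
    intro N h
    have hS := N.shortExact_projectiveShortComplex
    set S := N.projectiveShortComplex with hSdef
    have hP : Projective S.X₂ := (IsProjective.iff_projective (P := S.X₂)).1 (by
      have : Module.Free A N.projectiveShortComplex.X₂ := inferInstance
      exact Module.Projective.of_free)
    have h1 := ih _ ((hS.hasProjectiveDimensionLT_X₃_iff n hP).1 h)
    have hPP : Module.Projective A S.X₂ := (IsProjective.iff_projective (P := S.X₂)).2 hP
    have hex : Function.Exact S.f.hom S.g.hom := by
      have := hS.exact
      rwa [ShortComplex.ShortExact.moduleCat_exact_iff_function_exact] at this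
    have hinj : Function.Injective S.f.hom := (ModuleCat.mono_iff_injective _).1 hS.mono_f
    have hsurj : Function.Surjective S.g.hom := (ModuleCat.epi_iff_surjective _).1 hS.epi_g
    have hex' := Module.Flat.lTensor_exact A[X] hex
    let T : ShortComplex (ModuleCat.{0} A[X]) := ShortComplex.mk
      (ModuleCat.ofHom (S.f.hom.baseChange A[X])) (ModuleCat.ofHom (S.g.hom.baseChange A[X])) (by
        apply ModuleCat.hom_ext
        exact LinearMap.ext fun x => hex'.apply_apply_eq_zero x)
    have hT : T.ShortExact :=
     { exact := by
        rw [ShortComplex.ShortExact.moduleCat_exact_iff_function_exact]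
        exact hex'
       mono_f := (ModuleCat.mono_iff_injective _).2
        (Module.Flat.lTensor_preserves_injective_linearMap (M := A[X]) _ hinj)
       epi_g := (ModuleCat.epi_iff_surjective _).2 (LinearMap.lTensor_surjective _ hsurj) }
    have hP2 : Projective T.X₂ := (IsProjective.iff_projective (P := A[X] ⊗[A] S.X₂)).1 inferInstance
    exact (hT.hasProjectiveDimensionLT_X₃_iff n hP2).2 h1

theorem pm_pd (n : ℕ) (N : Type) [AddCommGroup N] [Module A N]
    (h : HasProjectiveDimensionLT (ModuleCat.of A N) (n+1)) :
    HasProjectiveDimensionLT (ModuleCat.of A[X] (PolynomialModule A N)) (n+1) := by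
  have := tensor_pd n _ h
  exact hasProjectiveDimensionLT_of_iso
    (LinearEquiv.toModuleIso (PolynomialModule.polynomialTensorProductLEquivPolynomialModule (R := A) (M := N))) _

variable {M : Type} [AddCommGroup M] [Module A M] [Module A[X] M] [IsScalarTower A A[X] M]

/-- evaluation -/
noncomputable def evA : PolynomialModule A M →+ M :=
  (Finsupp.liftAddHom (fun i => (LinearMap.lsmul A[X] M (X^i)).toAddMonoidHom)).comp
    (PolynomialModule.coeffAddEquiv (R := A) (M := M)).toAddMonoidHom

theorem evA_single (i : ℕ) (m : M) : evA (PolynomialModule.single A i m) = (X^i : A[X]) • m := by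
  change Finsupp.liftAddHom (fun i => (LinearMap.lsmul A[X] M (X^i)).toAddMonoidHom)
    (PolynomialModule.single A i m).coeff = _
  simp

/-- evaluation, linear -/
noncomputable def ev : PolynomialModule A M →ₗ[A[X]] M :=
  { evA with
    map_smul' := by
      intro p q
      simp only [ZeroHom.toFun_eq_coe, AddMonoidHom.toZeroHom_coe, RingHom.id_apply]
      induction p using Polynomial.induction_on' with
      | add p q hp hq => simp [add_smul, hp, hq]
      | monomial n a =>
        induction q using PolynomialModule.induction_linear with
        | zero => simp
        | add f g hf hg => simp [hf, hg]
        | single i m =>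
          rw [PolynomialModule.monomial_smul_single, evA_single, evA_single,
            smul_comm, ← smul_assoc, ← smul_assoc]
          congr 1
          rw [← C_mul_X_pow_eq_monomial, smul_eq_mul, Polynomial.smul_eq_C_mul, pow_add]; ring }

theorem ev_single (i : ℕ) (m : M) : ev (PolynomialModule.single A i m) = (X^i : A[X]) • m :=
  evA_single i m

/-- mult by x on M -/
noncomputable def mx : M →ₗ[A] M :=
  ((LinearMap.lsmul A[X] M X).restrictScalars A)

/-- the map X - x -/
noncomputable def del : PolynomialModule A M →ₗ[A[X]] PolynomialModule A M :=
  LinearMap.lsmul A[X] _ X -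
  { PolynomialModule.map A (mx (A := A) (M := M)) with
    map_smul' := by
      intro p q
      have := PolynomialModule.map_smul A (mx (A := A) (M := M)) p q
      simpa using this }

theorem del_single (i : ℕ) (m : M) : del (PolynomialModule.single A i m) =
    PolynomialModule.single A (i+1) m - PolynomialModule.single A i ((X:A[X]) • m) := by
  have : (X : A[X]) • PolynomialModule.single A i m = PolynomialModule.single A (i+1) m := by
    rw [← monomial_one_one_eq_X, PolynomialModule.monomial_smul_single, one_smul, add_comm]
  have h2 : PolynomialModule.map A (mx (A := A) (M := M)) (PolynomialModule.single A i m)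
     = PolynomialModule.single A i ((X:A[X]) • m) := PolynomialModule.map_single _ _ _ _
  rw [← this, ← h2]; rfl

theorem ev_del (q : PolynomialModule A M) : ev (del q) = 0 := by
  induction q using PolynomialModule.induction_linear with
  | zero => simp
  | add f g hf hg => simp [hf, hg]
  | single i m => rw [del_single, map_sub, ev_single, ev_single, ← smul_assoc, pow_succ, smul_eq_mul, sub_self]

theorem single_mem (i : ℕ) : ∀ m : M, ∃ y, del y = PolynomialModule.single A i m -
    PolynomialModule.single A 0 ((X^i : A[X]) • m) := by
  induction i with
  | zero => intro m; exact ⟨0, by simp⟩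
  | succ i ih =>
    intro m
    obtain ⟨y, hy⟩ := ih ((X:A[X]) • m)
    refine ⟨PolynomialModule.single A i m + y, ?_⟩
    rw [map_add, hy, del_single, ← smul_assoc, pow_succ, smul_eq_mul]; abel

theorem all_mem (q : PolynomialModule A M) : ∃ y, del y = q - PolynomialModule.single A 0 (ev q) := by
  induction q using PolynomialModule.induction_linear with
  | zero => exact ⟨0, by simp⟩
  | add f g hf hg =>
    obtain ⟨a, ha⟩ := hf
    obtain ⟨b, hb⟩ := hg
    refine ⟨a + b, ?_⟩
    rw [map_add, map_add, ha, hb, PolynomialModule.single_add]; abel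
  | single i m => rw [ev_single]; exact single_mem i m

theorem del_coeff (q : PolynomialModule A M) (n : ℕ) : (del q).coeff (n+1) =
    q.coeff n - (X : A[X]) • q.coeff (n+1) := by
  induction q using PolynomialModule.induction_linear with
  | zero => simp
  | add f g hf hg => simp [hf, hg]; abel
  | single i m =>
    have hs : ∀ a b : PolynomialModule A M, (a - b).coeff = a.coeff - b.coeff :=
      map_sub (PolynomialModule.coeffAddEquiv (R := A) (M := M))
    rw [del_single, hs]
    simp only [PolynomialModule.coeff_single, Finsupp.sub_apply, Finsupp.single_apply]
    split_ifs <;> simp_all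

theorem del_inj : Function.Injective (del (A := A) (M := M)) := by
  rw [injective_iff_map_eq_zero]
  intro q hq
  have h1 : ∀ n, q.coeff n = (X : A[X]) • q.coeff (n+1) := fun n => by
    have := del_coeff q n
    rw [hq] at this
    exact (sub_eq_zero.1 (by simpa using this.symm))
  have h2 : ∀ j n, q.coeff n = (X^j : A[X]) • q.coeff (n+j) := by
    intro j
    induction j with
    | zero => simp
    | succ j ih => intro n; rw [ih n, h1 (n+j), ← smul_assoc, pow_succ, smul_eq_mul]; rfl
  apply PolynomialModule.coeff_injective
  ext n
  obtain ⟨N, hN⟩ := q.coeff.support.exists_nat_subset_range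
  rw [h2 N n, Finsupp.notMem_support_iff.1 (fun h => by have := hN h; simp at this), smul_zero]
  rfl

theorem step_pd (n : ℕ) (h : ∀ N : ModuleCat.{0} A, HasProjectiveDimensionLT N (n+1))
    (M : ModuleCat.{0} A[X]) : HasProjectiveDimensionLT M (n+2) := by
  let _ : Module A M := Module.compHom M (C : A →+* A[X])
  have : IsScalarTower A A[X] M := ⟨fun a p m => by
    change (a • p) • m = (C a : A[X]) • (p • m)
    rw [← smul_assoc, smul_eq_mul, Polynomial.smul_eq_C_mul]⟩
  let T : ShortComplex (ModuleCat.{0} A[X]) := ShortComplex.mk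
      (X₁ := ModuleCat.of A[X] (PolynomialModule A M)) (X₂ := ModuleCat.of A[X] (PolynomialModule A M))
      (X₃ := M)
      (ModuleCat.ofHom (del (A := A) (M := M))) (ModuleCat.ofHom (ev (A := A) (M := M))) (by
        apply ModuleCat.hom_ext
        exact LinearMap.ext fun x => ev_del x)
  have hT : T.ShortExact :=
     { exact := by
        rw [ShortComplex.moduleCat_exact_iff]
        intro x hx
        obtain ⟨y, hy⟩ := all_mem (A := A) (M := M) x
        refine ⟨y, hy.trans ?_⟩
        have hx' : ev (A := A) (M := M) x = 0 := hx
        rw [hx']; simp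
       mono_f := (ModuleCat.mono_iff_injective _).2 del_inj
       epi_g := (ModuleCat.epi_iff_surjective _).2 (fun m => ⟨PolynomialModule.single A 0 m, by
        exact (ev_single 0 m).trans (by simp)⟩) }
  have h1 := pm_pd n M (h _)
  exact hT.hasProjectiveDimensionLT_X₃ (n+1) h1 (hasProjectiveDimensionLT_of_ge _ (n+1) (n+2) (by omega))
end hilb

theorem hilbert (k : Type) [Field k] (m : ℕ) :
    ∀ M : ModuleCat.{0} (MvPolynomial (Fin m) k), HasProjectiveDimensionLT M (m+1) := by
  induction m with
  | zero =>
    intro M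
    have h1 : IsSemisimpleRing (MvPolynomial (Fin 0) k) :=
      (MvPolynomial.isEmptyRingEquiv k (Fin 0)).symm.isSemisimpleRing
    have h2 : Module.Projective (MvPolynomial (Fin 0) k) M :=
      Module.projective_of_isSemisimpleRing _ _
    rw [zero_add, ← projective_iff_hasProjectiveDimensionLT_one]
    exact (IsProjective.iff_projective (P := M)).1 h2
  | succ m ih =>
    intro M
    let e := (MvPolynomial.finSuccEquiv k m).symm.toRingEquiv
    let _ : Module (Polynomial (MvPolynomial (Fin m) k)) M := Module.compHom M e.toRingHom
    have h := step_pd m ih (ModuleCat.of _ M)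
    let _ := RingHomInvPair.of_ringEquiv e
    let _ := RingHomInvPair.symm (RingHomClass.toRingHom e) (RingHomClass.toRingHom e.symm)
    let e' : M ≃ₛₗ[RingHomClass.toRingHom e] M := { AddEquiv.refl M with map_smul' := fun _ _ => rfl }
    exact ModuleCat.hasProjectiveDimensionLE_of_semiLinearEquiv (M := ModuleCat.of (Polynomial (MvPolynomial (Fin m) k)) M) (N := M) e e' (m+1)

end St5

namespace St5
set_option linter.unusedSectionVars false
open Module
open CategoryTheory

section res
variable {R : Type} [CommRing R] {X : ℕ → Type} [∀ i, AddCommGroup (X i)] [∀ i, Module R (X i)]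
  [∀ i, Module.Free R (X i)]
  (d : ∀ i, X (i+1) →ₗ[R] X i)

/-- the complex in `ModuleCat` -/
noncomputable def cpx (hd : ∀ i, Function.Exact (d (i+1)) (d i)) : ChainComplex (ModuleCat.{0} R) ℕ :=
  ChainComplex.of (fun n => ModuleCat.of R (X n)) (fun n => ModuleCat.ofHom (d n)) (fun n => by
    ext x; simp [(hd n).apply_apply_eq_zero x])

theorem cpx_d (hd : ∀ i, Function.Exact (d (i+1)) (d i)) (n : ℕ) :
    (cpx d hd).d (n+1) n = ModuleCat.ofHom (d n) := by
  simp [cpx, ChainComplex.of, ChainComplex.of.d]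

theorem cpx_exactAt (hd : ∀ i, Function.Exact (d (i+1)) (d i)) (n : ℕ) :
    (cpx d hd).ExactAt (n + 1) := by
  rw [HomologicalComplex.exactAt_iff' _ (n + 1 + 1) (n + 1) n (by simp) (by simp)]
  rw [ShortComplex.moduleCat_exact_iff]
  intro x hx
  have h1 : d n x = 0 := by
    have := hx
    simp only [HomologicalComplex.sc', HomologicalComplex.shortComplexFunctor', cpx_d] at this
    exact this
  obtain ⟨y, hy⟩ := (hd n x).1 h1
  refine ⟨y, ?_⟩
  simp only [HomologicalComplex.sc', HomologicalComplex.shortComplexFunctor', cpx_d]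
  exact hy

variable {M : Type} [AddCommGroup M] [Module R M]

/-- projective resolution -/
noncomputable def res (hd : ∀ i, Function.Exact (d (i+1)) (d i)) (π : X 0 →ₗ[R] M)
    (hπ : Function.Surjective π) (he : Function.Exact (d 0) π) :
    ProjectiveResolution (ModuleCat.of R M) where
  complex := cpx d hd
  projective n := by
    have : Module.Projective R (X n) := inferInstance
    exact (IsProjective.iff_projective (P := X n)).1 this
  π := (ChainComplex.toSingle₀Equiv _ _).symm ⟨ModuleCat.ofHom π, by
    rw [cpx_d]; ext x; exact he.apply_apply_eq_zero x⟩
  quasiIso := ⟨fun n => by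
    cases n
    · rw [ChainComplex.quasiIsoAt₀_iff, ShortComplex.quasiIso_iff_of_zeros']
      · refine (ShortComplex.exact_and_epi_g_iff_of_iso
          (S₂ := ShortComplex.mk (ModuleCat.ofHom (d 0)) (ModuleCat.ofHom π) (by
            ext x; exact he.apply_apply_eq_zero x)) ?_).2 ⟨?_, ?_⟩
        · refine ShortComplex.isoMk (Iso.refl _) (Iso.refl _) (Iso.refl _) ?_ ?_
          · simp [cpx_d]; rfl
          · simp; rfl
        · rw [ShortComplex.moduleCat_exact_iff]
          intro x hx
          exact (he x).1 hx
        · exact (ModuleCat.epi_iff_surjective _).2 hπ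
      all_goals rfl
    · rw [quasiIsoAt_iff_exactAt']
      · apply cpx_exactAt
      · apply ChainComplex.exactAt_succ_single_obj⟩

theorem dual_exact (hd : ∀ i, Function.Exact (d (i+1)) (d i)) (π : X 0 →ₗ[R] M)
    (hπ : Function.Surjective π) (he : Function.Exact (d 0) π) (j : ℕ)
    (hE : Subsingleton (((Ext R (ModuleCat.{0} R) (j+1)).obj
      (Opposite.op (ModuleCat.of R M))).obj (ModuleCat.of R R)))
    (φ : X (j+1) →ₗ[R] R) (hφ : ∀ y, φ (d (j+1) y) = 0) :
    ∃ ψ : X j →ₗ[R] R, φ = ψ ∘ₗ d j := by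
  have := hE
  have h0 := ModuleCat.isZero_of_subsingleton (((Ext R (ModuleCat.{0} R) (j+1)).obj
      (Opposite.op (ModuleCat.of R M))).obj (ModuleCat.of R R))
  have h1 := h0.of_iso ((res d hd π hπ he).isoExt (R := R) (j+1) (ModuleCat.of R R)).symm
  rw [← HomologicalComplex.exactAt_iff_isZero_homology,
    HomologicalComplex.exactAt_iff' _ j (j+1) (j+2) (by simp) (by simp),
    ShortComplex.moduleCat_exact_iff] at h1
  obtain ⟨ψ, hψ⟩ := h1 (ModuleCat.ofHom φ) (by
    have h2 : (cpx d hd).d (j+2) (j+1) ≫ ModuleCat.ofHom φ = 0 := by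
      rw [cpx_d]; ext x; exact hφ x
    exact h2)
  refine ⟨ψ.hom, ?_⟩
  have h2 : (cpx d hd).d (j+1) j ≫ ψ = ModuleCat.ofHom φ := hψ
  rw [cpx_d] at h2
  have := congrArg ModuleCat.Hom.hom h2
  exact this.symm

theorem dual_exact_zero (hd : ∀ i, Function.Exact (d (i+1)) (d i)) (π : X 0 →ₗ[R] M)
    (hπ : Function.Surjective π) (he : Function.Exact (d 0) π)
    (hE : Subsingleton (((Ext R (ModuleCat.{0} R) 0).obj
      (Opposite.op (ModuleCat.of R M))).obj (ModuleCat.of R R)))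
    (φ : X 0 →ₗ[R] R) (hφ : ∀ y, φ (d 0 y) = 0) : φ = 0 := by
  have := hE
  have h0 := ModuleCat.isZero_of_subsingleton (((Ext R (ModuleCat.{0} R) 0).obj
      (Opposite.op (ModuleCat.of R M))).obj (ModuleCat.of R R))
  have h1 := h0.of_iso ((res d hd π hπ he).isoExt (R := R) 0 (ModuleCat.of R R)).symm
  rw [← HomologicalComplex.exactAt_iff_isZero_homology,
    HomologicalComplex.exactAt_iff' _ 0 0 1 (by simp) (by simp),
    ShortComplex.moduleCat_exact_iff] at h1
  obtain ⟨ψ, hψ⟩ := h1 (ModuleCat.ofHom φ) (by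
    have h2 : (cpx d hd).d 1 0 ≫ ModuleCat.ofHom φ = 0 := by
      rw [cpx_d]; ext x; exact hφ x
    exact h2)
  have h2 : (cpx d hd).d 0 0 ≫ ψ = ModuleCat.ofHom φ := hψ
  rw [HomologicalComplex.shape _ _ _ (by simp)] at h2
  have h3 := congrArg ModuleCat.Hom.hom h2
  exact LinearMap.ext fun x => (LinearMap.congr_fun h3 x).symm.trans (map_zero ψ.hom)
end res

section syz
variable (R : Type) [CommRing R] [IsNoetherianRing R]

/-- fg modules -/
def FGm := {K : ModuleCat.{0} R // Module.Finite R K}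
variable {R}

/-- number of generators -/
noncomputable def num (K : FGm R) : ℕ := (haveI := K.2; Module.Finite.exists_fin' R K.1).choose
/-- cover -/
noncomputable def cov (K : FGm R) : (Fin (num K) → R) →ₗ[R] K.1 :=
  (haveI := K.2; Module.Finite.exists_fin' R K.1).choose_spec.choose
theorem cov_surj (K : FGm R) : Function.Surjective (cov K) :=
  (haveI := K.2; Module.Finite.exists_fin' R K.1).choose_spec.choose_spec
/-- syzygy -/
noncomputable def next (K : FGm R) : FGm R :=
  ⟨ModuleCat.of R (LinearMap.ker (cov K)), by
    show Module.Finite R (LinearMap.ker (cov K)); infer_instance⟩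
/-- iterated syzygy -/
noncomputable def syz (K : FGm R) : ℕ → FGm R
  | 0 => K
  | n+1 => next (syz K n)
/-- differentials -/
noncomputable def dd (K : FGm R) (n : ℕ) :
    (Fin (num (syz K (n+1))) → R) →ₗ[R] (Fin (num (syz K n)) → R) :=
  (LinearMap.ker (cov (syz K n))).subtype ∘ₗ
    (show _ →ₗ[R] LinearMap.ker (cov (syz K n)) from cov (syz K (n+1)))

theorem dd_zero_iff (K : FGm R) (n : ℕ) (x) : dd K n x = 0 ↔ cov (syz K (n+1)) x = 0 := by
  constructor
  · intro h; exact Subtype.ext h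
  · intro h; exact congrArg Subtype.val h

theorem dd_range (K : FGm R) (n : ℕ) : LinearMap.range (dd K n) = LinearMap.ker (cov (syz K n)) := by
  apply le_antisymm
  · rintro _ ⟨x, rfl⟩
    exact (cov (syz K (n+1)) x).2
  · intro x hx
    obtain ⟨y, hy⟩ := cov_surj (syz K (n+1)) ⟨x, hx⟩
    exact ⟨y, congrArg Subtype.val hy⟩

theorem dd_exact (K : FGm R) (n : ℕ) : Function.Exact (dd K (n+1)) (dd K n) := by
  intro y
  rw [dd_zero_iff]
  have := dd_range K (n+1)
  rw [← LinearMap.mem_ker, ← this]; rfl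

theorem dd_exact0 (K : FGm R) : Function.Exact (dd K 0) (cov K) := by
  intro y
  change y ∈ LinearMap.ker (cov (syz K 0)) ↔ y ∈ LinearMap.range (dd K 0)
  rw [dd_range K 0]

theorem next_pd (K : FGm R) (n : ℕ) (h : HasProjectiveDimensionLT K.1 (n+2)) :
    HasProjectiveDimensionLT (next K).1 (n+1) := by
  let S : ShortComplex (ModuleCat.{0} R) := ShortComplex.mk
    (ModuleCat.ofHom (LinearMap.ker (cov K)).subtype)
    (ModuleCat.ofHom (cov K)) (by ext x; simp)
  have hS : S.ShortExact :=
   { exact := by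
      rw [ShortComplex.moduleCat_exact_iff]
      intro x hx
      exact ⟨⟨x, hx⟩, rfl⟩
     mono_f := (ModuleCat.mono_iff_injective _).2 Subtype.val_injective
     epi_g := (ModuleCat.epi_iff_surjective _).2 (cov_surj K) }
  have hP : Projective S.X₂ := (IsProjective.iff_projective (P := (Fin (num K) → R))).1 inferInstance
  exact (hS.hasProjectiveDimensionLT_X₃_iff n hP).1 h

theorem syz_pd (K : FGm R) (m : ℕ) : ∀ n, HasProjectiveDimensionLT K.1 (n+m+1) →
    HasProjectiveDimensionLT (syz K m).1 (n+1) := by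
  induction m with
  | zero => intro n h; exact h
  | succ m ih => intro n h
                 refine next_pd _ n (ih (n+1) ?_)
                 have : n + (m+1) + 1 = n + 1 + m + 1 := by ring
                 rwa [← this]

theorem range_proj (K : FGm R) (N : ℕ) (h : HasProjectiveDimensionLT K.1 (N+2)) :
    Module.Projective R (LinearMap.range (dd K N)) := by
  rw [dd_range]
  have := syz_pd K (N+1) 0 (by rwa [zero_add])
  rw [zero_add, ← projective_iff_hasProjectiveDimensionLT_one] at this
  exact (IsProjective.iff_projective (P := LinearMap.ker (cov (syz K N)))).2 this

end syz
end St5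

namespace St5
set_option linter.unusedSectionVars false
open Module
open scoped Pointwise

theorem lift_of_range_le {R P A B : Type*} [CommRing R] [AddCommMonoid P] [AddCommMonoid A]
    [AddCommMonoid B] [Module R P] [Module R A] [Module R B] [Module.Projective R P]
    (a : A →ₗ[R] B) (g : P →ₗ[R] B) (h : ∀ p, ∃ x, a x = g p) :
    ∃ s : P →ₗ[R] A, ∀ p, a (s p) = g p := by
  obtain ⟨s, hs⟩ := Module.projective_lifting_property a.rangeRestrict
    (g.codRestrict a.range (fun p => by obtain ⟨x, hx⟩ := h p; exact ⟨x, hx⟩))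
    a.surjective_rangeRestrict
  refine ⟨s, fun p => ?_⟩
  have := congrArg Subtype.val (LinearMap.congr_fun hs p)
  simpa using this

section
variable {R : Type} [CommRing R] {X : ℕ → Type} [∀ i, AddCommGroup (X i)] [∀ i, Module R (X i)]
  [∀ i, Module.Free R (X i)] [∀ i, Module.Finite R (X i)]
  (d : ∀ i, X (i+1) →ₗ[R] X i)

/-- cocycles in the dual complex -/
def Z (j : ℕ) : Submodule R (Dual R (X j)) := LinearMap.ker ((d j).dualMap)

theorem mem_Z {j : ℕ} {φ : Dual R (X j)} : φ ∈ Z d j ↔ ∀ x, φ (d j x) = 0 := by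
  simp only [Z, LinearMap.mem_ker]
  constructor
  · intro h x; exact LinearMap.congr_fun h x
  · intro h; ext x; exact h x

theorem projZ_base (hd : ∀ i, Function.Exact (d (i+1)) (d i)) (N : ℕ)
    (hN : Module.Projective R (d N).range) : Module.Projective R (Z d (N+1)) := by
  obtain ⟨s, hs⟩ := Module.projective_lifting_property (d N).rangeRestrict LinearMap.id
    (d N).surjective_rangeRestrict
  have hs' : ∀ y, d N (s y) = y := fun y => congrArg Subtype.val (LinearMap.congr_fun hs y)
  refine Module.Projective.of_split (Z d (N+1)).subtype
    ((((s ∘ₗ (d N).rangeRestrict).dualMap)).codRestrict (Z d (N+1)) ?_) ?_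
  · intro φ
    rw [mem_Z]
    intro x
    have : (d N).rangeRestrict (d (N+1) x) = 0 := by
      ext; simpa using (hd N).apply_apply_eq_zero x
    simp only [LinearMap.dualMap_apply, LinearMap.comp_apply, this, map_zero]
  · ext ⟨φ, hφ⟩ x
    simp only [LinearMap.comp_apply, LinearMap.codRestrict_apply, Submodule.subtype_apply,
      LinearMap.dualMap_apply, LinearMap.id_apply]
    rw [mem_Z] at hφ
    have h0 : d N (s ((d N).rangeRestrict x) - x) = 0 := by
      rw [map_sub, hs']; simp
    obtain ⟨y, hy⟩ := (hd N _).1 h0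
    have := hφ y
    rw [hy, map_sub, sub_eq_zero] at this
    exact this

theorem projZ_step (hd : ∀ i, Function.Exact (d (i+1)) (d i)) (j : ℕ)
    (he : ∀ φ : Dual R (X (j+1)), φ ∈ Z d (j+1) → ∃ ψ : Dual R (X j), φ = ψ ∘ₗ d j)
    (hN : Module.Projective R (Z d (j+1))) : Module.Projective R (Z d j) := by
  obtain ⟨s, hs⟩ := lift_of_range_le ((d j).dualMap) (Z d (j+1)).subtype
    (fun p => by obtain ⟨ψ, h⟩ := he p.1 p.2; exact ⟨ψ, h.symm⟩)
  let c : Dual R (X j) →ₗ[R] Z d (j+1) := ((d j).dualMap).codRestrict _ (fun φ => by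
    rw [mem_Z]; intro x
    simp [LinearMap.dualMap_apply, (hd j).apply_apply_eq_zero x])
  refine Module.Projective.of_split (Z d j).subtype
    (LinearMap.codRestrict (Z d j) ((LinearMap.id : Dual R (X j) →ₗ[R] Dual R (X j)) - s ∘ₗ c) ?hA) ?hB
  case hA =>
    intro φ
    show (d j).dualMap _ = 0
    simp only [LinearMap.sub_apply, LinearMap.id_apply, LinearMap.comp_apply, map_sub, hs]
    simp [c]
  case hB =>
    ext ⟨φ, hφ⟩ x
    have : c φ = 0 := by ext1; exact hφ
    simp [this]

theorem projZ (hd : ∀ i, Function.Exact (d (i+1)) (d i))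
    (he : ∀ j, 3 ≤ j → ∀ φ : Dual R (X (j+1)), φ ∈ Z d (j+1) →
      ∃ ψ : Dual R (X j), φ = ψ ∘ₗ d j) (N : ℕ) (h3 : 3 ≤ N)
    (hN : Module.Projective R (d N).range) : Module.Projective R (Z d 3) := by
  have key : ∀ t, ∀ j, 3 ≤ j → j + t = N + 1 → Module.Projective R (Z d j) := by
    intro t
    induction t with
    | zero => intro j hj hjt; obtain rfl : j = N + 1 := by omega
              exact projZ_base d hd N hN
    | succ t ih => intro j hj hjt
                   exact projZ_step d hd j (he j hj) (ih (j+1) (by omega) (by omega))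
  exact key (N + 1 - 3) 3 le_rfl (by omega)

/-- if `v` kills `H^3` of the dual complex and other cohomologies vanish, `v` kills `H_0`. -/
theorem kills (hd : ∀ i, Function.Exact (d (i+1)) (d i))
    (he0 : ∀ φ : Dual R (X 0), φ ∈ Z d 0 → φ = 0)
    (he : ∀ j, j ≠ 2 → ∀ φ : Dual R (X (j+1)), φ ∈ Z d (j+1) →
      ∃ ψ : Dual R (X j), φ = ψ ∘ₗ d j) (N : ℕ) (h3 : 3 ≤ N)
    (hN : Module.Projective R (d N).range) (v : R)
    (hv : ∀ φ : Dual R (X 3), φ ∈ Z d 3 → ∃ ψ : Dual R (X 2), v • φ = ψ ∘ₗ d 2) (p : X 0) :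
    ∃ q, d 0 q = v • p := by
  have hP := projZ d hd (fun j hj => he j (by omega)) N h3 hN
  let D := fun j => (d j).dualMap
  have hDD : ∀ j φ, D (j+1) (D j φ) = 0 := by
    intro j φ; ext x
    simp [D, LinearMap.dualMap_apply, (hd j).apply_apply_eq_zero x]
  obtain ⟨s3, hs3⟩ := lift_of_range_le (D 2) (v • (Z d 3).subtype)
    (fun p => by obtain ⟨ψ, h⟩ := hv p.1 p.2; exact ⟨ψ, h.symm⟩)
  let c : Dual R (X 2) →ₗ[R] Z d 3 := (D 2).codRestrict _ (fun φ => hDD 2 φ)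
  have hc : ∀ φ, (c φ : Dual R (X 3)) = D 2 φ := fun φ => rfl
  obtain ⟨s2, hs2⟩ := lift_of_range_le (D 1) (v • (LinearMap.id : Dual R (X 2) →ₗ[R] Dual R (X 2)) - s3 ∘ₗ c) (fun φ => by
    obtain ⟨ψ, h⟩ := he 1 (by decide) ((v • (LinearMap.id : Dual R (X 2) →ₗ[R] Dual R (X 2)) - s3 ∘ₗ c) φ) (by
      show D 2 _ = 0
      simp [hs3, hc])
    exact ⟨ψ, h.symm⟩)
  obtain ⟨s1, hs1⟩ := lift_of_range_le (D 0) (v • (LinearMap.id : Dual R (X 1) →ₗ[R] Dual R (X 1)) - s2 ∘ₗ D 1) (fun φ => by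
    obtain ⟨ψ, h⟩ := he 0 (by decide) ((v • (LinearMap.id : Dual R (X 1) →ₗ[R] Dual R (X 1)) - s2 ∘ₗ D 1) φ) (by
      show D 1 _ = 0
      have hc0 : c (D 1 φ) = 0 := by ext1; exact hDD 1 φ
      simp [hs2, hc0])
    exact ⟨ψ, h.symm⟩)
  have hs0 : ∀ φ, s1 (D 0 φ) = v • φ := by
    intro φ
    have := he0 (v • φ - s1 (D 0 φ)) (by
      show D 0 _ = 0
      simp [hs1, hDD 0 φ])
    exact (sub_eq_zero.1 this).symm
  obtain ⟨q, hq⟩ := (Module.evalEquiv R (X 1)).surjective ((Module.Dual.eval R (X 0) p) ∘ₗ s1)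
  refine ⟨q, ?_⟩
  apply (Module.evalEquiv R (X 0)).injective
  ext φ
  have := LinearMap.congr_fun hq (D 0 φ)
  simp [D, LinearMap.dualMap_apply] at this ⊢
  rw [this]
  have := hs0 φ
  simp only [D] at this
  rw [this]; simp

/-- one step of the Rees argument. -/
theorem rees_step {A B : Type} [AddCommGroup A] [Module R A] [AddCommGroup B] [Module R B]
    (q : A →ₗ[R] B) (x v : R) (hx : ∀ a : A, x • a = 0 → a = 0)
    (hker : ∀ a, q a = 0 → ∃ b, a = x • b) (hqx : ∀ a, q (x • a) = 0)
    (i : ℕ)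
    (s : X (i+1) →ₗ[R] X (i+2)) (s' : X i →ₗ[R] X (i+1))
    (hs : ∀ y, d (i+1) (s y) + s' (d i y) = x • y)
    (hv : ∀ ψ : X i →ₗ[R] B, (∀ y, ψ (d i y) = 0) → ∃ θ : X i →ₗ[R] A,
      (∀ y, θ (d i y) = 0) ∧ ∀ y, v • ψ y = q (θ y))
    (φ : X (i+1) →ₗ[R] A) (hφ : ∀ y, φ (d (i+1) y) = 0) :
    ∃ χ : X i →ₗ[R] A, ∀ y, v • φ y = χ (d i y) := by
  have hψ : ∀ y, (φ ∘ₗ s') (d i y) = x • φ y := by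
    intro y
    have := congrArg φ (hs y)
    rw [map_add, hφ, zero_add, map_smul] at this
    simpa using this
  obtain ⟨θ, hθ, hθ2⟩ := hv (q ∘ₗ φ ∘ₗ s') (fun y => by
    have := hψ y
    simp only [LinearMap.comp_apply] at this ⊢
    rw [this]; exact hqx _)
  obtain ⟨χ, hχ⟩ := lift_of_range_le (LinearMap.lsmul R A x) (v • (φ ∘ₗ s') - θ) (fun y => by
    obtain ⟨b, hb⟩ := hker ((v • (φ ∘ₗ s') - θ) y) (by
      have := hθ2 y
      simp at this
      simp [this])
    exact ⟨b, hb.symm⟩)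
  refine ⟨χ, fun y => ?_⟩
  have h1 := hχ (d i y)
  rw [← sub_eq_zero]
  apply hx
  rw [smul_sub]
  simp only [LinearMap.lsmul_apply, LinearMap.sub_apply, LinearMap.smul_apply, hψ, hθ, sub_zero] at h1
  rw [h1, smul_comm, sub_self]

/-- null-homotopies for elements killing `H_0`. -/
theorem homotopy (hd : ∀ i, Function.Exact (d (i+1)) (d i)) (x : R)
    (hx : ∀ p, ∃ q, d 0 q = x • p) :
    ∃ (s0 : X 0 →ₗ[R] X 1) (s1 : X 1 →ₗ[R] X 2) (s2 : X 2 →ₗ[R] X 3) (s3 : X 3 →ₗ[R] X 4),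
     (∀ y, d 1 (s1 y) + s0 (d 0 y) = x • y) ∧ 
     (∀ y, d 2 (s2 y) + s1 (d 1 y) = x • y) ∧ (∀ y, d 3 (s3 y) + s2 (d 2 y) = x • y) := by
  obtain ⟨s0, h0⟩ := lift_of_range_le (d 0) (x • LinearMap.id) hx
  have step : ∀ i (g : X (i+1) →ₗ[R] X (i+1)), (∀ y, d i (g y) = 0) →
      ∃ s : X (i+1) →ₗ[R] X (i+2), ∀ y, d (i+1) (s y) = g y := fun i g hg =>
    lift_of_range_le (d (i+1)) g (fun p => (hd i _).1 (hg p))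
  obtain ⟨s1, h1⟩ := step 0 (x • LinearMap.id - s0 ∘ₗ d 0) (fun y => by
    simp [h0])
  have hdd : ∀ i y, d i (d (i+1) y) = 0 := fun i y => (hd i).apply_apply_eq_zero y
  obtain ⟨s2, h2⟩ := step 1 (x • LinearMap.id - s1 ∘ₗ d 1) (fun y => by
    have e1 := h1 (d 1 y); have e2 := hdd 0 y
    simp at e1 e2; simp [e1, e2])
  obtain ⟨s3, h3⟩ := step 2 (x • LinearMap.id - s2 ∘ₗ d 2) (fun y => by
    have e1 := h2 (d 2 y); have e2 := hdd 1 y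
    simp at e1 e2; simp [e1, e2])
  refine ⟨s0, s1, s2, s3, fun y => ?_, fun y => ?_, fun y => ?_⟩
  · have := h1 y; simp at this; simp [this]
  · have := h2 y; simp at this; simp [this]
  · have := h3 y; simp at this; simp [this]

theorem rees_zero {A : Type} [AddCommGroup A] [Module R A]
    (x v : R) (hx : IsSMulRegular A x)
    (s : X 1 →ₗ[R] X 2) (s' : X 0 →ₗ[R] X 1)
    (hs : ∀ y, d 1 (s y) + s' (d 0 y) = x • y)
    (hv : ∀ ψ : X 0 →ₗ[R] QuotSMulTop x A, (∀ y, ψ (d 0 y) = 0) → ∀ y, v • ψ y = 0)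
    (φ : X 1 →ₗ[R] A) (hφ : ∀ y, φ (d 1 y) = 0) :
    ∃ χ : X 0 →ₗ[R] A, ∀ y, v • φ y = χ (d 0 y) := by
  refine rees_step d (Submodule.mkQ (x • (⊤ : Submodule R A))) x v
    (fun a ha => hx.right_eq_zero_of_smul ha) ?_ ?_ 0 s s' hs ?_ φ hφ
  · intro a ha
    rw [Submodule.mkQ_apply, Submodule.Quotient.mk_eq_zero] at ha
    obtain ⟨b, -, hb⟩ := ha
    exact ⟨b, hb.symm⟩
  · intro a
    rw [Submodule.mkQ_apply, Submodule.Quotient.mk_eq_zero]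
    exact ⟨a, trivial, rfl⟩
  · intro ψ hψ
    exact ⟨0, by simp, fun y => by simpa using hv ψ hψ y⟩

theorem rees_succ {A : Type} [AddCommGroup A] [Module R A]
    (hd : ∀ i, Function.Exact (d (i+1)) (d i))
    (x v : R) (hx : IsSMulRegular A x) (i : ℕ)
    (s : X (i+2) →ₗ[R] X (i+3)) (s' : X (i+1) →ₗ[R] X (i+2))
    (hs : ∀ y, d (i+2) (s y) + s' (d (i+1) y) = x • y)
    (hv : ∀ ψ : X (i+1) →ₗ[R] QuotSMulTop x A, (∀ y, ψ (d (i+1) y) = 0) →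
      ∃ χ : X i →ₗ[R] QuotSMulTop x A, ∀ y, v • ψ y = χ (d i y))
    (φ : X (i+2) →ₗ[R] A) (hφ : ∀ y, φ (d (i+2) y) = 0) :
    ∃ χ : X (i+1) →ₗ[R] A, ∀ y, v • φ y = χ (d (i+1) y) := by
  refine rees_step d (Submodule.mkQ (x • (⊤ : Submodule R A))) x v
    (fun a ha => hx.right_eq_zero_of_smul ha) ?_ ?_ (i+1) s s' hs ?_ φ hφ
  · intro a ha
    rw [Submodule.mkQ_apply, Submodule.Quotient.mk_eq_zero] at ha
    obtain ⟨b, -, hb⟩ := ha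
    exact ⟨b, hb.symm⟩
  · intro a
    rw [Submodule.mkQ_apply, Submodule.Quotient.mk_eq_zero]
    exact ⟨a, trivial, rfl⟩
  · intro ψ hψ
    obtain ⟨χ, hχ⟩ := hv ψ hψ
    obtain ⟨χ', hχ'⟩ := Module.projective_lifting_property
      (Submodule.mkQ (x • (⊤ : Submodule R A))) χ (Submodule.mkQ_surjective _)
    refine ⟨χ' ∘ₗ d i, fun y => ?_, fun y => ?_⟩
    · simp [(hd i).apply_apply_eq_zero y]
    · rw [hχ y, ← hχ']; rfl

theorem ker_mkQ_comp {A : Type} [AddCommGroup A] [Module R A] (Q : R →ₗ[R] A)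
    (hQ : Function.Surjective Q) (x : R) :
    LinearMap.ker ((Submodule.mkQ (x • (⊤ : Submodule R A))) ∘ₗ Q) =
      LinearMap.ker Q ⊔ Ideal.span {x} := by
  apply le_antisymm
  · intro a ha
    rw [LinearMap.mem_ker, LinearMap.comp_apply, Submodule.mkQ_apply,
      Submodule.Quotient.mk_eq_zero] at ha
    obtain ⟨b, -, hb⟩ := ha
    obtain ⟨b, rfl⟩ := hQ b
    refine Submodule.mem_sup.2 ⟨a - x * b, ?_, x * b, ?_, by ring⟩
    · rw [LinearMap.mem_ker, map_sub, ← smul_eq_mul, map_smul, sub_eq_zero]; exact hb.symm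
    · exact Ideal.mul_mem_right _ _ (Ideal.mem_span_singleton_self x)
  · refine sup_le ?_ ?_
    · intro a ha
      rw [LinearMap.mem_ker] at ha ⊢
      rw [LinearMap.comp_apply, ha, map_zero]
    · rw [Ideal.span_le, Set.singleton_subset_iff]
      show _ = _
      rw [LinearMap.comp_apply, Submodule.mkQ_apply, Submodule.Quotient.mk_eq_zero]
      refine ⟨Q 1, trivial, ?_⟩
      show x • Q 1 = _
      rw [← map_smul]; simp

theorem exists_Q {A : Type} [AddCommGroup A] [Module R A] (Q : R →ₗ[R] A)
    (hQ : Function.Surjective Q) (x : R) :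
    ∃ Q' : R →ₗ[R] QuotSMulTop x A, Function.Surjective Q' ∧
      LinearMap.ker Q' = LinearMap.ker Q ⊔ Ideal.span {x} :=
  ⟨_, (Submodule.mkQ_surjective _).comp hQ, ker_mkQ_comp Q hQ x⟩

theorem quotEquiv (f g h : R) : Nonempty ((R ⧸ Ideal.span {f, g, h}) ≃ₗ[R]
    QuotSMulTop h (QuotSMulTop g (QuotSMulTop f R))) := by
  obtain ⟨Q1, u1, e1⟩ := exists_Q (LinearMap.id : R →ₗ[R] R) Function.surjective_id f
  obtain ⟨Q2, u2, e2⟩ := exists_Q Q1 u1 g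
  obtain ⟨Q3, u3, e3⟩ := exists_Q Q2 u2 h
  rw [e2, e1, LinearMap.ker_id, bot_sup_eq, ← Ideal.span_union, ← Ideal.span_union] at e3
  have e4 : ({f} ∪ {g} ∪ {h} : Set R) = {f, g, h} := by ext; simp; tauto
  rw [e4] at e3
  exact ⟨(Submodule.quotEquivOfEq _ _ e3).symm.trans
    (LinearMap.quotKerEquivOfSurjective Q3 u3)⟩

open RingTheory.Sequence in
theorem kills_H3 (hd : ∀ i, Function.Exact (d (i+1)) (d i)) (f g h v : R)
    (hreg : IsWeaklyRegular R [f, g, h])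
    (hI : ∀ x ∈ ({f, g, h} : Set R), ∀ p, ∃ q, d 0 q = x • p)
    (hv : ∀ ψ : X 0 →ₗ[R] R ⧸ Ideal.span {f, g, h}, (∀ y, ψ (d 0 y) = 0) → ∀ y, v • ψ y = 0)
    (φ : X 3 →ₗ[R] R) (hφ : ∀ y, φ (d 3 y) = 0) :
    ∃ χ : X 2 →ₗ[R] R, ∀ y, v • φ y = χ (d 2 y) := by
  simp only [isWeaklyRegular_cons_iff] at hreg
  obtain ⟨h1, h2, h3, -⟩ := hreg
  obtain ⟨sf0, sf1, sf2, sf3, -, -, hf⟩ := homotopy d hd f (hI f (by simp))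
  obtain ⟨sg0, sg1, sg2, sg3, -, hg, -⟩ := homotopy d hd g (hI g (by simp))
  obtain ⟨sh0, sh1, sh2, sh3, hh, -, -⟩ := homotopy d hd h (hI h (by simp))
  refine rees_succ d hd f v h1 1 sf3 sf2 hf (fun φ1 hφ1 => ?_) φ hφ
  refine rees_succ d hd g v h2 0 sg2 sg1 hg (fun φ2 hφ2 => ?_) φ1 hφ1
  refine rees_zero d h v h3 sh1 sh0 hh (fun φ3 hφ3 => ?_) φ2 hφ2
  obtain ⟨E'⟩ := quotEquiv f g h
  intro y
  have := hv (E'.symm.toLinearMap ∘ₗ φ3) (fun y => by simp [hφ3]) y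
  apply E'.symm.injective
  simpa using this

end
end St5

/-
Common setup: `R = k[x₀,…,xₙ]` is the standard graded polynomial ring
`MvPolynomial (Fin (n+1)) k` over a field `k`.
-/

open CategoryTheory MvPolynomial RingTheory

noncomputable section

variable {k : Type} [Field k] {n : ℕ}

namespace St5

theorem double_colon (I : Ideal (MvPolynomial (Fin (n+1)) k))
    (hext : ∀ i : ℕ, i ≠ 3 → extVanishes I i)
    (f g h : MvPolynomial (Fin (n+1)) k)
    (hfI : f ∈ I) (hgI : g ∈ I) (hhI : h ∈ I)
    (hreg : RingTheory.Sequence.IsWeaklyRegular (MvPolynomial (Fin (n+1)) k) [f, g, h])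
    (v : MvPolynomial (Fin (n+1)) k)
    (hv : ∀ a, (∀ i ∈ I, a * i ∈ Ideal.span {f, g, h}) → v * a ∈ Ideal.span {f, g, h}) :
    v ∈ I := by
  let K : FGm (MvPolynomial (Fin (n+1)) k) :=
    ⟨ModuleCat.of _ (MvPolynomial (Fin (n+1)) k ⧸ I), by
      change Module.Finite _ (MvPolynomial (Fin (n+1)) k ⧸ I); infer_instance⟩
  let π : (Fin (num (syz K 0)) → MvPolynomial (Fin (n+1)) k) →ₗ[MvPolynomial (Fin (n+1)) k]
      (MvPolynomial (Fin (n+1)) k ⧸ I) := cov K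
  have hπ : Function.Surjective π := cov_surj K
  have hex0 : Function.Exact (dd K 0) π := dd_exact0 K
  have hd := dd_exact K
  have hkill : ∀ x ∈ I, ∀ p, ∃ q, dd K 0 q = x • p := by
    intro x hx p
    apply (hex0 _).1
    obtain ⟨r, hr⟩ := Ideal.Quotient.mk_surjective (π p)
    rw [map_smul, ← hr]
    change Ideal.Quotient.mk I (x * r) = 0
    rw [Ideal.Quotient.eq_zero_iff_mem]
    exact I.mul_mem_right _ hx
  have h3 := kills_H3 (X := fun i => Fin (num (syz K i)) → MvPolynomial (Fin (n+1)) k)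
    (dd K) hd f g h v hreg
    (by
      intro x hx p
      apply hkill
      rcases hx with rfl | rfl | rfl <;> assumption)
    (by
      intro ψ hψ y
      obtain ⟨e, he⟩ := hπ (Ideal.Quotient.mk I 1)
      obtain ⟨r, hr⟩ := Ideal.Quotient.mk_surjective (π y)
      obtain ⟨a, ha⟩ := Ideal.Quotient.mk_surjective (ψ e)
      have h1 : ψ y = r • ψ e := by
        obtain ⟨q, hq⟩ := (hex0 (y - r • e)).1 (by
          rw [map_sub, map_smul, he, ← hr]
          change Ideal.Quotient.mk I r - Ideal.Quotient.mk I (r * 1) = 0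
          simp)
        have := hψ q
        rw [hq, map_sub, map_smul] at this
        exact sub_eq_zero.1 this
      have h2 : v * a ∈ Ideal.span {f, g, h} := by
        apply hv
        intro i hi
        obtain ⟨q, hq⟩ := hkill i hi e
        have := hψ q
        rw [hq, map_smul, ← ha] at this
        rw [← Ideal.Quotient.eq_zero_iff_mem, mul_comm]
        exact this
      rw [h1, smul_comm, ← ha]
      have h4 : v • Ideal.Quotient.mk (Ideal.span {f, g, h}) a = 0 := by
        rw [← Ideal.Quotient.eq_zero_iff_mem] at h2
        exact h2
      rw [h4, smul_zero])
  have hpd : HasProjectiveDimensionLT K.1 (n + 3 + 2) := by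
    have := hilbert k (n+1) K.1
    exact hasProjectiveDimensionLT_of_ge _ (n+1+1) (n+3+2) (by omega)
  obtain ⟨e, he⟩ := hπ (Ideal.Quotient.mk I 1)
  obtain ⟨q, hq⟩ := kills (X := fun i => Fin (num (syz K i)) → MvPolynomial (Fin (n+1)) k)
    (dd K) hd
    (fun φ hφ => dual_exact_zero (X := fun i => Fin (num (syz K i)) → MvPolynomial (Fin (n+1)) k)
      (dd K) hd π hπ hex0 (hext 0 (by norm_num)) φ ((mem_Z _).1 hφ))
    (fun j hj φ hφ => dual_exact (X := fun i => Fin (num (syz K i)) → MvPolynomial (Fin (n+1)) k)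
      (dd K) hd π hπ hex0 j (hext (j+1) (by omega)) φ ((mem_Z _).1 hφ))
    (n+3) (by omega) (range_proj K (n+3) hpd) v
    (fun φ hφ => by
      obtain ⟨χ, hχ⟩ := h3 φ ((mem_Z _).1 hφ)
      exact ⟨χ, LinearMap.ext hχ⟩) e
  have h5 := (hex0 (v • e)).2 ⟨q, hq⟩
  rw [map_smul, he] at h5
  have h6 : Ideal.Quotient.mk I (v * 1) = 0 := h5
  rwa [Ideal.Quotient.eq_zero_iff_mem, mul_one] at h6

theorem constCoeff_of_nonunit {p : MvPolynomial (Fin (n+1)) k} {d : ℕ}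
    (hp : p.IsHomogeneous d) (hp0 : p ≠ 0) (hpu : ¬ IsUnit p) : 0 < d := by
  rcases Nat.eq_zero_or_pos d with rfl | h
  · exfalso
    have h1 := hp.totalDegree hp0
    rw [totalDegree_eq_zero_iff_eq_C] at h1
    apply hpu
    rw [h1]
    apply IsUnit.map
    rw [isUnit_iff_ne_zero]
    intro h2
    rw [h2] at h1
    simp at h1
    exact hp0 h1
  · exact h

theorem constantCoeff_eq_zero {p : MvPolynomial (Fin (n+1)) k} {d : ℕ}
    (hp : p.IsHomogeneous d) (hd : 0 < d) : constantCoeff p = 0 := by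
  rw [constantCoeff_eq]
  exact hp.coeff_eq_zero (by simp; omega)

attribute [local instance] MvPolynomial.gradedAlgebra in
theorem exists_homog (I : Ideal (MvPolynomial (Fin (n+1)) k)) (hI : IsHomogeneousIdeal I)
    (p : MvPolynomial (Fin (n+1)) k) (hp : p ∈ I) (hp0 : p ≠ 0) :
    ∃ v ∈ I, v ≠ 0 ∧ v.IsHomogeneous p.totalDegree := by
  obtain ⟨S, hS, rfl⟩ := hI
  have hh : (Ideal.span S).IsHomogeneous (homogeneousSubmodule (Fin (n+1)) k) := by
    apply Ideal.homogeneous_span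
    intro x hx
    obtain ⟨d, hd⟩ := hS x hx
    exact ⟨d, hd⟩
  refine ⟨homogeneousComponent p.totalDegree p, homogeneousComponent_mem_of_mem hh hp _, ?_,
    homogeneousComponent_isHomogeneous _ _⟩
  intro h0
  obtain ⟨m, hm, hm2⟩ : ∃ m ∈ p.support, m.degree = p.totalDegree := by
    obtain ⟨m, hm, h⟩ := Finset.exists_mem_eq_sup p.support (support_nonempty.2 hp0)
      (fun s => s.sum fun _ e => e)
    exact ⟨m, hm, h.symm⟩
  have := coeff_homogeneousComponent p.totalDegree p m
  rw [h0, if_pos hm2] at this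
  exact (mem_support_iff.1 hm) (by simpa using this.symm)

theorem not_coprime_absurd (I : Ideal (MvPolynomial (Fin (n+1)) k)) (hI : IsHomogeneousIdeal I)
    (f g h u : MvPolynomial (Fin (n+1)) k) (df : ℕ)
    (hfhom : MvPolynomial.IsHomogeneous f df) (hf0 : f ≠ 0)
    (hfmin : ∀ v ∈ I, v ≠ 0 → ∀ e, MvPolynomial.IsHomogeneous v e → df ≤ e)
    (hdc : ∀ v, (∀ a ∈ Ideal.span {f, g, h, u}, v * a ∈ Ideal.span {f, g, h}) → v ∈ I) :
    IsRelPrime u f := by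
  rintro p ⟨u', hu'⟩ ⟨f', hf'⟩
  by_contra hp
  have hp0 : p ≠ 0 := by rintro rfl; simp at hf'; exact hf0 hf'
  have hf0' : f' ≠ 0 := by rintro rfl; simp at hf'; exact hf0 hf'
  have hdeg := totalDegree_mul_of_isDomain hp0 hf0'
  rw [← hf', hfhom.totalDegree hf0] at hdeg
  have hpos : p.totalDegree ≠ 0 := by
    intro h0
    rw [totalDegree_eq_zero_iff_eq_C] at h0
    apply hp
    rw [h0]
    apply IsUnit.map
    rw [isUnit_iff_ne_zero]
    intro h2
    rw [h2] at h0
    simp at h0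
    exact hp0 h0
  have hmem : f' ∈ I := by
    apply hdc
    have hle : Ideal.span {f, g, h, u} ≤ Submodule.comap
        (LinearMap.lsmul (MvPolynomial (Fin (n+1)) k) (MvPolynomial (Fin (n+1)) k) f')
        (Ideal.span {f, g, h}) := by
      rw [Ideal.span_le]
      rintro x (rfl | rfl | rfl | rfl)
      · exact Ideal.mul_mem_left _ _ (Ideal.subset_span (by simp))
      · exact Ideal.mul_mem_left _ _ (Ideal.subset_span (by simp))
      · exact Ideal.mul_mem_left _ _ (Ideal.subset_span (by simp))
      · change f' * x ∈ Ideal.span {f, g, h}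
        have : f' * x = u' * f := by rw [hu', hf']; ring
        rw [this]
        exact Ideal.mul_mem_left _ _ (Ideal.subset_span (by simp))
    exact fun a ha => hle ha
  obtain ⟨w, hw, hw0, hwh⟩ := exists_homog I hI f' hmem hf0'
  have := hfmin w hw hw0 _ hwh
  omega

theorem regular_pair (u f : MvPolynomial (Fin (n+1)) k) (hu0 : u ≠ 0)
    (hrel : IsRelPrime u f) (hcu : constantCoeff u = 0) (hcf : constantCoeff f = 0) :
    RingTheory.Sequence.IsRegular (MvPolynomial (Fin (n+1)) k) [u, f] := by
  refine ⟨?_, ?_⟩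
  · rw [RingTheory.Sequence.isWeaklyRegular_cons_iff,
      RingTheory.Sequence.isWeaklyRegular_singleton_iff]
    constructor
    · exact fun a b hab => mul_left_cancel₀ hu0 hab
    · rw [isSMulRegular_iff_right_eq_zero_of_smul]
      intro x hx
      obtain ⟨x, rfl⟩ := Submodule.Quotient.mk_surjective _ x
      rw [← Submodule.Quotient.mk_smul, Submodule.Quotient.mk_eq_zero,
        Submodule.mem_smul_pointwise_iff_exists] at hx
      obtain ⟨b, -, hb⟩ := hx
      rw [Submodule.Quotient.mk_eq_zero, Submodule.mem_smul_pointwise_iff_exists]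
      obtain ⟨c, hc⟩ := hrel.dvd_of_dvd_mul_left ⟨b, hb.symm⟩
      exact ⟨c, trivial, hc.symm⟩
  · intro htop
    have h1 : (1 : MvPolynomial (Fin (n+1)) k) ∈ Ideal.ofList [u, f] := by
      have : (1 : MvPolynomial (Fin (n+1)) k) ∈ (⊤ : Submodule (MvPolynomial (Fin (n+1)) k) (MvPolynomial (Fin (n+1)) k)) :=
        trivial
      rw [htop] at this
      simpa using this
    have h2 : Ideal.ofList [u, f] ≤ RingHom.ker (constantCoeff (R := k) (σ := Fin (n+1))) := by
      rw [Ideal.ofList, Ideal.span_le]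
      intro x hx
      have hx' : x = u ∨ x = f := by simpa using hx
      rcases hx' with rfl | rfl
      · exact hcu
      · exact hcf
    have h3 := h2 h1
    rw [RingHom.mem_ker, map_one] at h3
    exact one_ne_zero h3

theorem triple_ne_zero (f g h : MvPolynomial (Fin (n+1)) k)
    (hreg : RingTheory.Sequence.IsRegular (MvPolynomial (Fin (n+1)) k) [f, g, h]) :
    ∀ x ∈ [f, g, h], x ≠ 0 := by
  have key : ∀ (M : Type) [AddCommGroup M] [Module (MvPolynomial (Fin (n+1)) k) M]
      (l : List (MvPolynomial (Fin (n+1)) k)), RingTheory.Sequence.IsRegular M l →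
      ∀ x ∈ l, x ≠ 0 := by
    intro M _ _ l hl
    have hnt : Nontrivial M := hl.nontrivial
    induction l generalizing M with
    | nil => simp
    | cons a l ih =>
      rw [RingTheory.Sequence.isRegular_cons_iff] at hl
      intro x hx
      rcases List.mem_cons.1 hx with rfl | hx
      · rintro rfl
        obtain ⟨p, q, hpq⟩ := hnt
        exact hpq (hl.1 (by simp))
      · exact ih _ hl.2 hl.2.nontrivial x hx
  exact key _ _ hreg

end St5

/-- If `f, g, h` is a regular sequence of homogeneous elements of a
non-complete-intersection height-three Gorenstein ideal `I`, where `deg f` is the least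
degree of a nonzero homogeneous element of `I`, and `(f,g,h) : I = (f,g,h,u)` with `u`
homogeneous, then `u, f` is a regular sequence. -/
theorem stmt_5 (I : Ideal (MvPolynomial (Fin (n+1)) k))
    (hGor : IsArithGorHt3 I) (hnotCI : ¬ IsCI I)
    (f g h u : MvPolynomial (Fin (n+1)) k)
    (hfI : f ∈ I) (hgI : g ∈ I) (hhI : h ∈ I)
    (df : ℕ) (hfhom : MvPolynomial.IsHomogeneous f df) (hf0 : f ≠ 0)
    (hfmin : ∀ v ∈ I, v ≠ 0 → ∀ e, MvPolynomial.IsHomogeneous v e → df ≤ e)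
    (hghom : ∃ d, MvPolynomial.IsHomogeneous g d)
    (hhhom : ∃ d, MvPolynomial.IsHomogeneous h d)
    (huhom : ∃ d, MvPolynomial.IsHomogeneous u d)
    (hreg : RingTheory.Sequence.IsRegular (MvPolynomial (Fin (n+1)) k) [f, g, h])
    (hu : (Ideal.span {f, g, h}).colon I = Ideal.span {f, g, h, u}) :
    RingTheory.Sequence.IsRegular (MvPolynomial (Fin (n+1)) k) [u, f] := by
  obtain ⟨hItop, hIhom, -, hext, -⟩ := hGor
  have hdc : ∀ v, (∀ a ∈ Ideal.span {f, g, h, u}, v * a ∈ Ideal.span {f, g, h}) → v ∈ I := by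
    intro v hv
    refine St5.double_colon I hext f g h hfI hgI hhI hreg.toIsWeaklyRegular v ?_
    intro a ha
    apply hv
    rw [← hu, Submodule.mem_colon]
    exact fun i hi => ha i hi
  have hnu : ∀ x ∈ I, ¬ IsUnit x := fun x hx hxu => hItop (Ideal.eq_top_of_isUnit_mem _ hx hxu)
  have hu0 : u ≠ 0 := by
    rintro rfl
    apply hItop
    rw [Ideal.eq_top_iff_one]
    apply hdc
    intro a ha
    rw [one_mul]
    have hle : Ideal.span {f, g, h, 0} ≤ Ideal.span {f, g, h} := by
      rw [Ideal.span_le]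
      rintro x (rfl | rfl | rfl | rfl)
      · exact Ideal.subset_span (by simp)
      · exact Ideal.subset_span (by simp)
      · exact Ideal.subset_span (by simp)
      · exact Ideal.zero_mem _
    exact hle ha
  have hne := St5.triple_ne_zero f g h hreg
  have huu : ¬ IsUnit u := by
    intro huu
    apply hnotCI
    refine ⟨[f, g, h], ?_, hreg, ?_⟩
    · intro x hx
      have hx0 := hne x hx
      have hxI : x ∈ I ∧ ∃ d, x.IsHomogeneous d := by
        simp only [List.mem_cons, List.not_mem_nil, or_false] at hx
        rcases hx with rfl | rfl | rfl
        · exact ⟨hfI, df, hfhom⟩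
        · exact ⟨hgI, hghom⟩
        · exact ⟨hhI, hhhom⟩
      obtain ⟨hxI, d, hd⟩ := hxI
      exact ⟨d, St5.constCoeff_of_nonunit hd hx0 (hnu x hxI), hd⟩
    · have hset : ({x | x ∈ [f, g, h]} : Set (MvPolynomial (Fin (n+1)) k)) = {f, g, h} := by
        ext x; simp
      rw [hset]
      apply le_antisymm
      · intro i hi
        have h1 : (1 : MvPolynomial (Fin (n+1)) k) ∈ (Ideal.span {f, g, h}).colon I := by
          rw [hu, Ideal.eq_top_of_isUnit_mem (Ideal.span {f, g, h, u})
            (Ideal.subset_span (by simp)) huu]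
          trivial
        rw [Submodule.mem_colon] at h1
        simpa using h1 i hi
      · rw [Ideal.span_le]
        rintro x (rfl | rfl | rfl) <;> assumption
  obtain ⟨du, hdu⟩ := huhom
  exact St5.regular_pair u f hu0
    (St5.not_coprime_absurd I hIhom f g h u df hfhom hf0 hfmin hdc)
    (St5.constantCoeff_eq_zero hdu (St5.constCoeff_of_nonunit hdu hu0 huu))
    (St5.constantCoeff_eq_zero hfhom (St5.constCoeff_of_nonunit hfhom hf0 (hnu f hfI)))

end
end
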